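/- arXiv:1407.8128 — 6 statements merged into one kernel-verified Lean document; each statement's English description precedes it below -/
import Mathlib

section
/- Let q = p^f be a prime power, let F_q be a finite field with q elements, and let G = PSp_4(q) be the quotient of Sp_4(q) = Matrix.symplecticGroup (Fin 2) F_q by its center. Let x ∈ G be an element of odd prime order r with r ≠ p, let i be the least positive integer a such that r divides q^a − 1, and let s ≠ p be a prime dividing the cardinality of the centralizer of x in G. Then: if i = 4 then s divides q^2 + 1, and if i ∈ {1, 2} then s divides q^2 − 1. -/
section PowerOrbits

variable {H : Type*} [CommGroup H] {q n : ℕ} {S : Finset H}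

theorem pow_pow_cancel {x : H} (hq : q.Coprime n) (hx : x ^ n = 1) {a k : ℕ}
    (h : x ^ q ^ (a + k) = x ^ q ^ a) : x ^ q ^ k = x := by
  have h1 : (x ^ q ^ k * x⁻¹) ^ q ^ a = 1 := by
    rw [mul_pow, ← pow_mul, ← pow_add, add_comm, h, ← mul_pow, mul_inv_cancel, one_pow]
  have h2 : (x ^ q ^ k * x⁻¹) ^ n = 1 := by
    rw [mul_pow, ← pow_mul, mul_comm, mul_comm (q ^ k), pow_mul, hx, inv_pow, hx]; simp
  have h3 := pow_gcd_eq_one.mpr ⟨h1, h2⟩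
  rw [(hq.pow_left a), pow_one] at h3
  exact mul_inv_eq_one.mp h3

theorem pow_pow_add_of_fixed {x : H} {a b : ℕ} (h : x ^ q ^ a = x) :
    x ^ q ^ (a + b) = x ^ q ^ b := by
  rw [pow_add, pow_mul, h]

theorem eq_one_of_eq_inv_of_odd {x : H} (hn : Odd n) (hx : x ^ n = 1) (h : x⁻¹ = x) : x = 1 := by
  have h2 : x ^ 2 = 1 := by rw [pow_two]; nth_rewrite 1 [← h]; simp
  have := pow_gcd_eq_one.mpr ⟨h2, hx⟩
  rwa [(Nat.coprime_two_left.mpr hn), pow_one] at this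

theorem pow_pow_mem (hS : ∀ x ∈ S, x ^ q ∈ S) {x : H} (hx : x ∈ S) (j : ℕ) : x ^ q ^ j ∈ S := by
  induction j with
  | zero => simpa
  | succ j ih => rw [pow_succ, pow_mul]; exact hS _ ih

/-- If `x⁻¹` is the `q ^ j`-th power of `x`, then `x` is fixed by the `q ^ (2 * j)`-th power. -/
theorem pow_pow_two_mul_of_inv {x : H} {j : ℕ} (h : x⁻¹ = x ^ q ^ j) : x ^ q ^ (j + j) = x := by
  rw [pow_add, pow_mul, ← h, inv_pow, ← h, inv_inv]

theorem exists_eq_pow_pow_of_card_le_four (hq : q.Coprime n) (hcard : S.card ≤ 4)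
    (hfrob : ∀ x ∈ S, x ^ q ∈ S) {x : H} (hx : x ∈ S) (hxn : x ^ n = 1)
    (h1 : x ^ q ^ 1 ≠ x) (h2 : x ^ q ^ 2 ≠ x) (h3 : x ^ q ^ 3 ≠ x) {y : H} (hy : y ∈ S) :
    ∃ j < 4, y = x ^ q ^ j := by
  classical
  have hinj : Set.InjOn (fun j => x ^ q ^ j) (Finset.range 4 : Finset ℕ) := by
    have key : ∀ a b, a < b → b < 4 → x ^ q ^ b ≠ x ^ q ^ a := by
      intro a b hab hb h
      obtain ⟨k, rfl⟩ := Nat.exists_eq_add_of_lt hab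
      have := pow_pow_cancel (k := k + 1) hq hxn h
      have hk : k < 3 := by omega
      interval_cases k
      exacts [h1 this, h2 this, h3 this]
    intro a ha b hb hab
    simp only [Finset.coe_range, Set.mem_Iio] at ha hb
    rcases lt_trichotomy a b with h | h | h
    · exact absurd hab.symm (key a b h hb)
    · exact h
    · exact absurd hab (key b a h ha)
  have himg : (Finset.range 4).image (fun j => x ^ q ^ j) = S := by
    apply Finset.eq_of_subset_of_card_le
    · intro y hy
      obtain ⟨j, -, rfl⟩ := Finset.mem_image.mp hy
      exact pow_pow_mem hfrob hx j
    · rw [Finset.card_image_of_injOn hinj]; simpa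
  rw [← himg] at hy
  obtain ⟨j, hj, rfl⟩ := Finset.mem_image.mp hy
  exact ⟨j, Finset.mem_range.mp hj, rfl⟩

/-- When a set of at most four elements is a single orbit of length four under `q`-th powers and is
closed under inversion, inversion is the `q ^ 2`-th power. -/
theorem pow_sq_eq_inv_of_card_le_four (hq : q.Coprime n) (hn : Odd n) (hcard : S.card ≤ 4)
    (hfrob : ∀ x ∈ S, x ^ q ∈ S) (hinv : ∀ x ∈ S, x⁻¹ ∈ S) {x : H} (hx : x ∈ S) (hxn : x ^ n = 1)
    (h1 : x ^ q ^ 1 ≠ x) (h2 : x ^ q ^ 2 ≠ x) (h3 : x ^ q ^ 3 ≠ x) {y : H} (hy : y ∈ S) :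
    y ^ q ^ 2 = y⁻¹ := by
  have orb {z : H} (hz : z ∈ S) :=
    exists_eq_pow_pow_of_card_le_four hq hcard hfrob hx hxn h1 h2 h3 hz
  have h4 : x ^ q ^ 4 = x := by
    obtain ⟨j, hj, h⟩ := orb (pow_pow_mem hfrob hx 4)
    interval_cases j
    · simpa using h
    · exact absurd (pow_pow_cancel (a := 1) (k := 3) hq hxn h) h3
    · exact absurd (pow_pow_cancel (a := 2) (k := 2) hq hxn h) h2
    · exact absurd (pow_pow_cancel (a := 3) (k := 1) hq hxn h) h1
  have hxinv : x ^ q ^ 2 = x⁻¹ := by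
    obtain ⟨j, hj, h⟩ := orb (hinv x hx)
    have hjj := pow_pow_two_mul_of_inv h
    interval_cases j
    · have := eq_one_of_eq_inv_of_odd hn hxn (by simpa using h)
      simp [this] at h1
    · exact absurd hjj h2
    · exact h.symm
    · exact absurd ((pow_pow_add_of_fixed (b := 2) h4).symm.trans hjj) h2
  obtain ⟨j, -, rfl⟩ := orb hy
  rw [← pow_mul, mul_comm, pow_mul, hxinv, inv_pow]

theorem pow_pow_three_ne_of_card_le_four (hq : q.Coprime n) (hn : Odd n) (hcard : S.card ≤ 4)
    (hfrob : ∀ x ∈ S, x ^ q ∈ S) (hinv : ∀ x ∈ S, x⁻¹ ∈ S) {x : H} (hx : x ∈ S) (hxn : x ^ n = 1)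
    (h1 : x ^ q ^ 1 ≠ x) (h2 : x ^ q ^ 2 ≠ x) : x ^ q ^ 3 ≠ x := by
  classical
  intro h3
  have h4 : x ^ q ^ 4 ≠ x := fun h => h1 ((pow_pow_add_of_fixed (b := 1) h3).symm.trans h)
  have h21 : x ^ q ^ 2 ≠ x ^ q ^ 1 := fun h => h1 (pow_pow_cancel (a := 1) (k := 1) hq hxn h)
  have i0 : x⁻¹ ≠ x := fun h => h1 (by simp [eq_one_of_eq_inv_of_odd hn hxn h])
  have i1 : x⁻¹ ≠ x ^ q ^ 1 := fun h => h2 (pow_pow_two_mul_of_inv h)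
  have i2 : x⁻¹ ≠ x ^ q ^ 2 := fun h => h4 (pow_pow_two_mul_of_inv h)
  have shift {a : ℕ} (h : (x ^ q ^ 1)⁻¹ = x ^ q ^ a) : x⁻¹ = x ^ q ^ (a + 2) := by
    rw [pow_add, pow_mul, ← h, inv_pow, ← pow_mul, ← pow_add, h3]
  have hsub : ({x, x ^ q ^ 1, x ^ q ^ 2, x⁻¹, (x ^ q ^ 1)⁻¹} : Finset H) ⊆ S := by
    intro y hy
    simp only [Finset.mem_insert, Finset.mem_singleton] at hy
    rcases hy with rfl | rfl | rfl | rfl | rfl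
    exacts [hx, pow_pow_mem hfrob hx 1, pow_pow_mem hfrob hx 2, hinv x hx,
      hinv _ (pow_pow_mem hfrob hx 1)]
  have j0 : (x ^ q ^ 1)⁻¹ ≠ x := fun h => i2 (shift (a := 0) (by simpa using h))
  have j1 : (x ^ q ^ 1)⁻¹ ≠ x ^ q ^ 1 := fun h => i0 ((shift h).trans h3)
  have j2 : (x ^ q ^ 1)⁻¹ ≠ x ^ q ^ 2 := fun h => i1
    ((shift h).trans (pow_pow_add_of_fixed (b := 1) h3))
  have j3 : (x ^ q ^ 1)⁻¹ ≠ x⁻¹ := fun h => h1 (inv_injective h)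
  have h5 : ({x, x ^ q ^ 1, x ^ q ^ 2, x⁻¹, (x ^ q ^ 1)⁻¹} : Finset H).card = 5 := by
    rw [Finset.card_insert_of_notMem, Finset.card_insert_of_notMem, Finset.card_insert_of_notMem,
      Finset.card_insert_of_notMem, Finset.card_singleton] <;>
    simp only [Finset.mem_insert, Finset.mem_singleton, not_or]
    · exact j3.symm
    · exact ⟨i2.symm, j2.symm⟩
    · exact ⟨h21.symm, i1.symm, j1.symm⟩
    · exact ⟨h1.symm, h2.symm, i0.symm, j0.symm⟩
  have := Finset.card_le_card hsub
  omega

theorem dvd_sub_one_of_pow_eq_self {y : H} {ℓ m : ℕ} (hℓ : ℓ.Prime) (hm : 0 < m) (hy : y ^ ℓ = 1)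
    (hy1 : y ≠ 1) (h : y ^ m = y) : ℓ ∣ m - 1 := by
  have : orderOf y = ℓ := (Nat.dvd_prime hℓ).mp (orderOf_dvd_of_pow_eq_one hy) |>.resolve_left
    (by rwa [orderOf_eq_one_iff])
  rw [← this]
  apply orderOf_dvd_of_pow_eq_one
  rw [pow_sub _ hm, h]; simp

theorem prime_dvd_of_card_le_four {r s : ℕ} (hr : r.Prime) (hs : s.Prime) (hro : Odd r)
    (hso : Odd s) (hqr : q.Coprime (r * s)) (hq : 0 < q) (hcard : S.card ≤ 4)
    (hfrob : ∀ x ∈ S, x ^ q ∈ S) (hinv : ∀ x ∈ S, x⁻¹ ∈ S) (hn : ∀ x ∈ S, x ^ (r * s) = 1)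
    (hSr : ∃ x ∈ S, x ^ r ≠ 1) (hSs : ∃ x ∈ S, x ^ s ≠ 1) :
    ((∀ k, 0 < k → k < 4 → ¬ r ∣ q ^ k - 1) → s ∣ q ^ 2 + 1) ∧
      (r ∣ q ^ 2 - 1 → s ∣ q ^ 2 - 1) := by
  obtain ⟨y, hy, hyr⟩ := hSr
  obtain ⟨x, hx, hxs⟩ := hSs
  have hodd : Odd (r * s) := hro.mul hso
  have hxr : (x ^ s) ^ r = 1 := by rw [← pow_mul, mul_comm, hn x hx]
  have hys : (y ^ r) ^ s = 1 := by rw [← pow_mul, hn y hy]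
  constructor
  · intro h
    have hne (k : ℕ) (hk : 0 < k) (hk4 : k < 4) : x ^ q ^ k ≠ x := fun hfix =>
      h k hk hk4 (dvd_sub_one_of_pow_eq_self hr (by positivity) hxr hxs
        (by rw [← pow_mul, mul_comm, pow_mul, hfix]))
    have hyinv := pow_sq_eq_inv_of_card_le_four hqr hodd hcard hfrob hinv hx (hn x hx)
      (hne 1 (by simp) (by simp)) (hne 2 (by simp) (by simp)) (hne 3 (by simp) (by simp)) hy
    have := dvd_sub_one_of_pow_eq_self (m := q ^ 2 + 1 + 1) hs (by positivity) hys hyr (by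
      rw [pow_succ _ (q ^ 2 + 1), pow_succ _ (q ^ 2), pow_right_comm, hyinv]; simp)
    simpa using this
  · intro h
    by_contra hcon
    have h2 : y ^ q ^ 2 ≠ y := fun hfix =>
      hcon (dvd_sub_one_of_pow_eq_self hs (by positivity) hys hyr
        (by rw [← pow_mul, mul_comm, pow_mul, hfix]))
    have h1 : y ^ q ^ 1 ≠ y := fun hfix => h2 ((pow_pow_add_of_fixed (b := 1) hfix).trans hfix)
    have h3 := pow_pow_three_ne_of_card_le_four hqr hodd hcard hfrob hinv hy (hn y hy) h1 h2
    have hxinv := pow_sq_eq_inv_of_card_le_four hqr hodd hcard hfrob hinv hy (hn y hy) h1 h2 h3 hx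
    have hfix : (x ^ s) ^ q ^ 2 = x ^ s := by
      obtain ⟨c, hc⟩ := h
      have hpos : 0 < q ^ 2 := by positivity
      have hq2 : q ^ 2 = r * c + 1 := by omega
      rw [hq2, pow_succ, pow_mul, hxr]; simp
    refine hxs (eq_one_of_eq_inv_of_odd hro hxr ?_)
    rw [← inv_pow, ← hxinv, ← pow_mul, mul_comm, pow_mul, hfix]

end PowerOrbits

section MinpolyRoots

open Polynomial Matrix

theorem pow_eq_one_of_forall_minpoly_root {F A : Type*} (K : Type*) [Field F] [Field K]
    [IsAlgClosed K] [Algebra F K] [Ring A] [Algebra F A] {a b : ℕ} (hab : ((a * b : ℕ) : F) ≠ 0)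
    {z : A} (hz : z ^ (a * b) = 1) (h : ∀ ν : K, aeval ν (minpoly F z) = 0 → ν ^ a = 1) :
    z ^ a = 1 := by
  obtain ⟨g, hg⟩ : (X ^ a - 1 : F[X]) ∣ X ^ (a * b) - 1 := by
    rw [pow_mul]; exact sub_one_dvd_pow_sub_one _ _
  have hsep : (X ^ (a * b) - 1 : F[X]).Separable := by
    simpa using separable_X_pow_sub_C (1 : F) hab one_ne_zero
  have hag : IsCoprime (X ^ a - 1) g := (hg ▸ hsep).isCoprime
  have hfg : IsCoprime (minpoly F z) g := by
    rw [isCoprime_iff_aeval_ne_zero_of_isAlgClosed F K]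
    intro ν
    by_contra! hν
    have := (isCoprime_iff_aeval_ne_zero_of_isAlgClosed F K _ _).mp hag ν
    simp [h ν hν.1, hν.2] at this
  have hdvd : minpoly F z ∣ X ^ a - 1 :=
    hfg.dvd_of_dvd_mul_right (hg ▸ minpoly.dvd F z (by simp [hz]))
  simpa [sub_eq_zero] using aeval_eq_zero_of_dvd_aeval_eq_zero hdvd (minpoly.aeval F z)

theorem aeval_pow_minpoly_eq_zero {F A K : Type*} [Field F] [Field K] [Algebra F K] [Ring A]
    [Algebra F A] {z : A} {m : ℕ} (hz : aeval (z ^ m) (minpoly F z) = 0) {ν : K}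
    (hν : aeval ν (minpoly F z) = 0) : aeval (ν ^ m) (minpoly F z) = 0 := by
  have hdvd : minpoly F z ∣ (minpoly F z).comp (X ^ m) :=
    minpoly.dvd F z (by simpa [aeval_comp] using hz)
  simpa [aeval_comp] using aeval_eq_zero_of_dvd_aeval_eq_zero hdvd hν

theorem SemiconjBy.aeval_right {R A : Type*} [CommRing R] [Ring A] [Algebra R A] {a x y : A}
    (h : SemiconjBy a x y) (f : R[X]) : SemiconjBy a (aeval x f) (aeval y f) := by
  induction f using Polynomial.induction_on' with
  | add f g hf hg => simpa using hf.add_right hg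
  | monomial n c =>
    simp only [aeval_monomial]
    exact SemiconjBy.mul_right (Algebra.commutes c a).symm (h.pow_right n)

theorem Matrix.aeval_transpose {n R : Type*} [Fintype n] [DecidableEq n] [CommRing R]
    (A : Matrix n n R) (f : R[X]) : aeval Aᵀ f = (aeval A f)ᵀ := by
  induction f using Polynomial.induction_on' with
  | add f g hf hg => simp [hf, hg]
  | monomial n c => simp [aeval_monomial, ← Algebra.smul_def, transpose_pow]

end MinpolyRoots

namespace SymplecticGroup

open Matrix Polynomial

variable {l F : Type*} [DecidableEq l] [Fintype l] [Field F]

theorem aeval_inv_minpoly (A : symplecticGroup l F) :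
    aeval ((A⁻¹ : symplecticGroup l F) : Matrix (l ⊕ l) (l ⊕ l) F)
      (minpoly F (A : Matrix (l ⊕ l) (l ⊕ l) F)) = 0 := by
  have hconj : SemiconjBy (J l F) ((A⁻¹ : symplecticGroup l F) : Matrix (l ⊕ l) (l ⊕ l) F)
      (A : Matrix (l ⊕ l) (l ⊕ l) F)ᵀ := by
    rw [SemiconjBy, coe_inv, ← mul_assoc, ← mul_assoc, mul_neg, J_squared]
    simp
  have h := hconj.aeval_right (minpoly F (A : Matrix (l ⊕ l) (l ⊕ l) F))
  rw [SemiconjBy, Matrix.aeval_transpose, minpoly.aeval, transpose_zero, zero_mul] at h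
  have := congrArg (J l F * ·) h
  simpa [← mul_assoc, J_squared] using this

/-- The central elements of the symplectic group are involutions. -/
theorem sq_eq_one_of_mem_center {Z : symplecticGroup l F}
    (hZ : Z ∈ Subgroup.center (symplecticGroup l F)) : Z ^ 2 = 1 := by
  have hmem (S : Matrix l l F) (hS : Sᵀ = S) : fromBlocks 1 S 0 1 ∈ symplecticGroup l F := by
    simp [fromBlocks_mem_iff, hS]
  have hcomm (B : Matrix (l ⊕ l) (l ⊕ l) F) (hB : B ∈ symplecticGroup l F) :
      B * Z = Z * B := congrArg Subtype.val (Subgroup.mem_center_iff.mp hZ ⟨B, hB⟩)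
  obtain ⟨Z, hZs⟩ := Z
  obtain ⟨A, B, C, D, rfl⟩ : ∃ A B C D, Z = fromBlocks A B C D :=
    ⟨_, _, _, _, (fromBlocks_toBlocks Z).symm⟩
  have hT (S : Matrix l l F) (hS : Sᵀ = S) := hcomm _ (hmem S hS)
  have hJ := hcomm _ (J_mem _ _)
  simp only [fromBlocks_multiply, J, fromBlocks_inj] at hT hJ
  have hC : C = 0 := by simpa using (hT 1 (by simp)).1
  have hB : B = 0 := by simpa [hC, eq_comm] using hJ.1
  have hD : D = A := by simpa [hB] using (hT 1 (by simp)).2.1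
  subst hC hB hD
  have hdiag : D.IsDiag := by
    intro i j hij
    have h := congrFun (congrFun (hT (single i i 1) (by simp)).2.1 i) j
    simpa [hij.symm] using h
  have h := (fromBlocks_mem_iff.mp hZs).2.2
  rw [hdiag.isSymm.eq] at h
  have hDD : D * D = 1 := by simpa using h
  apply Subtype.ext
  simp [pow_two, fromBlocks_multiply, hDD]

/-- For `Z ∈ Sp₄(q)` of order `r * s`, the four eigenvalues of `Z` are permuted by inversion and by
the Frobenius map, which bounds `s` in terms of `r`. -/
theorem prime_dvd_of_pow_mul_eq_one [Fintype F] {q r s : ℕ} (hF : Fintype.card F = q)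
    (hr : r.Prime) (hs : s.Prime) (hro : Odd r) (hso : Odd s) (hq : q.Coprime (r * s))
    {Z : symplecticGroup (Fin 2) F} (hZ : Z ^ (r * s) = 1) (hZr : Z ^ r ≠ 1) (hZs : Z ^ s ≠ 1) :
    ((∀ k, 0 < k → k < 4 → ¬ r ∣ q ^ k - 1) → s ∣ q ^ 2 + 1) ∧
      (r ∣ q ^ 2 - 1 → s ∣ q ^ 2 - 1) := by
  classical
  subst hF
  let K := AlgebraicClosure F
  set M : Matrix (Fin 2 ⊕ Fin 2) (Fin 2 ⊕ Fin 2) F := Z.1 with hM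
  have hMpow (k : ℕ) : M ^ k = 1 ↔ Z ^ k = 1 := by
    rw [hM, ← SubmonoidClass.coe_pow, OneMemClass.coe_eq_one]
  have hMn : M ^ (r * s) = 1 := (hMpow _).mpr hZ
  have hn0 : r * s ≠ 0 := mul_ne_zero hr.ne_zero hs.ne_zero
  have hnF : ((r * s : ℕ) : F) ≠ 0 := by
    intro h
    have hchar := ringChar.spec F (r * s) |>.mp h
    have hp : (ringChar F).Prime := CharP.char_is_prime F _
    have hpq : ringChar F ∣ Fintype.card F := by
      rw [← CharP.cast_eq_zero_iff F]; simp
    exact hp.one_lt.ne' (Nat.eq_one_of_dvd_coprimes hq hpq hchar)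
  have hroot {ν : K} (hν : aeval ν (minpoly F M) = 0) : ν ^ (r * s) = 1 := by
    have hdvd : minpoly F M ∣ X ^ (r * s) - 1 := minpoly.dvd F M (by simp [hMn])
    simpa [sub_eq_zero] using aeval_eq_zero_of_dvd_aeval_eq_zero hdvd hν
  have hf0 : minpoly F M ≠ 0 := minpoly.ne_zero_of_finite F M
  let S : Finset Kˣ := ((minpoly F M).aroots K).toFinset.preimage Units.val Units.val_injective.injOn
  have hS {u : Kˣ} : u ∈ S ↔ aeval (u : K) (minpoly F M) = 0 := by
    simp [S, hf0]
  have hex {ν : K} (hν : aeval ν (minpoly F M) = 0) : ∃ u ∈ S, (u : K) = ν := by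
    refine ⟨Units.ofPowEqOne ν _ (hroot hν) hn0, ?_, rfl⟩
    rw [hS]; exact hν
  apply prime_dvd_of_card_le_four (S := S) hr hs hro hso hq Fintype.card_pos
  · calc S.card ≤ ((minpoly F M).aroots K).toFinset.card :=
          Finset.card_le_card_of_injOn Units.val (fun u hu => by simpa [S] using hu)
            Units.val_injective.injOn
      _ ≤ ((minpoly F M).aroots K).card := Multiset.toFinset_card_le _
      _ ≤ (minpoly F M).natDegree := (card_roots' _).trans natDegree_map_le
      _ ≤ M.charpoly.natDegree :=
          natDegree_le_of_dvd (minpoly.dvd F M (aeval_self_charpoly M)) M.charpoly_monic.ne_zero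
      _ = 4 := by simp [charpoly_natDegree_eq_dim]
  · intro u hu
    rw [hS] at hu ⊢
    have h := aeval_algHom_apply (FiniteField.frobeniusAlgHom F K) (u : K) (minpoly F M)
    simpa [hu] using h
  · intro u hu
    rw [hS] at hu ⊢
    have hinv : ((u⁻¹ : Kˣ) : K) = (u : K) ^ (r * s - 1) := by
      rw [Units.val_inv_eq_inv_val]
      exact inv_eq_of_mul_eq_one_right (by rw [mul_pow_sub_one hn0, hroot hu])
    have hZinv : Z⁻¹ = Z ^ (r * s - 1) := by
      rw [inv_eq_iff_mul_eq_one, mul_pow_sub_one hn0, hZ]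
    rw [hinv]
    refine aeval_pow_minpoly_eq_zero ?_ hu
    have := aeval_inv_minpoly Z
    rwa [hZinv, SubmonoidClass.coe_pow] at this
  · intro u hu
    exact Units.ext (by simpa using hroot (hS.mp hu))
  · by_contra! hcon
    refine hZr ((hMpow r).mp (pow_eq_one_of_forall_minpoly_root K hnF hMn fun ν hν => ?_))
    obtain ⟨u, hu, rfl⟩ := hex hν
    simpa using congrArg Units.val (hcon u hu)
  · by_contra! hcon
    rw [mul_comm] at hnF hMn
    refine hZs ((hMpow s).mp (pow_eq_one_of_forall_minpoly_root K hnF hMn fun ν hν => ?_))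
    obtain ⟨u, hu, rfl⟩ := hex hν
    simpa using congrArg Units.val (hcon u hu)

end SymplecticGroup

section CentralQuotient

variable {G : Type*} [Group G] {n : ℕ}

theorem exists_lift_pow_eq_one_of_center (hG : ∀ z ∈ Subgroup.center G, z ^ 2 = 1) (hn : Odd n)
    {x : G ⧸ Subgroup.center G} (hx : x ^ n = 1) :
    ∃ g : G, (g : G ⧸ Subgroup.center G) = x ∧ g ^ n = 1 := by
  obtain ⟨g, rfl⟩ := QuotientGroup.mk_surjective x
  obtain ⟨k, hk⟩ := hn.add_one
  refine ⟨g ^ (n + 1), ?_, ?_⟩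
  · rw [QuotientGroup.mk_pow, pow_succ, hx, one_mul]
  · have hg : g ^ n ∈ Subgroup.center G := by
      rwa [← QuotientGroup.eq_one_iff, QuotientGroup.mk_pow]
    rw [← pow_mul, mul_comm, pow_mul, hk, ← two_mul, pow_mul, hG _ hg, one_pow]

theorem commute_of_commute_mk_center (hG : ∀ z ∈ Subgroup.center G, z ^ 2 = 1) (hn : Odd n)
    {g h : G} (hg : g ^ n = 1)
    (hgh : Commute (g : G ⧸ Subgroup.center G) (h : G ⧸ Subgroup.center G)) : Commute g h := by
  have hz : h * g * h⁻¹ * g⁻¹ ∈ Subgroup.center G := by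
    rw [← QuotientGroup.eq_one_iff]
    simp only [QuotientGroup.mk_mul, QuotientGroup.mk_inv]
    rw [← hgh.eq]; simp
  set z := h * g * h⁻¹ * g⁻¹ with hzdef
  have hzg : h * g * h⁻¹ = z * g := by simp [hzdef]
  have hzn : z ^ n = 1 := by
    have hcomm : Commute z g := (Subgroup.mem_center_iff.mp hz g).symm
    have hpow := congrArg (· ^ n) hzg
    simpa [conj_pow, hcomm.mul_pow, hg] using hpow.symm
  have hz1 : z = 1 := by
    have := pow_gcd_eq_one.mpr ⟨hG z hz, hzn⟩
    rwa [Nat.coprime_two_left.mpr hn, pow_one] at this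
  rw [hz1, one_mul, mul_inv_eq_iff_eq_mul] at hzg
  exact hzg.symm

end CentralQuotient

/-- Lemma 2.6, `PSp₄(q)` case: bounds on primes `s ≠ p` dividing the order of the
centralizer of an element of odd prime order `r ≠ p` in `PSp₄(q)`, in terms of
`i = Φ(r,q)`, the least `a ≥ 1` with `r ∣ qᵃ - 1`. -/
theorem PSp4_centralizer_prime_divisor {p f q : ℕ} (hp : p.Prime) (hf : 0 < f)
    (hq : q = p ^ f) (F : Type*) [Field F] [Fintype F] (hF : Fintype.card F = q)
    {r : ℕ} (hr : r.Prime) (hrodd : Odd r) (hrp : r ≠ p)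
    (x : Matrix.symplecticGroup (Fin 2) F ⧸
      Subgroup.center (Matrix.symplecticGroup (Fin 2) F))
    (hx : orderOf x = r)
    {i : ℕ} (hi : IsLeast {a : ℕ | 0 < a ∧ r ∣ q ^ a - 1} i)
    {s : ℕ} (hs : s.Prime) (hsp : s ≠ p)
    (hsdvd : s ∣ Nat.card (Subgroup.centralizer ({x} : Set _))) :
    (i = 4 → s ∣ q ^ 2 + 1) ∧ (i = 1 ∨ i = 2 → s ∣ q ^ 2 - 1) := by
  subst hq
  have hpq (ℓ : ℕ) (hℓ : ℓ.Prime) (h : ℓ ≠ p) : (p ^ f).Coprime ℓ :=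
    ((Nat.coprime_primes hp hℓ).mpr h.symm).pow_left f
  have hodd (h2 : s = 2) : Odd (p ^ f) :=
    (hp.odd_of_ne_two fun h => hsp (h2.trans h.symm)).pow
  have hleast (k : ℕ) (hk : 0 < k) (hki : k < i) : ¬ r ∣ (p ^ f) ^ k - 1 := fun h =>
    hki.not_ge (hi.2 ⟨hk, h⟩)
  have hri := hi.1.2
  have hr2 (h : i = 1 ∨ i = 2) : r ∣ (p ^ f) ^ 2 - 1 := by
    rcases h with rfl | rfl
    · exact hri.trans (by simpa only [pow_one, one_pow] using Nat.sub_dvd_pow_sub_pow (p ^ f) 1 2)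
    · exact hri
  rcases eq_or_ne s 2 with rfl | hs2
  · have h := (hodd rfl).pow (n := 2)
    exact ⟨fun _ => (h.add_odd odd_one).two_dvd, fun _ => (Nat.Odd.sub_odd h odd_one).two_dvd⟩
  have hso : Odd s := hs.odd_of_ne_two hs2
  rcases eq_or_ne s r with rfl | hsr
  · refine ⟨?_, hr2⟩
    rintro rfl
    have hfac : (p ^ f) ^ 4 - 1 = ((p ^ f) ^ 2 + 1) * ((p ^ f) ^ 2 - 1) := by
      rw [← Nat.sq_sub_sq, one_pow, ← pow_mul (p ^ f) 2 2]
    rw [hfac] at hri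
    exact (hs.dvd_mul.mp hri).resolve_right (hleast 2 (by simp) (by simp))
  have : Fact s.Prime := ⟨hs⟩
  obtain ⟨⟨y, hyc⟩, hy⟩ := exists_prime_orderOf_dvd_card' s hsdvd
  rw [Subgroup.orderOf_mk] at hy
  have hxy : Commute x y := (Subgroup.mem_centralizer_singleton_iff.mp hyc).symm
  have hcenter := fun z (hz : z ∈ Subgroup.center (Matrix.symplecticGroup (Fin 2) F)) =>
    SymplecticGroup.sq_eq_one_of_mem_center hz
  have hxr : x ^ r = 1 := hx ▸ pow_orderOf_eq_one x
  have hys : y ^ s = 1 := hy ▸ pow_orderOf_eq_one y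
  have hxs : x ^ s ≠ 1 := fun h =>
    hsr ((Nat.prime_dvd_prime_iff_eq hr hs).mp (hx ▸ orderOf_dvd_of_pow_eq_one h)).symm
  have hyr : y ^ r ≠ 1 := fun h =>
    hsr ((Nat.prime_dvd_prime_iff_eq hs hr).mp (hy ▸ orderOf_dvd_of_pow_eq_one h))
  obtain ⟨g, rfl, hg⟩ := exists_lift_pow_eq_one_of_center hcenter hrodd hxr
  obtain ⟨h, rfl, hh⟩ := exists_lift_pow_eq_one_of_center hcenter hso hys
  have hgh : Commute g h := commute_of_commute_mk_center hcenter hrodd hg hxy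
  have hmk (k : ℕ) (hk : (g * h) ^ k = 1) :
      (g : Matrix.symplecticGroup (Fin 2) F ⧸ Subgroup.center _) ^ k *
        (h : Matrix.symplecticGroup (Fin 2) F ⧸ Subgroup.center _) ^ k = 1 := by
    rw [← hxy.mul_pow, ← QuotientGroup.mk_mul, ← QuotientGroup.mk_pow, hk, QuotientGroup.mk_one]
  have key := SymplecticGroup.prime_dvd_of_pow_mul_eq_one hF hr hs hrodd hso
    ((hpq r hr hrp).mul_right (hpq s hs hsp)) (Z := g * h)
    (by rw [hgh.mul_pow, pow_mul, hg, mul_comm r, pow_mul, hh]; simp)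
    (fun hk => hyr (by simpa [hxr] using hmk r hk))
    (fun hk => hxs (by simpa [hys] using hmk s hk))
  refine ⟨?_, fun hi2 => key.2 (hr2 hi2)⟩
  rintro rfl
  exact key.1 hleast
end

section
/- Let q = p^f be a prime power, let F_q be a finite field with q elements, and let G = PSp_8(q) be the quotient of Sp_8(q) = Matrix.symplecticGroup (Fin 4) F_q by its center. Let x ∈ G be an element of odd prime order r with r ≠ p, let i be the least positive integer a such that r divides q^a − 1, and let s ≠ p be a prime dividing the cardinality of the centralizer of x in G. Then: if i = 8 then s divides q^4 + 1; if i = 4 then s divides q^4 − 1; if i = 6 then s divides (q − 1)(q^3 + 1); if i = 3 then s divides (q + 1)(q^3 − 1); and if i ∈ {1, 2} then s divides (q^2 + 1)(q^6 − 1). -/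
open Matrix Function

/-- The pairs of simultaneous nonzero eigenvalues of two matrices. -/
def jointSpectrum {n K : Type*} [Fintype n] [Field K] (X Y : Matrix n n K) : Set (Kˣ × Kˣ) :=
  {z | ∃ v : n → K, v ≠ 0 ∧ X *ᵥ v = (z.1 : K) • v ∧ Y *ᵥ v = (z.2 : K) • v}

section JointSpectrum

variable {n K : Type*} [Fintype n] [Field K]

lemma swap_mem_jointSpectrum {X Y : Matrix n n K} {z : Kˣ × Kˣ} (hz : z ∈ jointSpectrum X Y) :
    z.swap ∈ jointSpectrum Y X := by
  obtain ⟨v, hv, h₁, h₂⟩ := hz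
  exact ⟨v, hv, h₂, h₁⟩

lemma frobenius_mem_jointSpectrum {F : Type*} [Field F] [Fintype F] [Algebra F K]
    (X Y : Matrix n n F) {z : Kˣ × Kˣ}
    (hz : z ∈ jointSpectrum (X.map (algebraMap F K)) (Y.map (algebraMap F K))) :
    z ^ Fintype.card F ∈ jointSpectrum (X.map (algebraMap F K)) (Y.map (algebraMap F K)) := by
  obtain ⟨v, hv, h₁, h₂⟩ := hz
  have key (A : Matrix n n F) (c : K) (h : A.map (algebraMap F K) *ᵥ v = c • v) :
      A.map (algebraMap F K) *ᵥ (fun i => v i ^ Fintype.card F) =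
        c ^ Fintype.card F • fun i => v i ^ Fintype.card F := by
    ext i
    have hi := congrArg (FiniteField.frobeniusAlgHom F K) (congrFun h i)
    simpa [mulVec, dotProduct, map_sum, FiniteField.coe_frobeniusAlgHom, mul_pow,
      ← map_pow, FiniteField.pow_card] using hi
  refine ⟨fun i => v i ^ Fintype.card F, ?_, ?_, ?_⟩
  · intro h
    exact hv (funext fun i => eq_zero_of_pow_eq_zero (congrFun h i))
  · simpa using key X _ h₁
  · simpa using key Y _ h₂

variable [DecidableEq n]

lemma pow_mulVec_of_mulVec_eq_smul {X : Matrix n n K} {v : n → K} {c : K}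
    (h : X *ᵥ v = c • v) (k : ℕ) : (X ^ k) *ᵥ v = c ^ k • v := by
  induction k with
  | zero => simp
  | succ k ih => rw [pow_succ, ← mulVec_mulVec, h, mulVec_smul, ih, smul_smul, pow_succ']

lemma eigenvalue_pow_eq_one {X : Matrix n n K} {v : n → K} (hv : v ≠ 0) {c : K}
    (h : X *ᵥ v = c • v) {k : ℕ} (hk : X ^ k = 1) : c ^ k = 1 := by
  have := pow_mulVec_of_mulVec_eq_smul h k
  rw [hk, one_mulVec] at this
  exact smul_left_injective K hv (by simp [← this])

lemma fst_pow_eq_one_of_mem_jointSpectrum {X Y : Matrix n n K} {z : Kˣ × Kˣ}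
    (hz : z ∈ jointSpectrum X Y) {k : ℕ} (hk : X ^ k = 1) : z.1 ^ k = 1 := by
  obtain ⟨v, hv, h₁, -⟩ := hz
  exact Units.ext (by simpa using eigenvalue_pow_eq_one hv h₁ hk)

lemma snd_pow_eq_one_of_mem_jointSpectrum {X Y : Matrix n n K} {z : Kˣ × Kˣ}
    (hz : z ∈ jointSpectrum X Y) {k : ℕ} (hk : Y ^ k = 1) : z.2 ^ k = 1 :=
  fst_pow_eq_one_of_mem_jointSpectrum (swap_mem_jointSpectrum hz) hk

lemma card_le_of_subset_jointSpectrum {X Y : Matrix n n K} (hXY : Commute X Y)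
    (T : Finset (Kˣ × Kˣ)) (hT : ↑T ⊆ jointSpectrum X Y) : T.card ≤ Fintype.card n := by
  classical
  let f : Bool → Module.End K (n → K) := fun b => toLin' (bif b then X else Y)
  have hf : ∀ i j, Commute (f i) (f j) := by
    have hc : Commute (toLin' X) (toLin' Y) := by
      change toLin' X * toLin' Y = toLin' Y * toLin' X
      rw [Module.End.mul_eq_comp, Module.End.mul_eq_comp, ← toLin'_mul, ← toLin'_mul, hXY.eq]
    rintro (_ | _) (_ | _)
    exacts [Commute.refl _, hc.symm, hc, Commute.refl _]
  have hind := Module.End.independent_iInf_maxGenEigenspace_of_forall_mapsTo f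
    (fun i j φ => Module.End.mapsTo_maxGenEigenspace_of_comm (hf j i) φ)
  let χ : T → Bool → K := fun z b => bif b then (z.1.1 : K) else (z.1.2 : K)
  have hχ : Function.Injective χ := by
    intro z w h
    refine Subtype.ext (Prod.ext (Units.ext ?_) (Units.ext ?_))
    · exact congrFun h true
    · exact congrFun h false
  choose v hv h₁ h₂ using fun z : T => hT z.2
  have hli : LinearIndependent K v := by
    refine (hind.comp hχ).linearIndependent _ (fun z => ?_) hv
    simp only [Function.comp_apply, Submodule.mem_iInf]
    rintro (_ | _)
    · exact Module.End.mem_maxGenEigenspace _ _ _ |>.2 ⟨1, by simp [f, χ, h₂]⟩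
    · exact Module.End.mem_maxGenEigenspace _ _ _ |>.2 ⟨1, by simp [f, χ, h₁]⟩
  simpa using hli.fintype_card_le_finrank

lemma Module.End.exists_eigenvector_mem {V : Type*} [IsAlgClosed K] [AddCommGroup V] [Module K V]
    [FiniteDimensional K V] (f : Module.End K V) {W : Submodule K V} (hW : W ≠ ⊥)
    (hf : ∀ w ∈ W, f w ∈ W) : ∃ c : K, ∃ w ∈ W, w ≠ 0 ∧ f w = c • w := by
  have := Submodule.nontrivial_iff_ne_bot.2 hW
  obtain ⟨c, hc⟩ := Module.End.exists_eigenvalue (f.restrict hf)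
  obtain ⟨w, hw⟩ := hc.exists_hasEigenvector
  refine ⟨c, w, w.2, fun h => hw.2 (Subtype.ext h), ?_⟩
  exact congrArg Subtype.val hw.apply_eq_smul

lemma exists_mem_jointSpectrum_fst_ne_one [IsAlgClosed K] {X Y : Matrix n n K}
    (hXY : Commute X Y) {k l : ℕ} (hk : (k : K) ≠ 0) (hXk : X ^ k = 1) (hl : l ≠ 0)
    (hYl : Y ^ l = 1) (hX : X ≠ 1) : ∃ z ∈ jointSpectrum X Y, z.1 ≠ 1 := by
  let P : Matrix n n K := ∑ a ∈ Finset.range k, X ^ a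
  have hk0 : k ≠ 0 := by rintro rfl; simp at hk
  have hP : P * (X - 1) = 0 := by simp [P, geom_sum_mul, hXk]
  have hker : LinearMap.ker (toLin' P) ≠ ⊥ := by
    intro h
    refine hX (sub_eq_zero.1 (toLin'.injective (LinearMap.ext fun v => ?_)))
    have : toLin' (X - 1) v ∈ LinearMap.ker (toLin' P) := by
      rw [LinearMap.mem_ker, ← toLin'_mul_apply, hP]; simp
    rw [h, Submodule.mem_bot] at this
    rw [this, map_zero, LinearMap.zero_apply]
  have hPX : Commute P X := Commute.sum_left _ _ _ fun a _ => (Commute.refl X).pow_left a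
  obtain ⟨c, w, hw, hw0, hwc⟩ := Module.End.exists_eigenvector_mem (toLin' X) hker (by
    intro w hw
    rw [LinearMap.mem_ker] at hw ⊢
    rw [← toLin'_mul_apply, hPX.eq, toLin'_mul_apply, hw, map_zero])
  rw [toLin'_apply] at hwc
  have hc1 : c ≠ 1 := by
    rintro rfl
    rw [LinearMap.mem_ker, toLin'_apply, sum_mulVec] at hw
    simp only [pow_mulVec_of_mulVec_eq_smul hwc, one_pow, one_smul, Finset.sum_const,
      Finset.card_range, ← Nat.cast_smul_eq_nsmul K, smul_eq_zero] at hw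
    tauto
  obtain ⟨d, v, hv, hv0, hvd⟩ := Module.End.exists_eigenvector_mem (toLin' Y)
    (W := Module.End.eigenspace (toLin' X) c)
    (fun h => hw0 (by
      have : w ∈ Module.End.eigenspace (toLin' X) c := by simpa [Module.End.mem_eigenspace_iff]
      simpa [h] using this)) (by
    intro w hw
    rw [Module.End.mem_eigenspace_iff] at hw ⊢
    rw [← toLin'_mul_apply, hXY.eq, toLin'_mul_apply, hw, map_smul])
  rw [Module.End.mem_eigenspace_iff, toLin'_apply] at hv
  rw [toLin'_apply] at hvd
  have hc : c ^ k = 1 := eigenvalue_pow_eq_one hv0 hv hXk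
  have hd : d ^ l = 1 := eigenvalue_pow_eq_one hv0 hvd hYl
  have hc0 : c ≠ 0 := by rintro rfl; simp [hk0] at hc
  have hd0 : d ≠ 0 := by rintro rfl; simp [hl] at hd
  exact ⟨(Units.mk0 c hc0, Units.mk0 d hd0), ⟨v, hv0, hv, hvd⟩,
    fun h => hc1 (by simpa using congrArg Units.val h)⟩

/-- A simultaneous eigenvalue of the transposes is a simultaneous eigenvalue of the matrices, for
commuting matrices of finite order prime to the characteristic. -/
lemma mem_jointSpectrum_of_transpose {X Y : Matrix n n K} (hXY : Commute X Y) {k l : ℕ}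
    (hk : (k : K) ≠ 0) (hXk : X ^ k = 1) (hl : (l : K) ≠ 0) (hYl : Y ^ l = 1) {z : Kˣ × Kˣ}
    (hz : z ∈ jointSpectrum Xᵀ Yᵀ) : z ∈ jointSpectrum X Y := by
  obtain ⟨u, hu, h₁, h₂⟩ := hz
  have hz₁ : (z.1 : K) ^ k = 1 := eigenvalue_pow_eq_one hu h₁ (by rw [← transpose_pow, hXk,
    transpose_one])
  have hz₂ : (z.2 : K) ^ l = 1 := eigenvalue_pow_eq_one hu h₂ (by rw [← transpose_pow, hYl,
    transpose_one])
  let Q : Matrix n n K → ℕ → K → Matrix n n K := fun A m c => ∑ a ∈ Finset.range m, (c⁻¹ • A) ^ a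
  have hmul (A : Matrix n n K) (m : ℕ) (c : K) (hA : A ^ m = 1) (hc : c ^ m = 1) (hc0 : c ≠ 0) :
      A * Q A m c = c • Q A m c := by
    have h : (c⁻¹ • A - 1) * Q A m c = 0 := by
      rw [mul_geom_sum, smul_pow, hA, inv_pow, hc, inv_one, one_smul, sub_self]
    rw [sub_mul, one_mul, sub_eq_zero, smul_mul_assoc] at h
    rw [← h, smul_smul, mul_inv_cancel₀ hc0, one_smul, h]
  have htr (A : Matrix n n K) (m : ℕ) (c : K) (hc0 : c ≠ 0) (h : Aᵀ *ᵥ u = c • u) :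
      (Q A m c)ᵀ *ᵥ u = (m : K) • u := by
    have hA : (c⁻¹ • Aᵀ) *ᵥ u = (1 : K) • u := by
      rw [smul_mulVec, h, smul_smul, inv_mul_cancel₀ hc0]
    simp only [Q, transpose_sum, sum_mulVec, transpose_pow, transpose_smul,
      pow_mulVec_of_mulVec_eq_smul hA]
    simp [← Nat.cast_smul_eq_nsmul K]
  have hQQ : Commute (Q X k z.1) Y := Commute.sum_left _ _ _ fun a _ =>
    (hXY.smul_left _).pow_left a
  let P := Q X k z.1 * Q Y l z.2
  have hP : P ≠ 0 := by
    intro h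
    have h' : Pᵀ *ᵥ u = ((k : K) * l) • u := by
      rw [transpose_mul, ← mulVec_mulVec, htr X k z.1 z.1.ne_zero h₁, mulVec_smul,
        htr Y l z.2 z.2.ne_zero h₂, smul_smul]
    rw [h, transpose_zero, zero_mulVec] at h'
    exact (smul_ne_zero (mul_ne_zero hk hl) hu) h'.symm
  obtain ⟨w, hw⟩ : ∃ w, P *ᵥ w ≠ 0 := by
    by_contra! h
    exact hP (toLin'.injective (LinearMap.ext fun w => by simp [h]))
  refine ⟨P *ᵥ w, hw, ?_, ?_⟩
  · rw [mulVec_mulVec, ← Matrix.mul_assoc, hmul X k z.1 hXk hz₁ z.1.ne_zero, smul_mul_assoc,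
      smul_mulVec]
  · rw [mulVec_mulVec, ← Matrix.mul_assoc, ← hQQ.eq, Matrix.mul_assoc,
      hmul Y l z.2 hYl hz₂ z.2.ne_zero, mul_smul_comm, smul_mulVec]

end JointSpectrum

lemma inv_mem_jointSpectrum_of_mem_symplecticGroup {m K : Type*} [Fintype m] [DecidableEq m]
    [Field K] {X Y : Matrix (m ⊕ m) (m ⊕ m) K} (hX : X ∈ symplecticGroup m K)
    (hY : Y ∈ symplecticGroup m K) (hXY : Commute X Y) {k l : ℕ}
    (hk : (k : K) ≠ 0) (hXk : X ^ k = 1) (hl : (l : K) ≠ 0) (hYl : Y ^ l = 1) {z : Kˣ × Kˣ}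
    (hz : z ∈ jointSpectrum X Y) : z⁻¹ ∈ jointSpectrum X Y := by
  refine mem_jointSpectrum_of_transpose hXY hk hXk hl hYl ?_
  obtain ⟨v, hv, h₁, h₂⟩ := hz
  have key (A : Matrix (m ⊕ m) (m ⊕ m) K) (hA : A ∈ symplecticGroup m K) (c : Kˣ)
      (h : A *ᵥ v = (c : K) • v) : Aᵀ *ᵥ (J m K *ᵥ v) = ((c⁻¹ : Kˣ) : K) • (J m K *ᵥ v) := by
    have h' : Aᵀ *ᵥ (J m K *ᵥ (A *ᵥ v)) = J m K *ᵥ v := by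
      rw [mulVec_mulVec, mulVec_mulVec, SymplecticGroup.mem_iff'.1 hA]
    rw [h, mulVec_smul, mulVec_smul] at h'
    rw [← h', smul_smul, Units.inv_mul, one_smul, h']
  refine ⟨J m K *ᵥ v, fun h => hv ?_, key X hX _ h₁, key Y hY _ h₂⟩
  have := congrArg (J m K *ᵥ ·) h
  simpa [mulVec_mulVec, J_squared, neg_mulVec] using this

lemma sq_eq_one_of_mem_center_symplecticGroup {m K : Type*} [Fintype m] [DecidableEq m]
    [CommRing K] {z : symplecticGroup m K} (hz : z ∈ Subgroup.center (symplecticGroup m K)) :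
    z ^ 2 = 1 := by
  obtain ⟨M, hM⟩ := z
  have hcomm (N : Matrix (m ⊕ m) (m ⊕ m) K) (hN : N ∈ symplecticGroup m K) : N * M = M * N :=
    congrArg Subtype.val (Subgroup.mem_center_iff.1 hz ⟨N, hN⟩)
  have hJ := hcomm (J m K) (SymplecticGroup.J_mem m K)
  have hMt : M * Mᵀ = 1 := by
    have h := SymplecticGroup.mem_iff.1 hM
    rw [← hJ, Matrix.mul_assoc] at h
    have := congrArg (J m K * ·) h
    simpa [← Matrix.mul_assoc, J_squared] using this
  have hS (S : Matrix m m K) (h : Sᵀ = S) : fromBlocks 1 S 0 1 * M = M * fromBlocks 1 S 0 1 :=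
    hcomm _ (SymplecticGroup.fromBlocks_mem_iff.2 (by simp [h]))
  rw [← fromBlocks_toBlocks M] at hJ hS
  simp only [J, fromBlocks_multiply, fromBlocks_inj, Matrix.zero_mul, Matrix.one_mul,
    Matrix.mul_zero, Matrix.mul_one, Matrix.neg_mul, Matrix.mul_neg, zero_add, add_zero] at hJ hS
  obtain ⟨h₁, -, -, -⟩ := hS 1 transpose_one
  have hC : M.toBlocks₂₁ = 0 := by simpa using h₁
  have hB : M.toBlocks₁₂ = 0 := by rw [← hJ.1, hC, neg_zero]
  have hD : M.toBlocks₁₁ = M.toBlocks₂₂ := hJ.2.2.1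
  have hA : M.toBlocks₁₁ᵀ = M.toBlocks₁₁ := by
    ext i j
    by_cases hij : i = j
    · rw [hij, transpose_apply]
    have hdiag (a b : m) (hab : a ≠ b) : M.toBlocks₁₁ a b = 0 := by
      obtain ⟨-, h₂, -, -⟩ := hS (single b b 1) (by simp)
      rw [hB, ← hD] at h₂
      have := congrFun (congrFun h₂ a) b
      simpa [hab, hab.symm] using this.symm
    rw [transpose_apply, hdiag i j hij, hdiag j i (Ne.symm hij)]
  have hsymm : Mᵀ = M := by
    rw [← fromBlocks_toBlocks M, fromBlocks_transpose, hB, hC, ← hD, hA]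
    simp
  refine Subtype.ext ?_
  rw [hsymm] at hMt
  simpa [pow_two] using hMt

section Lift

variable {G : Type*} [Group G]

lemma exists_lift_pow_eq_one (hZ : ∀ z ∈ Subgroup.center G, z ^ 2 = 1) {n : ℕ} (hn : Odd n)
    (u : G ⧸ Subgroup.center G) (hu : u ^ n = 1) : ∃ g : G, (g : G ⧸ Subgroup.center G) = u ∧
      g ^ n = 1 := by
  obtain ⟨g, rfl⟩ := QuotientGroup.mk_surjective u
  have hg : g ^ n ∈ Subgroup.center G := by
    rwa [← QuotientGroup.eq_one_iff, QuotientGroup.mk_pow]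
  have hg2 := hZ _ hg
  obtain ⟨k, rfl⟩ := hn
  refine ⟨g ^ (2 * k + 1 + 1), ?_, ?_⟩
  · rw [QuotientGroup.mk_pow, pow_succ, hu, one_mul]
  · rw [← pow_mul, mul_comm, pow_mul, show 2 * k + 1 + 1 = 2 * (k + 1) by ring, pow_mul, hg2,
      one_pow]

lemma commute_of_commute_quotient_center (hZ : ∀ z ∈ Subgroup.center G, z ^ 2 = 1) {n : ℕ}
    (hn : Odd n) {g h : G} (hg : g ^ n = 1)
    (hgh : Commute (g : G ⧸ Subgroup.center G) (h : G ⧸ Subgroup.center G)) : Commute g h := by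
  obtain ⟨z, hz, hzgh⟩ : ∃ z ∈ Subgroup.center G, h⁻¹ * g * h = g * z := by
    refine ⟨g⁻¹ * (h⁻¹ * g * h), ?_, by group⟩
    rw [← QuotientGroup.eq_one_iff]
    simp only [QuotientGroup.mk_mul, QuotientGroup.mk_inv]
    rw [mul_assoc (_ : G ⧸ Subgroup.center G)⁻¹ (g : G ⧸ Subgroup.center G), hgh.eq]
    group
  have hz1 : z ^ n = 1 := by
    have h₁ : (g * z) ^ n = 1 := by
      rw [← hzgh]
      have := conj_pow (i := n) (a := h⁻¹) (b := g)
      rw [inv_inv] at this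
      rw [this, hg]
      group
    rwa [Commute.mul_pow (Subgroup.mem_center_iff.1 hz g), hg, one_mul] at h₁
  have hz2 : z = 1 := by
    obtain ⟨k, rfl⟩ := hn
    rwa [pow_succ, pow_mul, hZ z hz, one_pow, one_mul] at hz1
  rw [hz2, mul_one] at hzgh
  change g * h = h * g
  conv_rhs => rw [← hzgh]
  group

end Lift

section Orbits

variable {α : Type*} [DecidableEq α] {f : α → α} {S : Set α} {N : ℕ}

/-- The forward orbit of a periodic point. -/
noncomputable def orbitFinset (f : α → α) (z : α) : Finset α :=
  (Finset.range (minimalPeriod f z)).image (f^[·] z)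

lemma card_orbitFinset (f : α → α) (z : α) : (orbitFinset f z).card = minimalPeriod f z := by
  rw [orbitFinset, Finset.card_image_of_injOn, Finset.card_range]
  intro a ha b hb h
  exact iterate_injOn_Iio_minimalPeriod (by simpa using ha) (by simpa using hb) h

lemma orbitFinset_subset (hf : ∀ z ∈ S, f z ∈ S) {z : α} (hz : z ∈ S) :
    ↑(orbitFinset f z) ⊆ S := by
  intro w hw
  obtain ⟨k, -, rfl⟩ := Finset.mem_image.1 hw
  exact Set.MapsTo.iterate hf k hz

lemma disjoint_orbitFinset {z w : α} (h : ∀ k, f^[k] z ≠ w) :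
    Disjoint (orbitFinset f z) (orbitFinset f w) := by
  rw [Finset.disjoint_left]
  intro u hu hu'
  obtain ⟨a, -, rfl⟩ := Finset.mem_image.1 hu
  obtain ⟨b, hb, hab⟩ := Finset.mem_image.1 hu'
  refine h (minimalPeriod f w - b + a) ?_
  have hb' : minimalPeriod f w - b + b = minimalPeriod f w :=
    Nat.sub_add_cancel (Finset.mem_range.1 hb).le
  rw [iterate_add_apply, ← hab, ← iterate_add_apply, hb', iterate_minimalPeriod]

lemma minimalPeriod_add_le (hf : ∀ z ∈ S, f z ∈ S)
    (hN : ∀ T : Finset α, ↑T ⊆ S → T.card ≤ N) {z w : α} (hz : z ∈ S) (hw : w ∈ S)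
    (hzw : ∀ k, f^[k] z ≠ w) :
    minimalPeriod f z + minimalPeriod f w ≤ N := by
  rw [← card_orbitFinset, ← card_orbitFinset,
    ← Finset.card_union_of_disjoint (disjoint_orbitFinset hzw)]
  refine hN _ ?_
  rw [Finset.coe_union]
  exact Set.union_subset (orbitFinset_subset hf hz) (orbitFinset_subset hf hw)

lemma minimalPeriod_add_add_le (hf : ∀ z ∈ S, f z ∈ S)
    (hN : ∀ T : Finset α, ↑T ⊆ S → T.card ≤ N) {z w u : α} (hz : z ∈ S) (hw : w ∈ S) (hu : u ∈ S)
    (hzw : ∀ k, f^[k] z ≠ w)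
    (hzu : ∀ k, f^[k] z ≠ u) (hwu : ∀ k, f^[k] w ≠ u) :
    minimalPeriod f z + minimalPeriod f w + minimalPeriod f u ≤ N := by
  rw [← card_orbitFinset, ← card_orbitFinset, ← card_orbitFinset,
    ← Finset.card_union_of_disjoint (disjoint_orbitFinset hzw),
    ← Finset.card_union_of_disjoint (Finset.disjoint_union_left.2
      ⟨disjoint_orbitFinset hzu, disjoint_orbitFinset hwu⟩)]
  refine hN _ ?_
  rw [Finset.coe_union, Finset.coe_union]
  exact Set.union_subset (Set.union_subset (orbitFinset_subset hf hz) (orbitFinset_subset hf hw))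
    (orbitFinset_subset hf hu)

end Orbits

section Arithmetic

variable {A : Type*} [Group A] {r : ℕ} [Fact r.Prime] {a : A}

lemma pow_eq_self_iff_zmod_pow_eq_one (ha : a ^ r = 1) (ha1 : a ≠ 1) (q k : ℕ) :
    a ^ q ^ k = a ↔ (q : ZMod r) ^ k = 1 := by
  have h := orderOf_eq_prime ha ha1
  conv_lhs => rhs; rw [← pow_one a]
  rw [pow_eq_pow_iff_modEq, h, ← ZMod.natCast_eq_natCast_iff]
  simp

lemma pow_eq_inv_iff_zmod_pow_eq_neg_one (ha : a ^ r = 1) (ha1 : a ≠ 1) (q k : ℕ) :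
    a ^ q ^ k = a⁻¹ ↔ (q : ZMod r) ^ k = -1 := by
  have h := orderOf_eq_prime ha ha1
  rw [eq_inv_iff_mul_eq_one, ← pow_succ, ← orderOf_dvd_iff_pow_eq_one, h,
    ← ZMod.natCast_eq_zero_iff, eq_neg_iff_add_eq_zero]
  simp

lemma orderOf_dvd_two_mul_of_pow_eq_neg_one (hr : r ≠ 2) {x : ZMod r} {k : ℕ} (h : x ^ k = -1) :
    orderOf x ∣ 2 * k ∧ ¬ orderOf x ∣ k := by
  have : Fact (2 < r) := ⟨lt_of_le_of_ne (Fact.out : r.Prime).two_le hr.symm⟩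
  constructor
  · rw [orderOf_dvd_iff_pow_eq_one, mul_comm, pow_mul, h]
    ring
  · rw [orderOf_dvd_iff_pow_eq_one, h]
    exact ZMod.neg_one_ne_one

lemma orderOf_pos_of_ne_zero {x : ZMod r} (hx : x ≠ 0) : 0 < orderOf x :=
  Nat.pos_of_dvd_of_pos (orderOf_dvd_of_pow_eq_one (ZMod.pow_card_sub_one_eq_one hx))
    (Nat.sub_pos_of_lt (Fact.out : r.Prime).one_lt)

lemma orderOf_eq_of_isLeast_dvd_pow_sub_one {q i : ℕ} (hq : 0 < q)
    (h : IsLeast {a : ℕ | 0 < a ∧ r ∣ q ^ a - 1} i) : orderOf (q : ZMod r) = i := by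
  have hdvd (a : ℕ) : r ∣ q ^ a - 1 ↔ (q : ZMod r) ^ a = 1 := by
    rw [← ZMod.natCast_eq_zero_iff, Nat.cast_sub (Nat.one_le_pow _ _ hq), sub_eq_zero]
    simp
  obtain ⟨⟨hi, hi'⟩, hmin⟩ := h
  refine ((orderOf_eq_iff hi).2 ⟨(hdvd i).1 hi', fun m hm hm0 h => ?_⟩)
  exact absurd (hmin ⟨hm0, (hdvd m).2 h⟩) (not_le.2 hm)

end Arithmetic

/-- A set of at most eight pairs of `r`-th and `s`-th roots of unity, closed under inversion and
under the `q`-th power map, restricts the order of `q` modulo `s` in terms of its order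
modulo `r`. -/
lemma zmod_pow_of_stable_root_pairs {A : Type*} [CommGroup A] {q r s : ℕ} [Fact r.Prime]
    [Fact s.Prime] (hr : r ≠ 2) (hs : s ≠ 2) (hqr : (q : ZMod r) ≠ 0) (hqs : (q : ZMod s) ≠ 0)
    {S : Set (A × A)} (hSr : ∀ z ∈ S, z.1 ^ r = 1) (hSs : ∀ z ∈ S, z.2 ^ s = 1)
    (hS : ∀ T : Finset (A × A), ↑T ⊆ S → T.card ≤ 8) (hfrob : ∀ z ∈ S, z ^ q ∈ S)
    (hinv : ∀ z ∈ S, z⁻¹ ∈ S) (h₁ : ∃ z ∈ S, z.1 ≠ 1) (h₂ : ∃ z ∈ S, z.2 ≠ 1) :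
    (orderOf (q : ZMod r) = 8 → (q : ZMod s) ^ 4 = -1) ∧
    (orderOf (q : ZMod r) = 4 → (q : ZMod s) ^ 4 = 1) ∧
    (orderOf (q : ZMod r) = 6 → (q : ZMod s) ^ 2 = 1 ∨ (q : ZMod s) ^ 3 = -1) ∧
    (orderOf (q : ZMod r) = 3 → (q : ZMod s) ^ 2 = 1 ∨ (q : ZMod s) ^ 3 = 1) ∧
    (orderOf (q : ZMod r) = 1 ∨ orderOf (q : ZMod r) = 2 →
      (q : ZMod s) ^ 4 = 1 ∨ (q : ZMod s) ^ 6 = 1) := by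
  classical
  obtain ⟨z, hz, hz1⟩ := h₁
  obtain ⟨w, hw, hw2⟩ := h₂
  have hi := orderOf_pos_of_ne_zero hqr
  have hj := orderOf_pos_of_ne_zero hqs
  generalize hidef : orderOf (q : ZMod r) = i at hi ⊢
  generalize hjdef : orderOf (q : ZMod s) = j at hj
  have hnegr {k : ℕ} (h : (q : ZMod r) ^ k = -1) : i ∣ 2 * k ∧ ¬ i ∣ k :=
    hidef ▸ orderOf_dvd_two_mul_of_pow_eq_neg_one hr h
  have hnegs {k : ℕ} (h : (q : ZMod s) ^ k = -1) : j ∣ 2 * k ∧ ¬ j ∣ k :=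
    hjdef ▸ orderOf_dvd_two_mul_of_pow_eq_neg_one hs h
  have hσ (k : ℕ) : j ∣ k ↔ (q : ZMod s) ^ k = 1 := hjdef ▸ orderOf_dvd_iff_pow_eq_one
  let f : A × A → A × A := fun u => u ^ q
  have hfS : ∀ u ∈ S, f u ∈ S := hfrob
  have hiter (k : ℕ) (u : A × A) : f^[k] u = u ^ q ^ k := congrFun (pow_iterate q k) u
  have hdvd {u : A × A} (hu : u ∈ S) (k : ℕ) :
      minimalPeriod f u ∣ k ↔ (u.1 ≠ 1 → i ∣ k) ∧ (u.2 ≠ 1 → j ∣ k) := by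
    rw [← isPeriodicPt_iff_minimalPeriod_dvd, IsPeriodicPt, IsFixedPt, hiter, Prod.ext_iff,
      Prod.pow_fst, Prod.pow_snd]
    refine and_congr ?_ ?_
    · by_cases h : u.1 = 1
      · simp [h]
      · rw [pow_eq_self_iff_zmod_pow_eq_one (hSr u hu) h, ← orderOf_dvd_iff_pow_eq_one]
        simp [h, hidef]
    · by_cases h : u.2 = 1
      · simp [h]
      · rw [pow_eq_self_iff_zmod_pow_eq_one (hSs u hu) h, ← orderOf_dvd_iff_pow_eq_one]
        simp [h, hjdef]
  have hper {u : A × A} (hu : u ∈ S) : u ∈ periodicPts f := by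
    refine mk_mem_periodicPts (Nat.mul_pos hi hj) (isPeriodicPt_iff_minimalPeriod_dvd.2 ?_)
    exact (hdvd hu _).2 ⟨fun _ => Nat.dvd_mul_right _ _, fun _ => Nat.dvd_mul_left _ _⟩
  have hpos {u : A × A} (hu : u ∈ S) : 0 < minimalPeriod f u :=
    minimalPeriod_pos_of_mem_periodicPts (hper hu)
  have hle {u : A × A} (hu : u ∈ S) : minimalPeriod f u ≤ 8 := by
    rw [← card_orbitFinset]
    exact hS _ (orbitFinset_subset hfS hu)
  have hN1 {u : A × A} (hu : u ∈ S) (h : u.1 ≠ 1) : i ∣ minimalPeriod f u :=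
    ((hdvd hu _).1 dvd_rfl).1 h
  have hN2 {u : A × A} (hu : u ∈ S) (h : u.2 ≠ 1) : j ∣ minimalPeriod f u :=
    ((hdvd hu _).1 dvd_rfl).2 h
  have hNinv {u : A × A} (hu : u ∈ S) : minimalPeriod f u⁻¹ = minimalPeriod f u := by
    refine Nat.dvd_antisymm ?_ ?_
    · rw [hdvd (hinv u hu)]
      exact ⟨fun h => hN1 hu (by simpa using h), fun h => hN2 hu (by simpa using h)⟩
    · rw [hdvd hu]
      exact ⟨fun h => hN1 (hinv u hu) (by simpa using h),
        fun h => hN2 (hinv u hu) (by simpa using h)⟩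
  have hneg1 {u : A × A} (hu : u ∈ S) {k : ℕ} (h : f^[k] u = u⁻¹) (h1 : u.1 ≠ 1) :
      (q : ZMod r) ^ k = -1 := by
    rw [hiter] at h
    exact (pow_eq_inv_iff_zmod_pow_eq_neg_one (hSr u hu) h1 q k).1 (congrArg Prod.fst h)
  have hneg2 {u : A × A} (hu : u ∈ S) {k : ℕ} (h : f^[k] u = u⁻¹) (h1 : u.2 ≠ 1) :
      (q : ZMod s) ^ k = -1 := by
    rw [hiter] at h
    exact (pow_eq_inv_iff_zmod_pow_eq_neg_one (hSs u hu) h1 q k).1 (congrArg Prod.snd h)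
  have hself {u : A × A} (hu : u ∈ S) (h : 4 < minimalPeriod f u) : ∃ k, f^[k] u = u⁻¹ := by
    by_contra! hne
    have := minimalPeriod_add_le hfS hS hu (hinv u hu) hne
    rw [hNinv hu] at this
    omega
  have hfst1 {u : A × A} (h : u.1 = 1) (k : ℕ) : (f^[k] u).1 = 1 := by
    rw [hiter, Prod.pow_fst, h, one_pow]
  have hw1 (h : w.1 = 1) : minimalPeriod f w = j :=
    Nat.dvd_antisymm ((hdvd hw _).2 ⟨fun h' => absurd h h', fun _ => dvd_rfl⟩) (hN2 hw hw2)
  have hwz (h : w.1 = 1) (k : ℕ) : f^[k] w ≠ z := fun hk => hz1 (hk ▸ hfst1 h k)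
  have hwz' (h : w.1 = 1) (k : ℕ) : f^[k] w ≠ z⁻¹ := fun hk => by
    have := hfst1 h k
    rw [hk] at this
    exact hz1 (by simpa using this)
  have hzpos := hpos hz
  have hwpos := hpos hw
  have hzle := hle hz
  have hwle := hle hw
  have hjw := hN2 hw hw2
  refine ⟨?_, ?_, ?_, ?_, fun hi12 => ?_⟩
  · rintro rfl
    have hz8 := hN1 hz hz1
    have hw1' : w.1 ≠ 1 := fun h => by
      have := minimalPeriod_add_le hfS hS hw hz (hwz h)
      omega
    have hw8 := hN1 hw hw1'
    obtain ⟨k, hk⟩ := hself hw (by omega)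
    have hk8 := hnegr (hneg1 hw hk hw1')
    have hj8 : (q : ZMod s) ^ 8 = 1 := (hσ 8).1 (by rwa [show minimalPeriod f w = 8 by omega] at hjw)
    obtain ⟨t, rfl⟩ : ∃ t, k = 8 * t + 4 := ⟨k / 8, by omega⟩
    have := hneg2 hw hk hw2
    rwa [pow_add, pow_mul, hj8, one_pow, one_mul] at this
  · rintro rfl
    rw [← hσ]
    by_cases hw1' : w.1 = 1
    · have hz4 := hN1 hz hz1
      have := minimalPeriod_add_le hfS hS hw hz (hwz hw1')
      rw [hw1 hw1'] at this
      have hj3 : j ≠ 3 := by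
        rintro rfl
        by_cases hex : ∃ k, f^[k] w = w⁻¹
        · obtain ⟨k, hk⟩ := hex
          have := hnegs (hneg2 hw hk hw2)
          omega
        · push Not at hex
          have := minimalPeriod_add_add_le hfS hS hw (hinv w hw) hz
            hex (hwz hw1') (fun k hk => hz1 (hk ▸ hfst1 (by simp [hw1']) k))
          rw [hNinv hw, hw1 hw1'] at this
          omega
      have : j = 1 ∨ j = 2 ∨ j = 4 := by omega
      rcases this with h | h | h <;> rw [h] <;> norm_num
    · have hw4 := hN1 hw hw1'
      have : minimalPeriod f w = 4 ∨ minimalPeriod f w = 8 := by omega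
      rcases this with h | h
      · rwa [h] at hjw
      · obtain ⟨k, hk⟩ := hself hw (by omega)
        have hk4 := hnegr (hneg1 hw hk hw1')
        have hks := hnegs (hneg2 hw hk hw2)
        rw [h] at hjw
        have hgcd := Nat.dvd_gcd hjw hks.1
        have : Nat.gcd 8 (2 * k) = 4 := by
          obtain ⟨t, rfl⟩ : ∃ t, k = 4 * t + 2 := ⟨k / 4, by omega⟩
          rw [show 2 * (4 * t + 2) = 4 + 8 * t by ring]
          simp
        rwa [this] at hgcd
  · rintro rfl
    by_cases hw1' : w.1 = 1
    · left
      have hz6 := hN1 hz hz1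
      have := minimalPeriod_add_le hfS hS hw hz (hwz hw1')
      rw [hw1 hw1'] at this
      rw [← hσ]
      have : j = 1 ∨ j = 2 := by omega
      rcases this with h | h <;> rw [h]
      norm_num
    · right
      have hw6 := hN1 hw hw1'
      obtain ⟨k, hk⟩ := hself hw (by omega)
      have hk6 := hnegr (hneg1 hw hk hw1')
      have hj6 : (q : ZMod s) ^ 6 = 1 :=
        (hσ 6).1 (by rwa [show minimalPeriod f w = 6 by omega] at hjw)
      obtain ⟨t, rfl⟩ : ∃ t, k = 6 * t + 3 := ⟨k / 6, by omega⟩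
      have := hneg2 hw hk hw2
      rwa [pow_add, pow_mul, hj6, one_pow, one_mul] at this
  · rintro rfl
    have hnot {u : A × A} (hu : u ∈ S) (h : u.1 ≠ 1) (k : ℕ) : f^[k] u ≠ u⁻¹ := fun hk => by
      have := hnegr (hneg1 hu hk h)
      omega
    by_cases hw1' : w.1 = 1
    · left
      have hz3 := hN1 hz hz1
      have := minimalPeriod_add_add_le hfS hS hw hz (hinv z hz)
        (hwz hw1') (hwz' hw1') (hnot hz hz1)
      rw [hNinv hz, hw1 hw1'] at this
      rw [← hσ]
      have : j = 1 ∨ j = 2 := by omega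
      rcases this with h | h <;> rw [h]
      norm_num
    · right
      have hw3 := hN1 hw hw1'
      have := minimalPeriod_add_le hfS hS hw (hinv w hw) (hnot hw hw1')
      rw [hNinv hw] at this
      rw [← hσ]
      rwa [show minimalPeriod f w = 3 by omega] at hjw
  · rw [← hσ, ← hσ]
    have hjle : j ≤ minimalPeriod f w := Nat.le_of_dvd hwpos hjw
    have hj578 : j ≠ 5 ∧ j ≠ 7 ∧ j ≠ 8 := by
      by_contra hj'
      obtain ⟨k, hk⟩ := hself hw (by omega)
      have hks := hnegs (hneg2 hw hk hw2)
      obtain rfl : j = 8 := by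
        have : j = 5 ∨ j = 7 ∨ j = 8 := by omega
        rcases this with rfl | rfl | rfl <;> omega
      by_cases hw1' : w.1 = 1
      · have := minimalPeriod_add_le hfS hS hw hz (hwz hw1')
        omega
      · have := hnegr (hneg1 hw hk hw1')
        rcases hi12 with rfl | rfl <;> omega
    have : j = 1 ∨ j = 2 ∨ j = 3 ∨ j = 4 ∨ j = 6 := by omega
    rcases this with h | h | h | h | h <;> rw [h] <;> norm_num

/-- Commuting elements of odd prime orders `r` and `s` of the symplectic group in dimension eight
restrict the order of `q` modulo `s` in terms of its order modulo `r`. -/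
lemma zmod_pow_of_commute_symplecticGroup {F : Type*} (K : Type*) [Field F] [Fintype F]
    [Field K] [IsAlgClosed K] [Algebra F K] {q : ℕ} (hF : Fintype.card F = q)
    {r s : ℕ} [Fact r.Prime] [Fact s.Prime] (hr : r ≠ 2) (hs : s ≠ 2)
    (hqr : (q : ZMod r) ≠ 0) (hqs : (q : ZMod s) ≠ 0) {X Y : symplecticGroup (Fin 4) F}
    (hXY : Commute X Y) (hXr : X ^ r = 1) (hYs : Y ^ s = 1) (hX1 : X ≠ 1) (hY1 : Y ≠ 1) :
    (orderOf (q : ZMod r) = 8 → (q : ZMod s) ^ 4 = -1) ∧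
    (orderOf (q : ZMod r) = 4 → (q : ZMod s) ^ 4 = 1) ∧
    (orderOf (q : ZMod r) = 6 → (q : ZMod s) ^ 2 = 1 ∨ (q : ZMod s) ^ 3 = -1) ∧
    (orderOf (q : ZMod r) = 3 → (q : ZMod s) ^ 2 = 1 ∨ (q : ZMod s) ^ 3 = 1) ∧
    (orderOf (q : ZMod r) = 1 ∨ orderOf (q : ZMod r) = 2 →
      (q : ZMod s) ^ 4 = 1 ∨ (q : ZMod s) ^ 6 = 1) := by
  have hcast {t : ℕ} (ht : t.Prime) (hqt : (q : ZMod t) ≠ 0) : (t : K) ≠ 0 := by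
    intro h
    have htF : (t : F) = 0 := (algebraMap F K).injective (by simpa using h)
    obtain ⟨p, hp⟩ := CharP.exists F
    obtain ⟨n, hpp, hcard⟩ := FiniteField.card F p
    have hpt : p = t := (Nat.prime_dvd_prime_iff_eq hpp ht).1 ((CharP.cast_eq_zero_iff F p t).1 htF)
    refine hqt ((ZMod.natCast_eq_zero_iff _ _).2 ?_)
    rw [← hF, hcard, hpt]
    exact dvd_pow_self t n.ne_zero
  have hpow {M : symplecticGroup (Fin 4) F} {k : ℕ} (h : M ^ k = 1) :
      M.1.map (algebraMap F K) ^ k = 1 := by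
    rw [← Matrix.map_pow, ← SubmonoidClass.coe_pow, h, Submonoid.coe_one]
    exact Matrix.map_one _ (map_zero _) (map_one _)
  have hne {M : symplecticGroup (Fin 4) F} (h : M ≠ 1) :
      M.1.map (algebraMap F K) ≠ 1 := fun h' => by
    rw [← Matrix.map_one (algebraMap F K) (map_zero _) (map_one _)] at h'
    exact h (Subtype.ext (map_injective (algebraMap F K).injective h'))
  have hcomm : Commute (X.1.map (algebraMap F K))
      (Y.1.map (algebraMap F K)) := by
    have h : X.1 * Y.1 = Y.1 * X.1 := congrArg Subtype.val hXY.eq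
    rw [Commute, SemiconjBy, ← Matrix.map_mul, ← Matrix.map_mul, h]
  have hXs := SymplecticGroup.map_mem X.2 (algebraMap F K)
  have hYsp := SymplecticGroup.map_mem Y.2 (algebraMap F K)
  have hfrob (z : Kˣ × Kˣ) := frobenius_mem_jointSpectrum X.1 Y.1 (z := z)
  have hAr := hpow hXr
  have hBs := hpow hYs
  have hA1 := hne hX1
  have hB1 := hne hY1
  rw [hF] at hfrob
  generalize X.1.map (algebraMap F K) = A at *
  generalize Y.1.map (algebraMap F K) = B at *
  have hrK := hcast Fact.out hqr
  have hsK := hcast Fact.out hqs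
  have hsnd : ∃ z ∈ jointSpectrum A B, z.2 ≠ 1 := by
    obtain ⟨z, hz, hz1⟩ := exists_mem_jointSpectrum_fst_ne_one hcomm.symm hsK hBs
      (NeZero.ne r) hAr hB1
    exact ⟨z.swap, swap_mem_jointSpectrum hz, hz1⟩
  have hcard (T : Finset (Kˣ × Kˣ)) (hT : ↑T ⊆ jointSpectrum A B) : T.card ≤ 8 :=
    card_le_of_subset_jointSpectrum hcomm T hT
  exact zmod_pow_of_stable_root_pairs hr hs hqr hqs
    (fun z hz => fst_pow_eq_one_of_mem_jointSpectrum hz hAr)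
    (fun z hz => snd_pow_eq_one_of_mem_jointSpectrum hz hBs) hcard hfrob
    (fun z hz => inv_mem_jointSpectrum_of_mem_symplecticGroup hXs hYsp hcomm hrK hAr hsK hBs hz)
    (exists_mem_jointSpectrum_fst_ne_one hcomm hrK hAr (NeZero.ne s) hBs hA1) hsnd

/-- Lemma 2.6, `PSp₈(q)` case: bounds on primes `s ≠ p` dividing the order of the
centralizer of an element of odd prime order `r ≠ p` in `PSp₈(q)`, in terms of
`i = Φ(r,q)`, the least `a ≥ 1` with `r ∣ qᵃ - 1`. -/
theorem PSp8_centralizer_prime_divisor {p f q : ℕ} (hp : p.Prime) (hf : 0 < f)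
    (hq : q = p ^ f) (F : Type*) [Field F] [Fintype F] (hF : Fintype.card F = q)
    {r : ℕ} (hr : r.Prime) (hrodd : Odd r) (hrp : r ≠ p)
    (x : Matrix.symplecticGroup (Fin 4) F ⧸
      Subgroup.center (Matrix.symplecticGroup (Fin 4) F))
    (hx : orderOf x = r)
    {i : ℕ} (hi : IsLeast {a : ℕ | 0 < a ∧ r ∣ q ^ a - 1} i)
    {s : ℕ} (hs : s.Prime) (hsp : s ≠ p)
    (hsdvd : s ∣ Nat.card (Subgroup.centralizer ({x} : Set _))) :
    (i = 8 → s ∣ q ^ 4 + 1) ∧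
    (i = 4 → s ∣ q ^ 4 - 1) ∧
    (i = 6 → s ∣ (q - 1) * (q ^ 3 + 1)) ∧
    (i = 3 → s ∣ (q + 1) * (q ^ 3 - 1)) ∧
    (i = 1 ∨ i = 2 → s ∣ (q ^ 2 + 1) * (q ^ 6 - 1)) := by
  have := Fact.mk hr
  have := Fact.mk hs
  have hq0 : 0 < q := hq ▸ pow_pos hp.pos f
  have hqne {t : ℕ} (ht : t.Prime) (htp : t ≠ p) : (q : ZMod t) ≠ 0 := by
    rw [Ne, ZMod.natCast_eq_zero_iff, hq]
    exact fun h => htp ((Nat.prime_dvd_prime_iff_eq ht hp).1 (ht.dvd_of_dvd_pow h))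
  have hr2 : r ≠ 2 := by
    rintro rfl
    exact absurd hrodd (by decide)
  have hsub {a : ℕ} (h : (q : ZMod s) ^ a = 1) : s ∣ q ^ a - 1 := by
    rw [← ZMod.natCast_eq_zero_iff, Nat.cast_sub (Nat.one_le_pow _ _ hq0), sub_eq_zero]
    simpa using h
  have hadd {a : ℕ} (h : (q : ZMod s) ^ a = -1) : s ∣ q ^ a + 1 := by
    rw [← ZMod.natCast_eq_zero_iff]
    simp [h]
  suffices h : (i = 8 → (q : ZMod s) ^ 4 = -1) ∧ (i = 4 → (q : ZMod s) ^ 4 = 1) ∧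
      (i = 6 → (q : ZMod s) ^ 2 = 1 ∨ (q : ZMod s) ^ 3 = -1) ∧
      (i = 3 → (q : ZMod s) ^ 2 = 1 ∨ (q : ZMod s) ^ 3 = 1) ∧
      (i = 1 ∨ i = 2 → (q : ZMod s) ^ 4 = 1 ∨ (q : ZMod s) ^ 6 = 1) by
    obtain ⟨h8, h4, h6, h3, h12⟩ := h
    obtain ⟨c, rfl⟩ : ∃ c, q = c + 1 := ⟨q - 1, by omega⟩
    refine ⟨fun hi => hadd (h8 hi), fun hi => hsub (h4 hi), fun hi => ?_, fun hi => ?_,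
      fun hi => ?_⟩
    · rcases h6 hi with h | h
      · refine (hsub h).trans ⟨(c + 1) ^ 2 - (c + 1) + 1, ?_⟩
        zify [hq0, Nat.one_le_pow 2 (c + 1) hq0, Nat.le_self_pow two_ne_zero (c + 1)]
        ring
      · exact (hadd h).mul_left _
    · rcases h3 hi with h | h
      · refine (hsub h).trans ⟨(c + 1) ^ 2 + (c + 1) + 1, ?_⟩
        zify [hq0, Nat.one_le_pow 2 (c + 1) hq0, Nat.one_le_pow 3 (c + 1) hq0]
        ring
      · exact (hsub h).mul_left _
    · rcases h12 hi with h | h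
      · refine (hsub h).trans ⟨(c + 1) ^ 4 + (c + 1) ^ 2 + 1, ?_⟩
        zify [hq0, Nat.one_le_pow 4 (c + 1) hq0, Nat.one_le_pow 6 (c + 1) hq0]
        ring
      · exact (hsub h).mul_left _
  rw [← orderOf_eq_of_isLeast_dvd_pow_sub_one hq0 hi]
  by_cases hs2 : s = 2
  · subst hs2
    have hone : (q : ZMod 2) = 1 := by
      rw [← Nat.cast_one, ZMod.natCast_eq_natCast_iff', Nat.one_mod]
      exact Nat.mod_two_ne_zero.1 fun h => hqne hs hsp
        ((ZMod.natCast_eq_zero_iff _ _).2 (Nat.dvd_of_mod_eq_zero h))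
    rw [hone]
    simp [CharTwo.neg_eq]
  have hsodd : Odd s := hs.odd_of_ne_two hs2
  have hZ : ∀ z ∈ Subgroup.center (Matrix.symplecticGroup (Fin 4) F), z ^ 2 = 1 :=
    fun z hz => sq_eq_one_of_mem_center_symplecticGroup hz
  obtain ⟨X, rfl, hXr⟩ := exists_lift_pow_eq_one hZ hrodd x (hx ▸ pow_orderOf_eq_one x)
  obtain ⟨⟨y, hyx⟩, hy⟩ := exists_prime_orderOf_dvd_card' s hsdvd
  rw [Subgroup.orderOf_mk] at hy
  obtain ⟨Y, rfl, hYs⟩ := exists_lift_pow_eq_one hZ hsodd y (hy ▸ pow_orderOf_eq_one y)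
  have hXY : Commute X Y := commute_of_commute_quotient_center hZ hrodd hXr
    (Subgroup.mem_centralizer_singleton_iff.1 hyx).symm
  have hX1 : X ≠ 1 := by
    rintro rfl
    exact hr.one_lt.ne' (by simpa using hx.symm)
  have hY1 : Y ≠ 1 := by
    rintro rfl
    exact hs.one_lt.ne' (by simpa using hy.symm)
  exact zmod_pow_of_commute_symplecticGroup (AlgebraicClosure F) hF hr2 hs2 (hqne hr hrp)
    (hqne hs hsp) hXY hXr hYs hX1 hY1
end

section
/- Let q = p^f be a prime power, let F_q be a finite field with q elements, let m ≥ 2, and let G = PSp_{2m}(q) be the quotient of Sp_{2m}(q) = Matrix.symplecticGroup (Fin m) F_q by its center. Let x ∈ G be an element of order p and let s be a prime dividing the cardinality of the centralizer of x in G. Then s divides the cardinality of Sp_{2m−2}(q) = Matrix.symplecticGroup (Fin (m−1)) F_q. -/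
open Matrix

namespace SymplecticGroup

section Form

variable {l F : Type*} [DecidableEq l] [Fintype l] [Field F]

variable (l F) in
/-- The standard symplectic form on `F ^ (2 l)`. -/
noncomputable def form : LinearMap.BilinForm F (l ⊕ l → F) := Matrix.toBilin' (J l F)

theorem form_apply (v w : l ⊕ l → F) : form l F v w = v ⬝ᵥ J l F *ᵥ w :=
  Matrix.toBilin'_apply' _ _ _

theorem form_single (i j : l ⊕ l) :
    form l F (Pi.single i 1) (Pi.single j 1) = J l F i j := by
  rw [form, Matrix.toBilin'_single]

theorem form_nondegenerate : (form l F).Nondegenerate :=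
  Matrix.Nondegenerate.toBilin'
    (Matrix.nondegenerate_of_det_ne_zero (isUnit_det_J l F).ne_zero)

theorem form_self (v : l ⊕ l → F) : form l F v v = 0 := by
  rw [form_apply, J, fromBlocks_mulVec]
  simp [dotProduct, neg_mulVec, mul_comm]

theorem form_swap (v w : l ⊕ l → F) : form l F w v = -form l F v w := by
  have h := form_self (v + w)
  simp only [map_add, LinearMap.add_apply, form_self] at h
  linear_combination h

theorem exists_form_ne_zero {v : l ⊕ l → F} (hv : v ≠ 0) : ∃ w, form l F v w ≠ 0 := by
  by_contra! h
  exact hv (form_nondegenerate.1 v h)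

theorem toMatrix'_mem_iff (T : Module.End F (l ⊕ l → F)) :
    LinearMap.toMatrix' T ∈ symplecticGroup l F ↔
      ∀ v w, form l F (T v) (T w) = form l F v w := by
  rw [mem_iff', ← (Matrix.toBilin' (R₁ := F)).injective.eq_iff,
    ← Matrix.toBilin'_comp, Matrix.toLin'_toMatrix', LinearMap.ext_iff₂]
  rfl

theorem form_smul (g : symplecticGroup l F) (v w : l ⊕ l → F) :
    form l F (g • v) (g • w) = form l F v w := by
  have h := (toMatrix'_mem_iff (Matrix.toLin' (g : Matrix (l ⊕ l) (l ⊕ l) F))).1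
    (by rw [LinearMap.toMatrix'_toLin']; exact g.2) v w
  exact h

theorem smul_eq_mulVec (g : symplecticGroup l F) (v : l ⊕ l → F) :
    g • v = (g : Matrix (l ⊕ l) (l ⊕ l) F) *ᵥ v := rfl

theorem ext_smul {g h : symplecticGroup l F} (H : ∀ v : l ⊕ l → F, g • v = h • v) : g = h :=
  Subtype.ext (Matrix.toLin'.injective (LinearMap.ext H))

theorem toLin'_pow_eq_one {g : symplecticGroup l F} {n : ℕ} (h : g ^ n = 1) :
    Matrix.toLin' (g : Matrix (l ⊕ l) (l ⊕ l) F) ^ n = 1 := by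
  rw [← Matrix.toLin'_pow, ← SubmonoidClass.coe_pow, h, OneMemClass.coe_one, Matrix.toLin'_one]
  rfl

/-- The symplectic transvection `v ↦ v + c ω(v, a) a`. -/
noncomputable def transvection (a : l ⊕ l → F) (c : F) : symplecticGroup l F :=
  ⟨LinearMap.toMatrix' (LinearMap.id + c • ((form l F).flip a).smulRight a), by
    rw [toMatrix'_mem_iff]
    intro v w
    simp [form_self, form_swap w a]
    ring⟩

theorem transvection_smul (a : l ⊕ l → F) (c : F) (v : l ⊕ l → F) :
    transvection a c • v = v + (c * form l F v a) • a := by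
  rw [smul_eq_mulVec, transvection, ← Matrix.toLin'_apply, Matrix.toLin'_toMatrix']
  simp [smul_smul]

theorem exists_transvection {v w : l ⊕ l → F} (h : form l F v w ≠ 0) :
    ∃ c, transvection (w - v) c • v = w := by
  refine ⟨(form l F v w)⁻¹, ?_⟩
  rw [transvection_smul]
  simp [form_self, h]

/-- The symplectic group is transitive on nonzero vectors. -/
theorem exists_smul_eq {v w : l ⊕ l → F} (hv : v ≠ 0) (hw : w ≠ 0) :
    ∃ g : symplecticGroup l F, g • v = w := by
  obtain ⟨z, hz, hz'⟩ : ∃ z, form l F v z ≠ 0 ∧ form l F z w ≠ 0 := by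
    obtain ⟨a, ha⟩ := exists_form_ne_zero hv
    obtain ⟨b, hb⟩ := exists_form_ne_zero hw
    rw [form_swap, neg_ne_zero] at hb
    by_cases ha' : form l F a w = 0
    · by_cases hb' : form l F v b = 0
      · exact ⟨a + b, by simpa [hb'] using ha, by simpa [ha'] using hb⟩
      · exact ⟨b, hb', hb⟩
    · exact ⟨a, ha, ha'⟩
  obtain ⟨c, hc⟩ := exists_transvection hz
  obtain ⟨d, hd⟩ := exists_transvection hz'
  exact ⟨transvection _ d * transvection _ c, by rw [mul_smul, hc, hd]⟩

/-- The stabilizer of a vector `v` is transitive on the hyperbolic pairs starting with `v`. -/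
theorem exists_smul_eq_of_form_eq_one {v w w' : l ⊕ l → F} (h : form l F v w = 1)
    (h' : form l F v w' = 1) : ∃ g : symplecticGroup l F, g • v = v ∧ g • w = w' := by
  have key : ∀ {a b}, form l F v a = 1 → form l F v b = 1 → form l F a b ≠ 0 →
      ∃ g : symplecticGroup l F, g • v = v ∧ g • a = b := by
    intro a b ha hb hab
    obtain ⟨c, hc⟩ := exists_transvection hab
    exact ⟨_, by simp [transvection_smul, ha, hb], hc⟩
  obtain ⟨g, hg, hg'⟩ := key (a := w) (b := v + w) h (by simp [form_self, h])
    (by simp [form_self, form_swap v w, h])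
  by_cases hw : form l F w w' = 0
  · obtain ⟨k, hk, hk'⟩ := key (a := v + w) (b := w') (by simp [form_self, h]) h'
      (by simp [h', hw])
    exact ⟨k * g, by rw [mul_smul, hg, hk], by rw [mul_smul, hg', hk']⟩
  · exact key h h' hw

/-- The symplectic group is transitive on hyperbolic pairs. -/
theorem exists_smul_pair_eq {v w v' w' : l ⊕ l → F} (h : form l F v w = 1)
    (h' : form l F v' w' = 1) : ∃ g : symplecticGroup l F, g • v = v' ∧ g • w = w' := by
  have hv : v ≠ 0 := by rintro rfl; simp at h
  have hv' : v' ≠ 0 := by rintro rfl; simp at h'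
  obtain ⟨g, rfl⟩ := exists_smul_eq hv hv'
  obtain ⟨k, hk, hk'⟩ := exists_smul_eq_of_form_eq_one
    (v := g • v) (w := g • w) (by rwa [form_smul]) h'
  exact ⟨k * g, by rw [mul_smul, hk], by rw [mul_smul, hk']⟩

theorem card_pow_sub_one_dvd_card [Finite F] [Nonempty l] :
    Nat.card F ^ (2 * Fintype.card l) - 1 ∣ Nat.card (symplecticGroup l F) := by
  classical
  have := Fintype.ofFinite F
  obtain ⟨v, hv⟩ := exists_ne (0 : l ⊕ l → F)
  have horb : MulAction.orbit (symplecticGroup l F) v = {0}ᶜ := by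
    ext w
    refine ⟨?_, fun hw ↦ exists_smul_eq hv hw⟩
    rintro ⟨g, rfl⟩ (h : g • v = 0)
    exact hv ((smul_eq_zero_iff_eq g).1 h)
  have hc := MulAction.index_stabilizer (symplecticGroup l F) v
  rw [horb, Set.ncard_compl, Set.ncard_singleton] at hc
  have := Subgroup.index_dvd_card (MulAction.stabilizer (symplecticGroup l F) v)
  rw [hc] at this
  simpa [Nat.card_eq_fintype_card, ← two_mul] using this

theorem center_smul {z : symplecticGroup l F} (hz : z ∈ Subgroup.center (symplecticGroup l F))
    (a : l ⊕ l → F) : ∃ c : F, c * c = 1 ∧ z • a = c • a := by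
  rcases eq_or_ne a 0 with rfl | ha
  · exact ⟨1, by simp⟩
  obtain ⟨w, hw⟩ := exists_form_ne_zero ha
  have hcomm : z * transvection a 1 = transvection a 1 * z :=
    (Subgroup.mem_center_iff.1 hz _).symm
  have hz1 (v : l ⊕ l → F) : form l F v a • (z • a) = form l F (z • v) a • a := by
    have h := congrArg (· • v) hcomm
    simp only [mul_smul, transvection_smul, one_mul, smul_add, add_right_inj] at h
    rw [← h, smul_comm]
  have hw' : form l F w a ≠ 0 := by rwa [form_swap, neg_ne_zero]
  obtain ⟨c, hc⟩ : ∃ c : F, z • a = c • a := by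
    refine ⟨(form l F w a)⁻¹ * form l F (z • w) a, ?_⟩
    rw [mul_smul, ← hz1, smul_smul, inv_mul_cancel₀ hw', one_smul]
  refine ⟨c, ?_, hc⟩
  have h2 := hz1 w
  rw [hc, smul_smul] at h2
  have h3 := smul_left_injective F ha h2
  have h4 := form_smul z w a
  rw [hc, map_smul, smul_eq_mul, ← h3] at h4
  exact mul_left_cancel₀ hw' (by linear_combination h4)

theorem center_mul_self {z : symplecticGroup l F}
    (hz : z ∈ Subgroup.center (symplecticGroup l F)) : z * z = 1 := by
  refine ext_smul fun a ↦ ?_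
  obtain ⟨c, hc, h⟩ := center_smul hz a
  rw [mul_smul, h, smul_comm, h, smul_smul, hc, one_smul, one_smul]

theorem center_pow_char (p : ℕ) [Fact p.Prime] [CharP F p] {z : symplecticGroup l F}
    (hz : z ∈ Subgroup.center (symplecticGroup l F)) : z ^ p = z := by
  refine ext_smul fun a ↦ ?_
  obtain ⟨c, hc, h⟩ := center_smul hz a
  have hpow (n : ℕ) : z ^ n • a = c ^ n • a := by
    induction n with
    | zero => simp
    | succ n ih => rw [pow_succ, mul_smul, h, smul_comm, ih, smul_smul, pow_succ, mul_comm]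
  rw [hpow, h]
  rcases mul_self_eq_one_iff.1 hc with rfl | rfl
  · simp
  · rw [neg_one_pow_char]

theorem char_dvd_card (p : ℕ) [hp : Fact p.Prime] [CharP F p] [Nonempty l] [Finite F] :
    p ∣ Nat.card (symplecticGroup l F) := by
  obtain ⟨a, ha⟩ := exists_ne (0 : l ⊕ l → F)
  obtain ⟨w, hw⟩ := exists_form_ne_zero ha
  have hpow (n : ℕ) (v : l ⊕ l → F) : transvection a 1 ^ n • v = v + (n * form l F v a) • a := by
    induction n generalizing v with
    | zero => simp
    | succ n ih =>
      rw [pow_succ, mul_smul, ih, transvection_smul]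
      simp [form_self]
      module
  rw [← orderOf_eq_prime (x := transvection a (1 : F)) (p := p)]
  · exact orderOf_dvd_natCard _
  · exact ext_smul fun v ↦ by simp [hpow]
  · intro h
    have := hpow 1 w
    rw [h] at this
    rw [form_swap, neg_ne_zero] at hw
    simp [hw, ha] at this

theorem two_dvd_card [Nonempty l] [Finite F] (h2 : (2 : F) ≠ 0) :
    2 ∣ Nat.card (symplecticGroup l F) := by
  let g : symplecticGroup l F := ⟨-1, neg_mem (one_mem _)⟩
  rw [← orderOf_eq_prime (x := g) (p := 2)]
  · exact orderOf_dvd_natCard _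
  · exact Subtype.ext (by simp [g])
  · intro h
    have h : (-1 : Matrix (l ⊕ l) (l ⊕ l) F) = 1 := congrArg Subtype.val h
    obtain ⟨i⟩ := ‹Nonempty l›
    have := congrFun₂ h (.inl i) (.inl i)
    simp at this
    apply h2
    linear_combination -this

end Form

end SymplecticGroup

/-- An isometry of odd order of a nondegenerate bilinear form on an odd-dimensional space has a
nonzero fixed vector. -/
theorem Matrix.exists_mulVec_eq_self_of_isometry {n F : Type*} [Fintype n] [DecidableEq n] [Field F]
    (hn : Odd (Fintype.card n)) {A G : Matrix n n F} (hG : G.det ≠ 0) (h : Aᵀ * G * A = G)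
    {s : ℕ} (hs : Odd s) (hA : A ^ s = 1) : ∃ v ≠ 0, A *ᵥ v = v := by
  have hdet2 : A.det ^ 2 = 1 := by
    have h1 := congrArg det h
    rw [det_mul, det_mul, det_transpose] at h1
    exact mul_left_cancel₀ hG (by linear_combination h1)
  have hdet : A.det = 1 := by
    obtain ⟨k, rfl⟩ := hs
    have h1 := congrArg det hA
    rw [det_pow, det_one, pow_succ, pow_mul, hdet2] at h1
    simpa using h1
  have hAu : IsUnit A := (isUnit_iff_isUnit_det A).2 (by simp [hdet])
  have hGu : IsUnit G := (isUnit_iff_isUnit_det G).2 hG.isUnit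
  have hinv : A⁻¹.charpoly = A.charpoly := by
    obtain ⟨U, rfl⟩ := hGu
    have : A⁻¹ = U⁻¹.val * Aᵀ * U.val := by
      refine inv_eq_left_inv ?_
      rw [mul_assoc, mul_assoc, ← mul_assoc Aᵀ, h, Units.inv_mul]
    rw [this, Matrix.coe_units_inv, Matrix.charpoly_units_conj', charpoly_transpose]
  rw [charpoly_inv A hAu, hn.neg_one_pow, hdet, ← reverse_charpoly] at hinv
  have hcoeff {i : ℕ} (hi : i ≤ Fintype.card n) :
      A.charpoly.coeff i + A.charpoly.coeff (Fintype.card n - i) = 0 := by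
    nth_rewrite 1 [← hinv]
    simp [Polynomial.coeff_reverse, charpoly_natDegree_eq_dim, Polynomial.revAt_le hi]
  have heval : A.charpoly.eval 1 = 0 := by
    rw [Polynomial.eval_eq_sum_range, charpoly_natDegree_eq_dim]
    refine Finset.sum_involution (fun i _ ↦ Fintype.card n - i) ?_ ?_ ?_ ?_
    · intro i hi
      simpa using hcoeff (Nat.lt_succ_iff.1 (Finset.mem_range.1 hi))
    · intro i hi _ h
      have := Finset.mem_range.1 hi
      obtain ⟨k, hk⟩ := hn
      omega
    · intro i hi
      simp only [Finset.mem_range]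
      omega
    · intro i hi
      have := Finset.mem_range.1 hi
      omega
  rw [eval_charpoly, ← exists_mulVec_eq_zero_iff] at heval
  obtain ⟨v, hv, h⟩ := heval
  refine ⟨v, hv, ?_⟩
  simpa [sub_mulVec, sub_eq_zero, eq_comm] using h

/-- A linear endomorphism of prime order `s` without nonzero fixed vectors acts freely on the
nonzero vectors. -/
theorem Module.End.dvd_card_sub_one_of_fixedPoints {F V : Type*} [Field F] [AddCommGroup V]
    [Module F V] [Finite V] {s : ℕ} (hs : s.Prime) {T : Module.End F V} (hT : T ^ s = 1)
    (hfix : ∀ v, T v = v → v = 0) : s ∣ Nat.card F ^ Module.finrank F V - 1 := by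
  classical
  have := Fintype.ofFinite V
  have := Fact.mk hs
  have h := Equiv.Perm.card_fixedPoints_modEq (p := s) (n := 1) (f := MulAction.toEndHom (α := V) T)
    (by rw [pow_one, ← map_pow, hT, map_one])
  have h1 : Fintype.card (Function.fixedPoints (MulAction.toEndHom (α := V) T)) = 1 := by
    rw [Fintype.card_eq_one_iff]
    exact ⟨⟨0, map_zero T⟩, fun v ↦ Subtype.ext (hfix v v.2)⟩
  replace h := h.trans (congrArg (· % s) ((Fintype.card_congr (Equiv.refl _)).trans h1))
  rw [← Module.natCard_eq_pow_finrank (K := F) (V := V), Nat.card_eq_fintype_card]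
  exact (Nat.modEq_iff_dvd' Fintype.card_pos).1 h.symm

namespace SymplecticGroup

section Embedding

variable {l κ F : Type*} [DecidableEq l] [DecidableEq κ] [Field F] (e : Unit ⊕ κ ≃ l)

/-- The reordering of coordinates splitting off a hyperbolic plane. -/
def splitEquiv : (Unit ⊕ Unit) ⊕ (κ ⊕ κ) ≃ l ⊕ l :=
  (Equiv.sumSumSumComm Unit Unit κ κ).trans (Equiv.sumCongr e e)

theorem J_submatrix_splitEquiv :
    (J l F).submatrix (splitEquiv e) (splitEquiv e) = fromBlocks (J Unit F) 0 0 (J κ F) := by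
  ext i j
  rcases i with (i | i) | (i | i) <;> rcases j with (j | j) | (j | j) <;>
    simp [splitEquiv, J, Matrix.one_apply]

variable [Fintype l] [Fintype κ]

theorem mem_iff_submatrix_splitEquiv {A : Matrix (l ⊕ l) (l ⊕ l) F} :
    A ∈ symplecticGroup l F ↔
      (A.submatrix (splitEquiv e) (splitEquiv e))ᵀ * fromBlocks (J Unit F) 0 0 (J κ F) *
        A.submatrix (splitEquiv e) (splitEquiv e) = fromBlocks (J Unit F) 0 0 (J κ F) := by
  rw [mem_iff', ← J_submatrix_splitEquiv e, transpose_submatrix, submatrix_mul_equiv,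
    submatrix_mul_equiv]
  exact ((reindex (splitEquiv e).symm (splitEquiv e).symm).injective.eq_iff).symm

/-- The embedding of `Sp κ` in `Sp l` acting trivially on a hyperbolic plane. -/
noncomputable def embed : symplecticGroup κ F →* symplecticGroup l F where
  toFun g := ⟨reindexAlgEquiv F F (splitEquiv e)
      (fromBlocks 1 0 0 (g : Matrix (κ ⊕ κ) (κ ⊕ κ) F)), by
    rw [mem_iff_submatrix_splitEquiv e]
    simp [fromBlocks_multiply, fromBlocks_transpose, mem_iff'.1 g.2]⟩
  map_one' := Subtype.ext (by simp)
  map_mul' g h := Subtype.ext (by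
    dsimp only [Submonoid.coe_mul]
    rw [← map_mul, fromBlocks_multiply]; simp)

theorem embed_injective : Function.Injective (embed (F := F) e) := by
  intro g h hgh
  have := congrArg Subtype.val hgh
  simp only [embed, MonoidHom.coe_mk, OneHom.coe_mk, EmbeddingLike.apply_eq_iff_eq,
    fromBlocks_inj, true_and] at this
  exact Subtype.ext this

theorem mem_range_embed {g : symplecticGroup l F}
    (h₁ : g • (Pi.single (.inl (e (.inl ()))) 1 : l ⊕ l → F) = Pi.single (.inl (e (.inl ()))) 1)
    (h₂ : g • (Pi.single (.inr (e (.inl ()))) 1 : l ⊕ l → F) = Pi.single (.inr (e (.inl ()))) 1) :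
    g ∈ (embed (F := F) e).range := by
  set M := (g : Matrix (l ⊕ l) (l ⊕ l) F).submatrix (splitEquiv e) (splitEquiv e) with hM
  have hcol (i : (Unit ⊕ Unit) ⊕ (κ ⊕ κ)) (j : Unit ⊕ Unit) : M i (.inl j) =
      (1 : Matrix ((Unit ⊕ Unit) ⊕ (κ ⊕ κ)) ((Unit ⊕ Unit) ⊕ (κ ⊕ κ)) F) i (.inl j) := by
    have hj : g • (Pi.single (splitEquiv e (.inl j)) 1 : l ⊕ l → F) =
        Pi.single (splitEquiv e (.inl j)) 1 := by
      rcases j with ⟨⟩ | ⟨⟩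
      · exact h₁
      · exact h₂
    have hij := congrFun hj (splitEquiv e i)
    change ((g : Matrix (l ⊕ l) (l ⊕ l) F) *ᵥ _) _ = _ at hij
    rw [mulVec_single_one] at hij
    rw [hM, submatrix_apply]
    refine hij.trans ?_
    simp [Pi.single_apply, Matrix.one_apply]
  have h11 : M.toBlocks₁₁ = 1 := by
    ext i j; simp [toBlocks₁₁, hcol, Matrix.one_apply]
  have h21 : M.toBlocks₂₁ = 0 := by
    ext i j; simp [toBlocks₂₁, hcol]
  have hg := (mem_iff_submatrix_splitEquiv e).1 g.2
  rw [← hM, ← fromBlocks_toBlocks M, h11, h21, fromBlocks_transpose, fromBlocks_multiply,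
    fromBlocks_multiply, fromBlocks_inj] at hg
  obtain ⟨-, h12, -, h22⟩ := hg
  have h12 : M.toBlocks₁₂ = 0 := by
    have : J Unit F * M.toBlocks₁₂ = 0 := by simpa using h12
    have := congrArg (J Unit F * ·) this
    simpa [← Matrix.mul_assoc, J_squared] using this
  refine ⟨⟨M.toBlocks₂₂, mem_iff'.2 (by simpa [h12] using h22)⟩, Subtype.ext ?_⟩
  change reindexAlgEquiv F F (splitEquiv e) (fromBlocks 1 0 0 M.toBlocks₂₂) = g
  rw [← h11, ← h21, ← h12, fromBlocks_toBlocks, hM]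
  ext; simp

theorem card_dvd_card_of_equiv [Finite F] (e : Unit ⊕ κ ≃ l) :
    Nat.card (symplecticGroup κ F) ∣ Nat.card (symplecticGroup l F) :=
  Subgroup.card_dvd_of_injective _ (embed_injective e)

end Embedding

end SymplecticGroup
namespace SymplecticGroup

section Centralizer

/-- An element of prime order `s`, invertible in `F`, fixing a nonzero vector also fixes a
hyperbolic pair, so it lies in a conjugate of the smaller symplectic group. -/
theorem dvd_card_of_smul_eq_self {l κ F : Type*} [DecidableEq l] [DecidableEq κ] [Field F]
    [Fintype l] [Fintype κ] [Finite F] (e : Unit ⊕ κ ≃ l) {s : ℕ}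
    (hs : s.Prime) (hsF : (s : F) ≠ 0) {y : symplecticGroup l F} (hy : y ^ s = 1) (hy1 : y ≠ 1)
    {v : l ⊕ l → F} (hv : v ≠ 0) (hfix : y • v = v) : s ∣ Nat.card (symplecticGroup κ F) := by
  have := Fact.mk hs
  obtain ⟨w, hw⟩ := exists_form_ne_zero hv
  have hpow (i : ℕ) : y ^ i • v = v := by
    induction i with
    | zero => simp
    | succ i ih => rw [pow_succ, mul_smul, hfix, ih]
  set w' : l ⊕ l → F := (s : F)⁻¹ • ∑ i ∈ Finset.range s, y ^ i • ((form l F v w)⁻¹ • w) with hw'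
  have hform : form l F v w' = 1 := by
    have (i : ℕ) (a : l ⊕ l → F) : form l F v (y ^ i • a) = form l F v a := by
      conv_lhs => rw [← hpow i]
      exact form_smul _ _ _
    simp [hw', map_sum, this, hw, hsF]
  have hyw : y • w' = w' := by
    rw [hw', smul_comm, Finset.smul_sum]
    simp only [← mul_smul, ← pow_succ']
    have h1 := Finset.sum_range_succ (fun i ↦ y ^ i • ((form l F v w)⁻¹ • w)) s
    rw [Finset.sum_range_succ', hy, pow_zero] at h1
    rw [add_right_cancel h1]
  obtain ⟨g, hg, hg'⟩ := exists_smul_pair_eq hform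
    (v' := Pi.single (.inr (e (.inl ()))) 1) (w' := Pi.single (.inl (e (.inl ()))) 1)
    (by rw [form_single]; simp [J])
  obtain ⟨z, hz⟩ := mem_range_embed e (g := g * y * g⁻¹)
    (by rw [mul_smul, mul_smul, ← hg', inv_smul_smul, hyw])
    (by rw [mul_smul, mul_smul, ← hg, inv_smul_smul, hfix])
  have hz1 : orderOf z = s := by
    refine orderOf_eq_prime (embed_injective (F := F) e ?_) ?_
    · rw [map_pow, hz, conj_pow, hy, map_one]; simp
    · rintro rfl
      rw [map_one, eq_comm, mul_inv_eq_one, mul_eq_left] at hz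
      exact hy1 hz
  rw [← hz1]
  exact orderOf_dvd_natCard z

variable {F : Type*} [Field F] [Finite F]

theorem card_dvd_card_of_le {i k : ℕ} (h : i ≤ k) :
    Nat.card (symplecticGroup (Fin i) F) ∣ Nat.card (symplecticGroup (Fin k) F) := by
  induction k, h using Nat.le_induction with
  | base => rfl
  | succ k _ ih =>
    exact ih.trans (card_dvd_card_of_equiv (Fintype.equivOfCardEq (by simp [add_comm])))

theorem pow_two_mul_sub_one_dvd_card {i k : ℕ} (h0 : 0 < i) (h : i ≤ k) :
    Nat.card F ^ (2 * i) - 1 ∣ Nat.card (symplecticGroup (Fin k) F) := by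
  have : Nonempty (Fin i) := ⟨⟨0, h0⟩⟩
  have h1 := card_pow_sub_one_dvd_card (l := Fin i) (F := F)
  rw [Fintype.card_fin] at h1
  exact h1.trans (card_dvd_card_of_le h)

theorem pow_sub_one_dvd_card {j k : ℕ} (h0 : 0 < j) (h : j ≤ k) :
    Nat.card F ^ j - 1 ∣ Nat.card (symplecticGroup (Fin k) F) :=
  (Nat.pow_sub_one_dvd_pow_sub_one _ (Dvd.intro_left 2 rfl)).trans
    (pow_two_mul_sub_one_dvd_card h0 h)

/-- If `N = u - 1` has odd rank for a symplectic `u`, then every element of odd order centralizing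
`u` has a nonzero fixed vector, because it preserves the nondegenerate form induced by `ω(v, N w)`
on the image of `N`. -/
theorem exists_smul_eq_self_of_odd_finrank {l F : Type*} [DecidableEq l] [Fintype l] [Field F]
    {u y : symplecticGroup l F} (hcomm : Commute u y) {s : ℕ} (hs : Odd s) (hy : y ^ s = 1)
    (hodd : Odd (Module.finrank F
      (LinearMap.range (Matrix.toLin' (u : Matrix (l ⊕ l) (l ⊕ l) F) - 1)))) :
    ∃ v : l ⊕ l → F, v ≠ 0 ∧ y • v = v := by
  set N := Matrix.toLin' (u : Matrix (l ⊕ l) (l ⊕ l) F) - 1 with hNdef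
  set T := Matrix.toLin' (y : Matrix (l ⊕ l) (l ⊕ l) F)
  have hN (v : l ⊕ l → F) : N v = u • v - v := rfl
  have hT (v : l ⊕ l → F) : T v = y • v := rfl
  have hNT (v : l ⊕ l → F) : N (T v) = T (N v) := by
    simp only [hN, hT, smul_sub, ← mul_smul, hcomm.eq]
  have hTI : ∀ w ∈ LinearMap.range N, T w ∈ LinearMap.range N := by
    rintro _ ⟨v, rfl⟩
    exact ⟨T v, hNT v⟩
  have hperp {a : l ⊕ l → F} (ha : N a = 0) {c : l ⊕ l → F} (hc : c ∈ LinearMap.range N) :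
      form l F a c = 0 := by
    obtain ⟨c, rfl⟩ := hc
    have ha' : u • a = a := sub_eq_zero.1 ha
    rw [hN, map_sub, sub_eq_zero]
    conv_lhs => rw [← ha']
    exact form_smul _ _ _
  set b := Module.finBasis F (LinearMap.range N)
  choose v hv using fun i ↦ (b i).2
  have hrepr (a : l ⊕ l → F) (c : LinearMap.range N) (hac : N a = c) {d : l ⊕ l → F}
      (hd : d ∈ LinearMap.range N) : form l F a d = ∑ i, b.repr c i * form l F (v i) d := by
    have h1 : N (a - ∑ i, b.repr c i • v i) = 0 := by
      rw [map_sub, map_sum, hac]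
      have := congrArg Subtype.val (b.sum_repr c)
      rw [AddSubmonoidClass.coe_finsetSum] at this
      simp only [map_smul, hv]
      exact sub_eq_zero.2 this.symm
    have h2 := hperp h1 hd
    rw [map_sub, LinearMap.sub_apply, sub_eq_zero] at h2
    simpa [map_sum, LinearMap.sum_apply] using h2
  set S := T.restrict hTI with hSdef
  set A := LinearMap.toMatrixAlgEquiv b S with hAdef
  set G : Matrix _ _ F := Matrix.of fun i j ↦ form l F (v i) (b j) with hGdef
  have hS : S ^ s = 1 := by
    ext w
    rw [hSdef, Module.End.pow_restrict, LinearMap.coe_restrict_apply, toLin'_pow_eq_one hy]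
    rfl
  have hAG : Aᵀ * G * A = G := by
    ext i j
    have h1 : form l F (T (v i)) (T (b j)) = form l F (v i) (b j) := form_smul _ _ _
    have hTb : T (b j) = ∑ k, A k j • (b k : l ⊕ l → F) := by
      have := congrArg Subtype.val (b.sum_repr (S (b j)))
      rw [AddSubmonoidClass.coe_finsetSum] at this
      simp only [hAdef, LinearMap.toMatrixAlgEquiv_apply]
      exact this.symm
    rw [hrepr _ (S (b i)) (by rw [hNT, hv]; rfl) (hTI _ (b j).2), hTb] at h1
    simp only [map_sum, map_smul, smul_eq_mul, Finset.mul_sum] at h1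
    rw [hGdef, of_apply, ← h1]
    simp only [Matrix.mul_apply, Finset.sum_mul]
    rw [Finset.sum_comm]
    refine Finset.sum_congr rfl fun k _ ↦ Finset.sum_congr rfl fun k' _ ↦ ?_
    simp [hAdef, LinearMap.toMatrixAlgEquiv_apply]
    ring
  have hGdet : G.det ≠ 0 := by
    intro h
    obtain ⟨x, hx, hGx⟩ := exists_mulVec_eq_zero_iff.2 h
    set c := b.equivFun.symm x with hc
    have hvc (i) : form l F (v i) c = 0 := by
      have := congrFun hGx i
      simpa [hc, Module.Basis.equivFun_symm_apply, mulVec, dotProduct, hGdef, mul_comm] using this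
    have : (c : l ⊕ l → F) = 0 := by
      refine form_nondegenerate.2 _ fun a ↦ ?_
      rw [hrepr a ⟨N a, a, rfl⟩ rfl c.2]
      simp [hvc]
    exact hx (b.equivFun.symm.map_eq_zero_iff.1 (Subtype.ext this))
  obtain ⟨x, hx, hAx⟩ := Matrix.exists_mulVec_eq_self_of_isometry (by simpa using hodd) hGdet hAG hs
    (by rw [hAdef, ← map_pow, hS, map_one])
  refine ⟨b.equivFun.symm x, ?_, ?_⟩
  · rw [Ne, ZeroMemClass.coe_eq_zero, LinearEquiv.map_eq_zero_iff]
    exact hx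
  · have h1 := LinearMap.toMatrix_mulVec_repr b b S (b.equivFun.symm x)
    have h2 : (b.repr (b.equivFun.symm x) : _ → F) = x := b.equivFun.apply_symm_apply x
    rw [h2] at h1
    have h3 : S (b.equivFun.symm x) = b.equivFun.symm x := by
      apply b.equivFun.injective
      rw [LinearEquiv.apply_symm_apply]
      exact h1.symm.trans hAx
    exact congrArg Subtype.val h3

/-- If an element of odd prime order `s ≠ p` centralizes an element of order `p` in `Sp_{2k+2}`,
then `s` divides the order of `Sp_{2k}`. -/
theorem dvd_card_of_commute (p : ℕ) [Fact p.Prime] [CharP F p] {k : ℕ} (hk : 0 < k)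
    {u y : symplecticGroup (Fin (k + 1)) F} (hu : u ^ p = 1) (hu1 : u ≠ 1) (hcomm : Commute u y)
    {s : ℕ} (hs : s.Prime) (hs2 : Odd s) (hsp : s ≠ p) (hy : y ^ s = 1) (hy1 : y ≠ 1) :
    s ∣ Nat.card (symplecticGroup (Fin k) F) := by
  by_contra hcon
  have hsF : (s : F) ≠ 0 := by
    rw [Ne, CharP.cast_eq_zero_iff F p, Nat.prime_dvd_prime_iff_eq Fact.out hs]
    exact hsp.symm
  have hfix (v : Fin (k + 1) ⊕ Fin (k + 1) → F) (hv : y • v = v) : v = 0 := by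
    by_contra h
    exact hcon (dvd_card_of_smul_eq_self (Fintype.equivOfCardEq (by simp [add_comm])) hs hsF hy hy1
      h hv)
  set N := Matrix.toLin'
    (u : Matrix (Fin (k + 1) ⊕ Fin (k + 1)) (Fin (k + 1) ⊕ Fin (k + 1)) F) - 1 with hNdef
  set T := Matrix.toLin'
    (y : Matrix (Fin (k + 1) ⊕ Fin (k + 1)) (Fin (k + 1) ⊕ Fin (k + 1)) F)
  have hNT (v : Fin (k + 1) ⊕ Fin (k + 1) → F) : N (T v) = T (N v) := by
    change u • y • v - y • v = y • (u • v - v)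
    simp only [smul_sub, ← mul_smul, hcomm.eq]
  have hdvd (W : Submodule F (Fin (k + 1) ⊕ Fin (k + 1) → F)) (hW : ∀ w ∈ W, T w ∈ W) :
      s ∣ Nat.card F ^ Module.finrank F W - 1 := by
    refine Module.End.dvd_card_sub_one_of_fixedPoints hs (T := T.restrict hW) ?_ ?_
    · ext w
      rw [Module.End.pow_restrict, LinearMap.coe_restrict_apply, toLin'_pow_eq_one hy]
      rfl
    · exact fun w hw ↦ Subtype.ext (hfix w (congrArg Subtype.val hw))
  have hNp : N ^ p = 0 := by
    have : CharP (Module.End F (Fin (k + 1) ⊕ Fin (k + 1) → F)) p :=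
      charP_of_injective_algebraMap (algebraMap F _).injective p
    rw [hNdef, sub_pow_char_of_commute _ (Commute.one_right _), toLin'_pow_eq_one hu,
      one_pow, sub_self]
  have hN0 : N ≠ 0 := by
    intro h
    refine hu1 (ext_smul fun v ↦ ?_)
    rw [one_smul]
    exact sub_eq_zero.1 (congrArg (· v) h)
  have hI0 : 0 < Module.finrank F (LinearMap.range N) := by
    rw [Nat.pos_iff_ne_zero, Ne, Submodule.finrank_eq_zero, LinearMap.range_eq_bot]
    exact hN0
  have hK0 : 0 < Module.finrank F (LinearMap.ker N) := by
    rw [Nat.pos_iff_ne_zero, Ne, Submodule.finrank_eq_zero]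
    intro h
    have hinj := LinearMap.ker_eq_bot.1 h
    have : Function.Injective (N ^ p : Module.End F _) := by
      rw [Module.End.coe_pow]
      exact hinj.iterate p
    rw [hNp] at this
    obtain ⟨v, hv⟩ := exists_ne (0 : Fin (k + 1) ⊕ Fin (k + 1) → F)
    exact hv (this rfl)
  have hsum := LinearMap.finrank_range_add_finrank_ker N
  rw [Module.finrank_fintype_fun_eq_card, Fintype.card_sum, Fintype.card_fin] at hsum
  have hI := hdvd (LinearMap.range N) (by rintro _ ⟨v, rfl⟩; exact ⟨T v, hNT v⟩)
  have hK := hdvd (LinearMap.ker N) (by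
    intro v hv
    rw [LinearMap.mem_ker] at hv ⊢
    rw [hNT, hv, map_zero])
  have hIk : k < Module.finrank F (LinearMap.range N) := by
    by_contra! h
    exact hcon (hI.trans (pow_sub_one_dvd_card hI0 h))
  have hKk : k < Module.finrank F (LinearMap.ker N) := by
    by_contra! h
    exact hcon (hK.trans (pow_sub_one_dvd_card hK0 h))
  rcases Nat.even_or_odd' (Module.finrank F (LinearMap.range N)) with ⟨i, hi | hi⟩
  · rw [hi] at hI
    exact hcon (hI.trans (pow_two_mul_sub_one_dvd_card (by omega) (by omega)))
  · obtain ⟨v, hv, hyv⟩ := exists_smul_eq_self_of_odd_finrank hcomm hs2 hy ⟨i, hi⟩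
    exact hv (hfix v hyv)

end Centralizer

end SymplecticGroup

/-- Lemma 2.8: if `x ∈ PSp_{2m}(q)` has order `p` and `s` is a prime dividing
`|C_G(x)|`, then `s` divides `|Sp_{2m-2}(q)|`. -/
theorem PSp_unipotent_centralizer_prime_divisor {p f q : ℕ} (hp : p.Prime) (hf : 0 < f)
    (hq : q = p ^ f) (F : Type*) [Field F] [Fintype F] (hF : Fintype.card F = q)
    {m : ℕ} (hm : 2 ≤ m)
    (x : Matrix.symplecticGroup (Fin m) F ⧸
      Subgroup.center (Matrix.symplecticGroup (Fin m) F))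
    (hx : orderOf x = p)
    {s : ℕ} (hs : s.Prime)
    (hsdvd : s ∣ Nat.card (Subgroup.centralizer ({x} : Set _))) :
    s ∣ Nat.card (Matrix.symplecticGroup (Fin (m - 1)) F) := by
  have := Fact.mk hp
  have := Fact.mk hs
  have hchar : CharP F p := by
    obtain ⟨r, hr⟩ := CharP.exists F
    obtain ⟨n, hrp, hn⟩ := FiniteField.card F r
    have : r ∣ p := hrp.dvd_of_dvd_pow (by
      rw [← hq, ← hF, hn]; exact dvd_pow_self r n.ne_zero)
    rwa [← (Nat.prime_dvd_prime_iff_eq hrp hp).1 this]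
  obtain ⟨k, rfl⟩ : ∃ k, m = k + 1 := ⟨m - 1, by omega⟩
  have hk : 0 < k := by omega
  rw [Nat.add_sub_cancel]
  have : Nonempty (Fin k) := ⟨⟨0, hk⟩⟩
  rcases eq_or_ne s p with rfl | hsp
  · exact SymplecticGroup.char_dvd_card s
  rcases hs.eq_two_or_odd' with rfl | hs2
  · refine SymplecticGroup.two_dvd_card fun h ↦ hsp ?_
    have h2 : ((2 : ℕ) : F) = 0 := by exact_mod_cast h
    exact ((Nat.prime_dvd_prime_iff_eq hp hs).1 ((CharP.cast_eq_zero_iff F p 2).1 h2)).symm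
  obtain ⟨⟨y, hyx⟩, hy⟩ := exists_prime_orderOf_dvd_card' s hsdvd
  rw [Subgroup.orderOf_mk] at hy
  rw [Subgroup.mem_centralizer_singleton_iff] at hyx
  -- Elements of odd prime order, or of order `p`, lift to elements of the same order.
  have hlift {r : ℕ} (hr : r.Prime)
      (hcenter : ∀ z ∈ Subgroup.center (symplecticGroup (Fin (k + 1)) F), z ^ r = z)
      (a : symplecticGroup (Fin (k + 1)) F ⧸ Subgroup.center (symplecticGroup (Fin (k + 1)) F))
      (ha : orderOf a = r) :
      ∃ g : symplecticGroup (Fin (k + 1)) F, (g : _ ⧸ _) = a ∧ g ^ r = 1 ∧ g ≠ 1 := by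
    obtain ⟨g, rfl⟩ := QuotientGroup.mk_surjective a
    have hz : g ^ r ∈ Subgroup.center (symplecticGroup (Fin (k + 1)) F) := by
      rw [← QuotientGroup.eq_one_iff, QuotientGroup.mk_pow, ← ha, pow_orderOf_eq_one]
    have hmk : ((g * g ^ r : symplecticGroup (Fin (k + 1)) F) : _ ⧸ _) = (g : _ ⧸
        Subgroup.center (symplecticGroup (Fin (k + 1)) F)) := by
      rw [QuotientGroup.mk_mul, (QuotientGroup.eq_one_iff _).2 hz, mul_one]
    refine ⟨g * g ^ r, hmk, ?_, ?_⟩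
    · rw [(Commute.self_pow g r).mul_pow, hcenter _ hz, SymplecticGroup.center_mul_self hz]
    · intro h
      rw [h, QuotientGroup.mk_one] at hmk
      rw [← hmk, orderOf_one] at ha
      exact hr.one_lt.ne ha
  obtain ⟨u, rfl, hu, hu1⟩ := hlift hp (fun z ↦ SymplecticGroup.center_pow_char p) x hx
  obtain ⟨y, rfl, hys, hy1⟩ := hlift hs (fun z hz ↦ by
    obtain ⟨t, rfl⟩ := hs2
    rw [pow_succ, pow_mul, sq, SymplecticGroup.center_mul_self hz, one_pow, one_mul]) y hy
  refine SymplecticGroup.dvd_card_of_commute p hk hu hu1 ?_ hs hs2 hsp hys hy1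
  have hc : (y * u) * (u * y)⁻¹ ∈ Subgroup.center (symplecticGroup (Fin (k + 1)) F) := by
    rw [← QuotientGroup.eq_one_iff, QuotientGroup.mk_mul, QuotientGroup.mk_inv, mul_inv_eq_one,
      QuotientGroup.mk_mul, QuotientGroup.mk_mul, hyx]
  set c := (y * u) * (u * y)⁻¹ with hcdef
  have hconj : c * u = y * u * y⁻¹ := by rw [hcdef]; group
  have hcp := congrArg (· ^ p) hconj
  have hcu : Commute c u := (Subgroup.mem_center_iff.1 hc u).symm
  simp only [conj_pow, hcu.mul_pow, hu, SymplecticGroup.center_pow_char p hc, mul_one,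
    mul_inv_cancel] at hcp
  rw [hcdef, mul_inv_eq_one] at hcp
  exact hcp.symm
end

section
/- Γ(Sp_6(2)) = Γ(S_8), where Sp_6(2) = Matrix.symplecticGroup (Fin 3) (ZMod 2) and S_8 = Equiv.Perm (Fin 8). Explicitly: a prime divides |Sp_6(2)| iff it divides 8!, and for all distinct primes r, s, Sp_6(2) has an element of order r·s iff S_8 has an element of order r·s. -/
open Matrix Module Polynomial

section FixedPoints

variable {V : Type*} [AddCommGroup V] [Module (ZMod 2) V] [Finite V]

/-- An endomorphism of prime order `p` has, on any invariant subspace, a number of fixed vectors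
congruent modulo `p` to the number of all vectors. -/
theorem two_pow_finrank_modEq_fixed {p : ℕ} [Fact p.Prime] {T : Module.End (ZMod 2) V}
    (hT : T ^ p = 1) {U : Submodule (ZMod 2) V} (hU : ∀ x ∈ U, T x ∈ U) :
    2 ^ finrank (ZMod 2) U ≡
      2 ^ finrank (ZMod 2) (U ⊓ LinearMap.ker (T - 1) : Submodule (ZMod 2) V) [MOD p] := by
  classical
  have := Fintype.ofFinite V
  let f : Function.End U := fun x => ⟨T x, hU x x.2⟩
  have hpow : ∀ (n : ℕ) (x : U), ((f ^ n) x : V) = (T ^ n) x := by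
    intro n
    induction n with
    | zero => intro x; rfl
    | succ n ih => intro x; exact ih (f x)
  have hf : f ^ p ^ 1 = 1 := by
    funext x
    apply Subtype.ext
    rw [hpow, pow_one, hT]
    rfl
  have key := Equiv.Perm.card_fixedPoints_modEq hf
  have hcard (W : Submodule (ZMod 2) V) : Nat.card W = 2 ^ finrank (ZMod 2) W := by
    rw [Module.natCard_eq_pow_finrank (K := ZMod 2), Nat.card_zmod]
  rw [← hcard, ← hcard]
  rw [Fintype.card_eq_nat_card, Fintype.card_eq_nat_card] at key
  convert key using 1
  refine Nat.card_congr
    { toFun := fun x => ⟨⟨x, x.2.1⟩, Subtype.ext (sub_eq_zero.mp x.2.2)⟩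
      invFun := fun x => ⟨x.1, x.1.2, sub_eq_zero.mpr (congrArg Subtype.val x.2)⟩
      left_inv := fun _ => rfl
      right_inv := fun _ => rfl }

theorem eq_zero_or_three_of_two_pow_modEq_one {d : ℕ} (hd : d ≤ 3) (h : 2 ^ d ≡ 1 [MOD 7]) :
    d = 0 ∨ d = 3 := by
  interval_cases d <;> revert h <;> decide

/-- An endomorphism of prime order other than `7` acts trivially on a three-dimensional space on
which some commuting endomorphism of order `7` has no nonzero fixed vector. -/
theorem le_ker_sub_one_of_commute {p : ℕ} [Fact p.Prime] (hp : p ≠ 7)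
    {S T : Module.End (ZMod 2) V} (hST : Commute S T) (hS : S ^ p = 1) (hT : T ^ 7 = 1)
    {U : Submodule (ZMod 2) V} (hUS : ∀ x ∈ U, S x ∈ U) (hUT : ∀ x ∈ U, T x ∈ U)
    (hfix : U ⊓ LinearMap.ker (T - 1) = ⊥) (hU : finrank (ZMod 2) U = 3) :
    U ≤ LinearMap.ker (S - 1) := by
  have : Fact (Nat.Prime 7) := ⟨by norm_num⟩
  set W := U ⊓ LinearMap.ker (S - 1) with hW
  have hWT : ∀ x ∈ W, T x ∈ W := by
    rintro x ⟨hx, hx'⟩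
    refine ⟨hUT x hx, sub_eq_zero.mpr ?_⟩
    have h1 : S x = x := sub_eq_zero.mp hx'
    calc S (T x) = T (S x) := LinearMap.congr_fun hST.eq x
      _ = T x := by rw [h1]
  have hbot : W ⊓ LinearMap.ker (T - 1) = ⊥ :=
    le_bot_iff.mp (hfix ▸ inf_le_inf_right _ inf_le_left)
  have h7 := two_pow_finrank_modEq_fixed hT hWT
  rw [hbot, finrank_bot, pow_zero] at h7
  have hle : finrank (ZMod 2) W ≤ 3 := hU ▸ Submodule.finrank_mono inf_le_left
  have hSW := two_pow_finrank_modEq_fixed hS hUS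
  rw [← hW, hU] at hSW
  rcases eq_zero_or_three_of_two_pow_modEq_one hle h7 with h0 | h3
  · rw [h0] at hSW
    have hdvd : p ∣ 7 := by simpa using (Nat.modEq_iff_dvd' (by norm_num)).mp hSW.symm
    exact absurd ((Nat.prime_dvd_prime_iff_eq Fact.out (by norm_num)).mp hdvd) hp
  · exact inf_eq_left.mp (Submodule.eq_of_le_of_finrank_eq inf_le_left (h3.trans hU.symm))

end FixedPoints

section Polynomials

theorem two_eq_zero_zmod_two_polynomial : (2 : (ZMod 2)[X]) = 0 := CharTwo.two_eq_zero

theorem isCoprime_cubics : IsCoprime (X ^ 3 + X + 1 : (ZMod 2)[X]) (X ^ 3 + X ^ 2 + 1) :=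
  ⟨X, X + 1, by
    linear_combination (X ^ 4 + X ^ 3 + X ^ 2 + X) * two_eq_zero_zmod_two_polynomial⟩

theorem X_sub_one_mul_cubics :
    (X - 1) * ((X ^ 3 + X + 1) * (X ^ 3 + X ^ 2 + 1)) = (X ^ 7 - 1 : (ZMod 2)[X]) := by
  linear_combination (X ^ 4 - X ^ 3) * two_eq_zero_zmod_two_polynomial

theorem isCoprime_X_sub_one_cubic : IsCoprime (X ^ 3 + X + 1 : (ZMod 2)[X]) (X - 1) :=
  ⟨1, -(X ^ 2 + X), by linear_combination X * two_eq_zero_zmod_two_polynomial⟩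

theorem isCoprime_X_sub_one_cubic' : IsCoprime (X ^ 3 + X ^ 2 + 1 : (ZMod 2)[X]) (X - 1) :=
  ⟨1, -(X ^ 2 + 2 * X), by linear_combination X * two_eq_zero_zmod_two_polynomial⟩

end Polynomials

namespace SymplecticGroup

section General

variable {l R : Type*} [DecidableEq l] [Fintype l] [Field R]

theorem pow_mul_J_mul_transpose_pow {A : Matrix (l ⊕ l) (l ⊕ l) R}
    (hA : A ∈ symplecticGroup l R) (k : ℕ) : A ^ k * J l R * Aᵀ ^ k = J l R := by
  rw [← transpose_pow]
  exact mem_iff.mp (pow_mem hA k)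

/-- Reciprocal cubics of a symplectic matrix have the same rank. -/
theorem rank_cubic_eq {A : Matrix (l ⊕ l) (l ⊕ l) R} (hA : A ∈ symplecticGroup l R) :
    (A ^ 3 + A + 1).rank = (A ^ 3 + A ^ 2 + 1).rank := by
  have hJ := isUnit_det_J l R
  have hA3 : IsUnit (A ^ 3).det := symplectic_det (pow_mem hA 3)
  have h1 := pow_mul_J_mul_transpose_pow hA 1
  have h3 := pow_mul_J_mul_transpose_pow hA 3
  have key : A ^ 3 * (J l R * (A ^ 3 + A + 1)ᵀ) = (A ^ 3 + A ^ 2 + 1) * J l R := by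
    simp only [transpose_add, transpose_pow, transpose_one, mul_add, add_mul, mul_one, one_mul]
    rw [← mul_assoc, h3]
    have : A ^ 3 * (J l R * Aᵀ) = A ^ 2 * J l R := by
      rw [pow_one, pow_one] at h1
      rw [pow_succ A 2, mul_assoc, ← mul_assoc A, h1]
    rw [this]
    abel
  rw [← rank_transpose (A ^ 3 + A + 1), ← rank_mul_eq_right_of_isUnit_det _ _ hJ,
    ← rank_mul_eq_right_of_isUnit_det _ _ hA3, key, rank_mul_eq_left_of_isUnit_det _ _ hJ]

end General

/-- The action of a symplectic matrix on column vectors. -/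
noncomputable def toEnd :
    symplecticGroup (Fin 3) (ZMod 2) →* Module.End (ZMod 2) (Fin 3 ⊕ Fin 3 → ZMod 2) :=
  (Matrix.toLinAlgEquiv' (R := ZMod 2) (n := Fin 3 ⊕ Fin 3)).toMonoidHom.comp
    (symplecticGroup (Fin 3) (ZMod 2)).subtype

theorem toEnd_injective : Function.Injective toEnd :=
  (Matrix.toLinAlgEquiv' (R := ZMod 2) (n := Fin 3 ⊕ Fin 3)).injective.comp Subtype.val_injective

theorem toEnd_apply (x : symplecticGroup (Fin 3) (ZMod 2)) (v : Fin 3 ⊕ Fin 3 → ZMod 2) :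
    toEnd x v = x.1 *ᵥ v := rfl

theorem finrank_vectors : finrank (ZMod 2) (Fin 3 ⊕ Fin 3 → ZMod 2) = 6 := by
  simp

theorem finrank_ker_toLinAlgEquiv' (M : Matrix (Fin 3 ⊕ Fin 3) (Fin 3 ⊕ Fin 3) (ZMod 2)) :
    M.rank + finrank (ZMod 2) (LinearMap.ker (Matrix.toLinAlgEquiv' M)) = 6 :=
  (LinearMap.finrank_range_add_finrank_ker M.mulVecLin).trans finrank_vectors

theorem finrank_ker_cubic_eq (x : symplecticGroup (Fin 3) (ZMod 2)) :
    finrank (ZMod 2) (LinearMap.ker (aeval (toEnd x) (X ^ 3 + X + 1 : (ZMod 2)[X]))) =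
      finrank (ZMod 2) (LinearMap.ker (aeval (toEnd x) (X ^ 3 + X ^ 2 + 1 : (ZMod 2)[X]))) := by
  have hx : toEnd x = Matrix.toLinAlgEquiv' x.1 := rfl
  have h1 := finrank_ker_toLinAlgEquiv' (x.1 ^ 3 + x.1 + 1)
  have h2 := finrank_ker_toLinAlgEquiv' (x.1 ^ 3 + x.1 ^ 2 + 1)
  rw [rank_cubic_eq x.2] at h1
  have e1 : aeval (toEnd x) (X ^ 3 + X + 1 : (ZMod 2)[X]) =
      Matrix.toLinAlgEquiv' (x.1 ^ 3 + x.1 + 1) := by simp [hx]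
  have e2 : aeval (toEnd x) (X ^ 3 + X ^ 2 + 1 : (ZMod 2)[X]) =
      Matrix.toLinAlgEquiv' (x.1 ^ 3 + x.1 ^ 2 + 1) := by simp [hx]
  rw [e1, e2]
  omega

/-- The fixed space of an element of prime order `p` is a proper subspace whose dimension
satisfies the fixed point congruence. -/
theorem finrank_fixed_lt_six_and_modEq {p : ℕ} [Fact p.Prime] {x : symplecticGroup (Fin 3) (ZMod 2)}
    (hx : orderOf x = p) :
    finrank (ZMod 2) (LinearMap.ker (toEnd x - 1)) < 6 ∧
      2 ^ 6 ≡ 2 ^ finrank (ZMod 2) (LinearMap.ker (toEnd x - 1)) [MOD p] := by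
  have hT : toEnd x ^ p = 1 := by rw [← map_pow, ← hx, pow_orderOf_eq_one, map_one]
  have key := two_pow_finrank_modEq_fixed hT (U := ⊤) (fun _ _ => trivial)
  rw [top_inf_eq, finrank_top, finrank_vectors] at key
  refine ⟨lt_of_le_of_ne (finrank_vectors ▸ Submodule.finrank_le _) fun h => ?_, key⟩
  have htop := Submodule.eq_top_of_finrank_eq (h.trans finrank_vectors.symm)
  have h1 : toEnd x = toEnd 1 := by
    rw [map_one]
    exact sub_eq_zero.mp (LinearMap.ker_eq_top.mp htop)
  rw [toEnd_injective h1, orderOf_one] at hx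
  exact (Fact.out : p.Prime).one_lt.ne hx

theorem vecMul_J_dotProduct_self :
    ∀ v : Fin 3 ⊕ Fin 3 → ZMod 2, v ᵥ* J (Fin 3) (ZMod 2) ⬝ᵥ v = 0 := by
  decide +kernel

theorem orderOf_ne_thirtyOne (x : symplecticGroup (Fin 3) (ZMod 2)) : orderOf x ≠ 31 := by
  intro hx
  have : Fact (Nat.Prime 31) := ⟨by norm_num⟩
  obtain ⟨hlt, hmod⟩ := finrank_fixed_lt_six_and_modEq hx
  have hone : finrank (ZMod 2) (LinearMap.ker (toEnd x - 1)) = 1 := by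
    revert hlt hmod
    generalize finrank (ZMod 2) (LinearMap.ker (toEnd x - 1)) = k
    intro hlt hmod
    interval_cases k <;> revert hmod <;> decide
  obtain ⟨v, hv, hv0⟩ := Submodule.exists_mem_ne_zero_of_ne_bot
    (p := LinearMap.ker (toEnd x - 1)) (fun h => by rw [h, finrank_bot] at hone; omega)
  have hfix : x.1 *ᵥ v = v := sub_eq_zero.mp hv
  let φ : Module.Dual (ZMod 2) (Fin 3 ⊕ Fin 3 → ZMod 2) :=
    dotProductEquiv (ZMod 2) (Fin 3 ⊕ Fin 3) (v ᵥ* J (Fin 3) (ZMod 2))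
  have hφ (w) : φ w = v ᵥ* J (Fin 3) (ZMod 2) ⬝ᵥ w := rfl
  have hφ_inv (w) : φ (toEnd x w) = φ w := by
    rw [hφ, hφ, toEnd_apply, dotProduct_mulVec]
    conv_lhs => rw [← hfix]
    rw [← vecMul_transpose, vecMul_vecMul, vecMul_vecMul, ← mul_assoc, mem_iff'.mp x.2]
  have hφ0 : φ ≠ 0 := by
    intro h
    have h0 : v ᵥ* J (Fin 3) (ZMod 2) = 0 := (LinearEquiv.map_eq_zero_iff _).mp h
    have h1 := congrArg (· ᵥ* J (Fin 3) (ZMod 2)) h0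
    simp only [vecMul_vecMul, J_squared, zero_vecMul, vecMul_neg, vecMul_one] at h1
    exact hv0 (neg_eq_zero.mp h1)
  have hdim := Module.Dual.finrank_ker_add_one_of_ne_zero hφ0
  rw [finrank_vectors] at hdim
  have hφv : v ∈ LinearMap.ker φ ⊓ LinearMap.ker (toEnd x - 1) := ⟨vecMul_J_dotProduct_self v, hv⟩
  have hT : toEnd x ^ 31 = 1 := by rw [← _root_.map_pow, ← hx, pow_orderOf_eq_one, _root_.map_one]
  have hperp := two_pow_finrank_modEq_fixed hT (U := LinearMap.ker φ)
    (fun w hw => by rw [LinearMap.mem_ker, hφ_inv]; exact hw)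
  have hle : finrank (ZMod 2)
      (LinearMap.ker φ ⊓ LinearMap.ker (toEnd x - 1) : Submodule (ZMod 2) _) ≤ 1 :=
    hone ▸ Submodule.finrank_mono inf_le_right
  have hpos : 0 < finrank (ZMod 2)
      (LinearMap.ker φ ⊓ LinearMap.ker (toEnd x - 1) : Submodule (ZMod 2) _) :=
    Module.finrank_pos_iff_exists_ne_zero.mpr ⟨⟨v, hφv⟩, fun h => hv0 (congrArg Subtype.val h)⟩
  rw [show finrank (ZMod 2) (LinearMap.ker φ) = 5 by omega, le_antisymm hle hpos] at hperp
  exact absurd hperp (by decide)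

theorem dvd_factorial_of_prime_dvd_card {p : ℕ} (hp : p.Prime)
    (h : p ∣ Nat.card (symplecticGroup (Fin 3) (ZMod 2))) : p ∣ Nat.factorial 8 := by
  have : Fact p.Prime := ⟨hp⟩
  obtain ⟨x, hx⟩ := exists_prime_orderOf_dvd_card' p h
  obtain ⟨hlt, hmod⟩ := finrank_fixed_lt_six_and_modEq hx
  generalize finrank (ZMod 2) (LinearMap.ker (toEnd x - 1)) = k at hlt hmod
  have h31 : p ≠ 31 := fun h => orderOf_ne_thirtyOne x (hx.trans h)
  have hdvd : p ∣ 2 ^ 6 - 2 ^ k :=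
    (Nat.modEq_iff_dvd' (Nat.pow_le_pow_right (by norm_num) hlt.le)).mp hmod.symm
  have hdvd' : p ∣ Nat.factorial 8 * 31 :=
    hdvd.trans (by interval_cases k <;> decide)
  rcases hp.dvd_mul.mp hdvd' with h | h
  · exact h
  · exact absurd ((Nat.prime_dvd_prime_iff_eq hp (by norm_num)).mp h) h31

/-- An element of prime order `p ≠ 7` does not commute with an element of order `7`. -/
theorem not_commute_of_orderOf_eq_seven {p : ℕ} (hp : p.Prime) (hp7 : p ≠ 7)
    {x y : symplecticGroup (Fin 3) (ZMod 2)} (hx : orderOf x = 7) (hy : orderOf y = p) :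
    ¬ Commute y x := by
  intro hyx
  have : Fact p.Prime := ⟨hp⟩
  have : Fact (Nat.Prime 7) := ⟨by norm_num⟩
  set T := toEnd x
  set S := toEnd y
  have hST : Commute S T := hyx.map toEnd
  have hT : T ^ 7 = 1 := by rw [← _root_.map_pow, ← hx, pow_orderOf_eq_one, _root_.map_one]
  have hS : S ^ p = 1 := by rw [← _root_.map_pow, ← hy, pow_orderOf_eq_one, _root_.map_one]
  have hfixed : LinearMap.ker (aeval T (X - 1 : (ZMod 2)[X])) = LinearMap.ker (T - 1) := by
    simp
  have hinv (f : (ZMod 2)[X]) {S : Module.End (ZMod 2) (Fin 3 ⊕ Fin 3 → ZMod 2)}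
      (hST : Commute S T) : ∀ v ∈ LinearMap.ker (aeval T f), S v ∈ LinearMap.ker (aeval T f) := by
    intro v hv
    have hcomm : Commute S (aeval T f) := by
      rw [aeval_eq_sum_range]
      exact Commute.sum_right _ _ _ fun i _ => (hST.pow_right i).smul_right _
    rw [LinearMap.mem_ker] at hv ⊢
    rw [← Module.End.mul_apply, ← hcomm.eq, Module.End.mul_apply, hv, _root_.map_zero]
  set f : (ZMod 2)[X] := X ^ 3 + X + 1
  set g : (ZMod 2)[X] := X ^ 3 + X ^ 2 + 1
  have hfbot : LinearMap.ker (aeval T f) ⊓ LinearMap.ker (T - 1) = ⊥ :=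
    hfixed ▸ (disjoint_ker_aeval_of_isCoprime T isCoprime_X_sub_one_cubic).eq_bot
  have hgbot : LinearMap.ker (aeval T g) ⊓ LinearMap.ker (T - 1) = ⊥ :=
    hfixed ▸ (disjoint_ker_aeval_of_isCoprime T isCoprime_X_sub_one_cubic').eq_bot
  have hdisj : Disjoint (LinearMap.ker (aeval T f)) (LinearMap.ker (aeval T g)) :=
    disjoint_ker_aeval_of_isCoprime T isCoprime_cubics
  have heq : finrank (ZMod 2) (LinearMap.ker (aeval T f)) =
      finrank (ZMod 2) (LinearMap.ker (aeval T g)) := finrank_ker_cubic_eq x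
  have hsum := Submodule.finrank_add_finrank_le_of_disjoint hdisj
  rw [finrank_vectors] at hsum
  have hmod := two_pow_finrank_modEq_fixed hT (hinv f (Commute.refl T))
  rw [hfbot, finrank_bot, pow_zero] at hmod
  have hne (z : symplecticGroup (Fin 3) (ZMod 2)) (q : ℕ) (hq : q.Prime) (hz : orderOf z = q) :
      toEnd z ≠ 1 := by
    intro h
    rw [← _root_.map_one toEnd] at h
    rw [toEnd_injective h, orderOf_one] at hz
    exact hq.one_lt.ne hz
  rcases eq_zero_or_three_of_two_pow_modEq_one (by omega) hmod with h0 | h3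
  · have hsup : LinearMap.ker (aeval T f) ⊔ LinearMap.ker (aeval T g) =
        LinearMap.ker (aeval T (f * g)) := sup_ker_aeval_eq_ker_aeval_mul_of_coprime T isCoprime_cubics
    rw [Submodule.finrank_eq_zero.mp h0, Submodule.finrank_eq_zero.mp (heq.symm.trans h0), sup_bot_eq]
      at hsup
    refine hne x 7 (by norm_num) hx (LinearMap.ext fun v => sub_eq_zero.mp ?_)
    have hv : (T - 1) v ∈ LinearMap.ker (aeval T (f * g)) := by
      rw [LinearMap.mem_ker, ← Module.End.mul_apply]
      have h := congrArg (aeval T) X_sub_one_mul_cubics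
      rw [mul_comm, _root_.map_mul] at h
      simp only [map_sub, aeval_X, _root_.map_one, _root_.map_pow, hT, sub_self] at h
      rw [h, LinearMap.zero_apply]
    rw [← hsup] at hv
    exact hv
  · have hSf := le_ker_sub_one_of_commute hp7 hST hS hT (hinv f hST) (hinv f (Commute.refl T))
      hfbot h3
    have hSg := le_ker_sub_one_of_commute hp7 hST hS hT (hinv g hST) (hinv g (Commute.refl T))
      hgbot (heq.symm.trans h3)
    have htop : LinearMap.ker (aeval T f) ⊔ LinearMap.ker (aeval T g) = ⊤ := by
      apply Submodule.eq_top_of_finrank_eq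
      have := Submodule.finrank_sup_add_finrank_inf_eq
        (LinearMap.ker (aeval T f)) (LinearMap.ker (aeval T g))
      rw [hdisj.eq_bot, finrank_bot] at this
      rw [finrank_vectors]
      omega
    have hS1 := top_le_iff.mp (htop ▸ sup_le hSf hSg)
    exact hne y p hp hy (sub_eq_zero.mp (LinearMap.ker_eq_top.mp hS1))

theorem orderOf_ne_seven_mul {p : ℕ} (hp : p.Prime) (hp7 : p ≠ 7)
    (x : symplecticGroup (Fin 3) (ZMod 2)) : orderOf x ≠ 7 * p := by
  intro hx
  have h7 : orderOf (x ^ p) = 7 := by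
    rw [orderOf_pow_of_dvd hp.ne_zero (hx ▸ Dvd.intro_left 7 rfl), hx,
      Nat.mul_div_cancel _ hp.pos]
  have hp' : orderOf (x ^ 7) = p := by
    rw [orderOf_pow_of_dvd (by norm_num) (hx ▸ Dvd.intro p rfl), hx,
      Nat.mul_div_cancel_left _ (by norm_num)]
  exact not_commute_of_orderOf_eq_seven hp hp7 h7 hp' ((Commute.refl x).pow_pow 7 p)

/-- The symplectic matrix with the given blocks. -/
def ofBlocks (A B C D : Matrix (Fin 3) (Fin 3) (ZMod 2))
    (h : fromBlocks A B C D * J (Fin 3) (ZMod 2) * (fromBlocks A B C D)ᵀ = J (Fin 3) (ZMod 2)) :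
    symplecticGroup (Fin 3) (ZMod 2) :=
  ⟨fromBlocks A B C D, mem_iff.mpr h⟩

/-- An involution supported on the third hyperbolic plane. -/
def two₃ : symplecticGroup (Fin 3) (ZMod 2) :=
  ofBlocks 1 !![0, 0, 0; 0, 0, 0; 0, 0, 1] 0 1 (by decide +kernel)

/-- An element of order three supported on the third hyperbolic plane. -/
def three₃ : symplecticGroup (Fin 3) (ZMod 2) :=
  ofBlocks 1 !![0, 0, 0; 0, 0, 0; 0, 0, 1] !![0, 0, 0; 0, 0, 0; 0, 0, 1]
    !![1, 0, 0; 0, 1, 0; 0, 0, 0] (by decide +kernel)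

/-- An element of order three supported on the first hyperbolic plane. -/
def three₁ : symplecticGroup (Fin 3) (ZMod 2) :=
  ofBlocks 1 !![1, 0, 0; 0, 0, 0; 0, 0, 0] !![1, 0, 0; 0, 0, 0; 0, 0, 0]
    !![0, 0, 0; 0, 1, 0; 0, 0, 1] (by decide +kernel)

/-- An element of order five supported on the first two hyperbolic planes. -/
def five₁₂ : symplecticGroup (Fin 3) (ZMod 2) :=
  ofBlocks !![0, 0, 0; 1, 0, 0; 0, 0, 1] !![0, 1, 0; 0, 0, 0; 0, 0, 0]
    !![1, 1, 0; 1, 0, 0; 0, 0, 0] !![0, 0, 0; 1, 1, 0; 0, 0, 1] (by decide +kernel)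

/-- An element of order seven preserving two complementary Lagrangian subspaces. -/
def seven : symplecticGroup (Fin 3) (ZMod 2) :=
  ofBlocks !![0, 0, 1; 1, 0, 1; 0, 1, 0] 0 0 !![1, 0, 1; 1, 0, 0; 0, 1, 0] (by decide +kernel)

theorem orderOf_two₃ : orderOf two₃ = 2 :=
  orderOf_eq_prime (by decide +kernel) (by decide +kernel)

theorem orderOf_three₃ : orderOf three₃ = 3 :=
  orderOf_eq_prime (by decide +kernel) (by decide +kernel)

theorem orderOf_three₁ : orderOf three₁ = 3 :=
  orderOf_eq_prime (by decide +kernel) (by decide +kernel)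

theorem orderOf_five₁₂ : orderOf five₁₂ = 5 :=
  have : Fact (Nat.Prime 5) := ⟨by norm_num⟩
  orderOf_eq_prime (by decide +kernel) (by decide +kernel)

theorem orderOf_seven : orderOf seven = 7 :=
  have : Fact (Nat.Prime 7) := ⟨by norm_num⟩
  orderOf_eq_prime (by decide +kernel) (by decide +kernel)

end SymplecticGroup

namespace Equiv.Perm

theorem orderOf_ne_seven_mul {p : ℕ} (hp : p.Prime) (σ : Perm (Fin 8)) : orderOf σ ≠ 7 * p := by
  intro hσ
  obtain ⟨n, hn, h7n⟩ : ∃ n ∈ σ.cycleType, 7 ∣ n := by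
    by_contra! h
    have hlcm : σ.cycleType.lcm ∣ p := Multiset.lcm_dvd.mpr fun n hn =>
      Nat.Coprime.dvd_of_dvd_mul_left
        (((Nat.Prime.coprime_iff_not_dvd (by norm_num)).mpr (h n hn)).symm)
        (hσ ▸ dvd_of_mem_cycleType hn)
    rw [lcm_cycleType, hσ] at hlcm
    have := Nat.le_of_dvd hp.pos hlcm
    have := hp.pos
    omega
  have hle : n ≤ 8 := (le_card_support_of_mem_cycleType hn).trans (Finset.card_le_univ _)
  have hn2 := two_le_of_mem_cycleType hn
  obtain rfl : n = 7 := by omega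
  have hσ' := lcm_cycleType σ
  rw [cycleType_of_card_le_mem_cycleType_add_two (by simp) hn, hσ, Multiset.lcm_singleton] at hσ'
  have := hp.two_le
  simp at hσ'
  omega

end Equiv.Perm

theorem Commute.exists_orderOf_eq_mul {G : Type*} [Group G] {x y : G} {m n : ℕ}
    (h : Commute x y) (hx : orderOf x = m) (hy : orderOf y = n) (hmn : m.Coprime n) :
    ∃ z : G, orderOf z = m * n :=
  ⟨x * y, by rw [h.orderOf_mul_eq_mul_orderOf_of_coprime (by rwa [hx, hy]), hx, hy]⟩

theorem prime_dvd_factorial_eight_iff {p : ℕ} (hp : p.Prime) :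
    p ∣ Nat.factorial 8 ↔ p = 2 ∨ p = 3 ∨ p = 5 ∨ p = 7 := by
  rw [hp.dvd_factorial]
  refine ⟨fun h => ?_, by omega⟩
  interval_cases p <;> revert hp <;> decide

/-- The edges of the prime graph of a group all of whose prime divisors are at most `7`, in which
`7` is isolated and `2`, `3`, `5` are pairwise adjacent. -/
theorem exists_orderOf_eq_mul_iff {G : Type*} [Group G]
    (hG : ∀ p : ℕ, p.Prime → p ∣ Nat.card G → p ∣ Nat.factorial 8)
    (h7 : ∀ p : ℕ, p.Prime → p ≠ 7 → ∀ x : G, orderOf x ≠ 7 * p)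
    (h23 : ∃ x : G, orderOf x = 2 * 3) (h25 : ∃ x : G, orderOf x = 2 * 5)
    (h35 : ∃ x : G, orderOf x = 3 * 5) {r s : ℕ} (hr : r.Prime) (hs : s.Prime) (hrs : r ≠ s) :
    (∃ x : G, orderOf x = r * s) ↔ r * s = 6 ∨ r * s = 10 ∨ r * s = 15 := by
  constructor
  · rintro ⟨x, hx⟩
    have hr8 := (prime_dvd_factorial_eight_iff hr).mp
      (hG r hr ((hx ▸ Dvd.intro s rfl).trans (orderOf_dvd_natCard x)))
    have hs8 := (prime_dvd_factorial_eight_iff hs).mp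
      (hG s hs ((hx ▸ Dvd.intro_left r rfl).trans (orderOf_dvd_natCard x)))
    have hr7 : r ≠ 7 := fun h => h7 s hs (h ▸ hrs.symm) x (h ▸ hx)
    have hs7 : s ≠ 7 := fun h => h7 r hr (h ▸ hrs) x (by rw [hx, h, mul_comm])
    rcases hr8 with rfl | rfl | rfl | rfl <;> rcases hs8 with rfl | rfl | rfl | rfl <;> simp_all
  · rintro (h | h | h) <;> rw [h] <;> assumption

/-- `Γ(Sp₆(2)) = Γ(S₈)`: the same primes divide `|Sp₆(2)|` and `8!`, and for all
distinct primes `r, s`, `Sp₆(2)` has an element of order `r * s` iff `S₈` does. -/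
theorem prime_graph_Sp6_2_eq_S8 :
    (∀ t : ℕ, t.Prime →
      (t ∣ Nat.card (Matrix.symplecticGroup (Fin 3) (ZMod 2)) ↔ t ∣ Nat.factorial 8)) ∧
    (∀ r s : ℕ, r.Prime → s.Prime → r ≠ s →
      ((∃ x : Matrix.symplecticGroup (Fin 3) (ZMod 2), orderOf x = r * s) ↔
        (∃ y : Equiv.Perm (Fin 8), orderOf y = r * s))) := by
  refine ⟨fun t ht => ⟨SymplecticGroup.dvd_factorial_of_prime_dvd_card ht, fun h => ?_⟩,
    fun r s hr hs hrs => ?_⟩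
  · rcases (prime_dvd_factorial_eight_iff ht).mp h with rfl | rfl | rfl | rfl
    · exact (dvd_of_eq SymplecticGroup.orderOf_two₃.symm).trans (orderOf_dvd_natCard _)
    · exact (dvd_of_eq SymplecticGroup.orderOf_three₃.symm).trans (orderOf_dvd_natCard _)
    · exact (dvd_of_eq SymplecticGroup.orderOf_five₁₂.symm).trans (orderOf_dvd_natCard _)
    · exact (dvd_of_eq SymplecticGroup.orderOf_seven.symm).trans (orderOf_dvd_natCard _)
  · have : Fact (Nat.Prime 5) := ⟨by norm_num⟩
    rw [exists_orderOf_eq_mul_iff (fun _ => SymplecticGroup.dvd_factorial_of_prime_dvd_card)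
        (fun _ => SymplecticGroup.orderOf_ne_seven_mul)
        (Commute.exists_orderOf_eq_mul (by unfold Commute SemiconjBy; decide +kernel)
          SymplecticGroup.orderOf_two₃ SymplecticGroup.orderOf_three₁ (by norm_num))
        (Commute.exists_orderOf_eq_mul (by unfold Commute SemiconjBy; decide +kernel)
          SymplecticGroup.orderOf_two₃ SymplecticGroup.orderOf_five₁₂ (by norm_num))
        (Commute.exists_orderOf_eq_mul (by unfold Commute SemiconjBy; decide +kernel)
          SymplecticGroup.orderOf_three₃ SymplecticGroup.orderOf_five₁₂ (by norm_num)) hr hs hrs,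
      exists_orderOf_eq_mul_iff (G := Equiv.Perm (Fin 8))
        (fun p _ h => by rwa [Nat.card_perm, Nat.card_fin] at h)
        (fun _ hp _ => Equiv.Perm.orderOf_ne_seven_mul hp)
        (Commute.exists_orderOf_eq_mul
          (x := c[5, 6]) (y := c[0, 1, 2]) (by unfold Commute SemiconjBy; decide +kernel)
          (orderOf_eq_prime (by decide +kernel) (by decide +kernel))
          (orderOf_eq_prime (by decide +kernel) (by decide +kernel)) (by norm_num))
        (Commute.exists_orderOf_eq_mul
          (x := c[5, 6]) (y := c[0, 1, 2, 3, 4]) (by unfold Commute SemiconjBy; decide +kernel)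
          (orderOf_eq_prime (by decide +kernel) (by decide +kernel))
          (orderOf_eq_prime (by decide +kernel) (by decide +kernel)) (by norm_num))
        (Commute.exists_orderOf_eq_mul
          (x := c[5, 6, 7]) (y := c[0, 1, 2, 3, 4]) (by unfold Commute SemiconjBy; decide +kernel)
          (orderOf_eq_prime (by decide +kernel) (by decide +kernel))
          (orderOf_eq_prime (by decide +kernel) (by decide +kernel)) (by norm_num)) hr hs hrs]
end

section
/- Let G be the quotient of Sp_4(3) = Matrix.symplecticGroup (Fin 2) (ZMod 3) by its center (so G ≅ PSp_4(3) ≅ U_4(2)). Then Γ(G) = Γ(S_6), where S_6 = Equiv.Perm (Fin 6). Explicitly: a prime divides |G| iff it divides 6!, and for all distinct primes r, s, G has an element of order r·s iff S_6 has an element of order r·s. -/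
open Matrix Polynomial

theorem Matrix.charpolyRev_eq_charpoly_of_mem_symplecticGroup {l R : Type*} [DecidableEq l]
    [Fintype l] [CommRing R] {M : Matrix (l ⊕ l) (l ⊕ l) R} (hM : M ∈ symplecticGroup l R) :
    M.charpolyRev = M.charpoly := by
  have hdet : M.det = 1 := SymplecticGroup.det_eq_one hM
  have hM' : IsUnit M := by rw [Matrix.isUnit_iff_isUnit_det, hdet]; exact isUnit_one
  have h := Matrix.charpoly_inv M hM'
  rw [SymplecticGroup.inv_eq_symplectic_inv M hM, mul_assoc, charpoly_mul_comm, mul_assoc,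
    mul_neg, J_squared, neg_neg, mul_one, charpoly_transpose, hdet] at h
  simpa using h.symm

theorem pow_eq_one_of_palindromic_quartic {R : Type*} [CommRing R] [Algebra (ZMod 3) R]
    (a b : ZMod 3) (x : R)
    (h : x ^ 4 + algebraMap _ R a * x ^ 3 + algebraMap _ R b * x ^ 2 + algebraMap _ R a * x + 1
      = 0) :
    x ^ 72 = 1 ∨ x ^ 5 = 1 ∨ x ^ 5 = -1 := by
  have h3 : (3 : R) = 0 := by
    rw [← map_ofNat (algebraMap (ZMod 3) R) 3, show (OfNat.ofNat 3 : ZMod 3) = 0 from rfl, map_zero]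
  have key : ∀ c : ZMod 3, c = 0 ∨ c = 1 ∨ c = -1 := by decide
  rcases key a with rfl | rfl | rfl <;> rcases key b with rfl | rfl | rfl <;>
    simp only [map_zero, map_one, map_neg] at h
  case inr.inl.inr.inl => right; left; grind
  case inr.inr.inr.inl => right; right; grind
  all_goals left; grind

theorem charpoly_symplecticGroup_fin_two {R : Type*} [CommRing R] [Nontrivial R]
    {M : Matrix (Fin 2 ⊕ Fin 2) (Fin 2 ⊕ Fin 2) R} (hM : M ∈ symplecticGroup (Fin 2) R) :
    ∃ a b : R, M.charpoly = X ^ 4 + C a * X ^ 3 + C b * X ^ 2 + C a * X + 1 := by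
  have hdeg : M.charpoly.natDegree = 4 := by simp [charpoly_natDegree_eq_dim]
  have hcoeff : ∀ i ≤ 4, M.charpoly.coeff i = M.charpoly.coeff (4 - i) := fun i hi => by
    conv_lhs => rw [← charpolyRev_eq_charpoly_of_mem_symplecticGroup hM, ← reverse_charpoly]
    rw [coeff_reverse, hdeg, revAt_le hi]
  have h4 : M.charpoly.coeff 4 = 1 := hdeg ▸ M.charpoly_monic.coeff_natDegree
  refine ⟨M.charpoly.coeff 3, M.charpoly.coeff 2, ?_⟩
  conv_lhs => rw [M.charpoly.as_sum_range_C_mul_X_pow, hdeg]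
  simp only [Finset.sum_range_succ, Finset.sum_range_zero, hcoeff 0 (by simp), hcoeff 1 (by simp),
    h4, Nat.sub_zero, Nat.reduceSub, map_one]
  ring

theorem pow_eq_one_of_mem_symplecticGroup {M : Matrix (Fin 2 ⊕ Fin 2) (Fin 2 ⊕ Fin 2) (ZMod 3)}
    (hM : M ∈ symplecticGroup (Fin 2) (ZMod 3)) : M ^ 72 = 1 ∨ M ^ 5 = 1 ∨ M ^ 5 = -1 := by
  obtain ⟨a, b, h⟩ := charpoly_symplecticGroup_fin_two hM
  have hroot := pow_eq_one_of_palindromic_quartic a b (AdjoinRoot.root M.charpoly) (by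
    have := AdjoinRoot.eval₂_root M.charpoly
    conv_lhs at this => arg 3; rw [h]
    simpa using this)
  have hdvd {q : (ZMod 3)[X]} (hq : M.charpoly ∣ q) : aeval M q = 0 :=
    aeval_eq_zero_of_dvd_aeval_eq_zero hq (aeval_self_charpoly M)
  refine hroot.imp (fun h => ?_) (Or.imp (fun h => ?_) (fun h => ?_))
  · have := hdvd (q := X ^ 72 - 1) (AdjoinRoot.mk_eq_zero.1 (by simp [h]))
    simpa [sub_eq_zero] using this
  · have := hdvd (q := X ^ 5 - 1) (AdjoinRoot.mk_eq_zero.1 (by simp [h]))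
    simpa [sub_eq_zero] using this
  · have := hdvd (q := X ^ 5 + 1) (AdjoinRoot.mk_eq_zero.1 (by simp [h]))
    simpa [eq_neg_iff_add_eq_zero] using this

/-- The symplectic transvection along `e₁` times the diagonal involution negating the
plane spanned by `e₂` and `f₂`. -/
def symplecticOrderSix : symplecticGroup (Fin 2) (ZMod 3) :=
  ⟨fromBlocks !![1, 0; 0, -1] !![1, 0; 0, 0] 0 !![1, 0; 0, -1], by
    rw [SymplecticGroup.fromBlocks_mem_iff]; decide⟩

/-- A symplectic matrix whose characteristic polynomial is the fifth cyclotomic polynomial. -/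
def symplecticOrderFive : symplecticGroup (Fin 2) (ZMod 3) :=
  ⟨fromBlocks 0 (-1) 1 !![-1, -1; -1, 0], by
    rw [SymplecticGroup.fromBlocks_mem_iff]; decide⟩

theorem not_mem_center_of_mul_ne_mul {G : Type*} [Group G] {a b : G} (h : a * b ≠ b * a) :
    a ∉ Subgroup.center G := fun ha => h (Subgroup.mem_center_iff.1 ha b).symm

theorem orderOf_mk_symplecticOrderSix :
    orderOf (symplecticOrderSix : symplecticGroup (Fin 2) (ZMod 3) ⧸
      Subgroup.center (symplecticGroup (Fin 2) (ZMod 3))) = 6 := by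
  refine orderOf_eq_of_pow_and_pow_div_prime (by norm_num) ?_ ?_
  · rw [← QuotientGroup.mk_pow, show symplecticOrderSix ^ 6 = 1 by decide +kernel]
    rfl
  · intro p hp hd
    have : p = 2 ∨ p = 3 := by
      have := Nat.le_of_dvd (by norm_num) hd
      interval_cases p <;> revert hp hd <;> decide
    rw [← QuotientGroup.mk_pow, Ne, QuotientGroup.eq_one_iff]
    rcases this with rfl | rfl
    all_goals exact not_mem_center_of_mul_ne_mul (b := symplecticOrderFive) (by decide +kernel)

theorem orderOf_mk_symplecticOrderFive :
    orderOf (symplecticOrderFive : symplecticGroup (Fin 2) (ZMod 3) ⧸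
      Subgroup.center (symplecticGroup (Fin 2) (ZMod 3))) = 5 := by
  have : Fact (Nat.Prime 5) := ⟨by norm_num⟩
  refine orderOf_eq_prime ?_ ?_
  · rw [← QuotientGroup.mk_pow, show symplecticOrderFive ^ 5 = 1 by decide +kernel]
    rfl
  · rw [Ne, QuotientGroup.eq_one_iff]
    exact not_mem_center_of_mul_ne_mul (b := SymplecticGroup.symJ _ _) (by decide +kernel)

theorem pow_eq_one_symplecticGroup_quotient_center (x : symplecticGroup (Fin 2) (ZMod 3) ⧸
          Subgroup.center (symplecticGroup (Fin 2) (ZMod 3))) : x ^ 72 = 1 ∨ x ^ 5 = 1 := by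
  induction x using QuotientGroup.induction_on with | H M =>
  simp only [← QuotientGroup.mk_pow, QuotientGroup.eq_one_iff]
  rcases pow_eq_one_of_mem_symplecticGroup M.2 with h | h | h
  · left
    rw [show M ^ 72 = 1 from Subtype.ext h]
    exact one_mem _
  · right
    rw [show M ^ 5 = 1 from Subtype.ext h]
    exact one_mem _
  · right
    refine Subgroup.mem_center_iff.2 fun g => Subtype.ext ?_
    simp [h]

theorem exists_orderOf_eq_prime_mul_prime_iff {G : Type*} [Group G]
    (h : ∀ x : G, x ^ 72 = 1 ∨ x ^ 5 = 1)
    (h6 : ∃ x : G, orderOf x = 6) {r s : ℕ} (hr : r.Prime) (hs : s.Prime) (hrs : r ≠ s) :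
    (∃ x : G, orderOf x = r * s) ↔ r * s = 6 := by
  constructor
  · rintro ⟨x, hx⟩
    have key : ∀ p : ℕ, p.Prime → p ∣ 72 → p = 2 ∨ p = 3 := fun p hp hd => by
      rw [show 72 = 2 ^ 3 * 3 ^ 2 by norm_num, hp.dvd_mul] at hd
      exact hd.imp (fun h => (Nat.prime_dvd_prime_iff_eq hp Nat.prime_two).1 (hp.dvd_of_dvd_pow h))
        (fun h => (Nat.prime_dvd_prime_iff_eq hp Nat.prime_three).1 (hp.dvd_of_dvd_pow h))
    rcases h x with h | h
    · have hd := orderOf_dvd_of_pow_eq_one h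
      rw [hx] at hd
      rcases key r hr (dvd_of_mul_right_dvd hd) with rfl | rfl <;>
        rcases key s hs (dvd_of_mul_left_dvd hd) with rfl | rfl <;> simp_all
    · have hd := orderOf_dvd_of_pow_eq_one h
      rw [hx] at hd
      have h1 := (Nat.prime_dvd_prime_iff_eq hr Nat.prime_five).1 (dvd_of_mul_right_dvd hd)
      have h2 := (Nat.prime_dvd_prime_iff_eq hs Nat.prime_five).1 (dvd_of_mul_left_dvd hd)
      exact absurd (h1.trans h2.symm) hrs
  · rintro h
    rwa [h]

theorem prime_dvd_card_iff {G : Type*} [Group G] [Finite G] (h : ∀ x : G, x ^ 72 = 1 ∨ x ^ 5 = 1)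
    (h6 : ∃ x : G, orderOf x = 6) (h5 : ∃ x : G, orderOf x = 5) {t : ℕ} (ht : t.Prime) :
    t ∣ Nat.card G ↔ t ∣ Nat.factorial 6 := by
  constructor
  · intro hd
    have : Fact t.Prime := ⟨ht⟩
    obtain ⟨x, hx⟩ := exists_prime_orderOf_dvd_card' t hd
    rcases h x with h | h
    · have h72 : t ∣ 6 ^ 3 :=
        (hx ▸ orderOf_dvd_of_pow_eq_one h : t ∣ 72).trans (by norm_num)
      exact (ht.dvd_of_dvd_pow h72).trans (by decide)
    · exact (hx ▸ orderOf_dvd_of_pow_eq_one h : t ∣ 5).trans (by decide)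
  · intro hd
    obtain ⟨x, hx⟩ := h6
    obtain ⟨y, hy⟩ := h5
    rw [show Nat.factorial 6 = 6 * (2 ^ 3 * 3 * 5) by decide] at hd
    have h30 : t ∣ 6 * 5 := ht.dvd_of_dvd_pow (n := 4) (hd.trans (by norm_num))
    exact (ht.dvd_mul.1 h30).elim (fun h => h.trans (hx ▸ orderOf_dvd_natCard x))
      (fun h => h.trans (hy ▸ orderOf_dvd_natCard y))

theorem Equiv.Perm.pow_eq_one_fin_six (y : Equiv.Perm (Fin 6)) : y ^ 72 = 1 ∨ y ^ 5 = 1 := by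
  have hsum : y.cycleType.sum ≤ 6 := by
    rw [Equiv.Perm.sum_cycleType]
    exact (Finset.card_le_univ _).trans (by simp)
  simp only [← orderOf_dvd_iff_pow_eq_one, ← Equiv.Perm.lcm_cycleType]
  by_cases h5 : 5 ∈ y.cycleType
  · right
    obtain ⟨t, ht⟩ := Multiset.exists_cons_of_mem h5
    have ht0 : t = 0 := by
      refine Multiset.eq_zero_of_forall_notMem fun c hc => ?_
      have h2 := Equiv.Perm.two_le_of_mem_cycleType (ht ▸ Multiset.mem_cons_of_mem hc)
      have hle := Multiset.le_sum_of_mem hc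
      rw [ht, Multiset.sum_cons] at hsum
      omega
    simp [ht, ht0]
  · left
    refine Multiset.lcm_dvd.2 fun c hc => ?_
    have h2 := Equiv.Perm.two_le_of_mem_cycleType hc
    have hle := (Multiset.le_sum_of_mem hc).trans hsum
    have hne : c ≠ 5 := fun h => h5 (h ▸ hc)
    interval_cases c <;> first | contradiction | norm_num

theorem Equiv.Perm.exists_orderOf_eq_six_fin_six : ∃ y : Equiv.Perm (Fin 6), orderOf y = 6 :=
  ⟨finRotate 6, by
    rw [← Equiv.Perm.lcm_cycleType, cycleType_finRotate]
    simp⟩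

/-- `Γ(PSp₄(3)) = Γ(S₆)` (the row `(U₄(2), Sp₄(2))` of Table 1, using
`U₄(2) ≅ PSp₄(3)` and `Sp₄(2) ≅ S₆`): the same primes divide `|PSp₄(3)|` and `6!`,
and for all distinct primes `r, s`, `PSp₄(3)` has an element of order `r * s` iff
`S₆` does. -/
theorem prime_graph_PSp4_3_eq_S6 :
    (∀ t : ℕ, t.Prime →
      (t ∣ Nat.card (Matrix.symplecticGroup (Fin 2) (ZMod 3) ⧸
          Subgroup.center (Matrix.symplecticGroup (Fin 2) (ZMod 3))) ↔
        t ∣ Nat.factorial 6)) ∧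
    (∀ r s : ℕ, r.Prime → s.Prime → r ≠ s →
      ((∃ x : Matrix.symplecticGroup (Fin 2) (ZMod 3) ⧸
          Subgroup.center (Matrix.symplecticGroup (Fin 2) (ZMod 3)), orderOf x = r * s) ↔
        (∃ y : Equiv.Perm (Fin 6), orderOf y = r * s))) := by
  have h := pow_eq_one_symplecticGroup_quotient_center
  have h6 := (⟨_, orderOf_mk_symplecticOrderSix⟩ : ∃ x, orderOf x = 6)
  have h5 := (⟨_, orderOf_mk_symplecticOrderFive⟩ : ∃ x, orderOf x = 5)
  refine ⟨fun t ht => prime_dvd_card_iff h h6 h5 ht, fun r s hr hs hrs => ?_⟩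
  rw [exists_orderOf_eq_prime_mul_prime_iff h h6 hr hs hrs,
    exists_orderOf_eq_prime_mul_prime_iff Equiv.Perm.pow_eq_one_fin_six
      Equiv.Perm.exists_orderOf_eq_six_fin_six hr hs hrs]
end

section
/- Let G = Matrix.GeneralLinearGroup (Fin 6) (ZMod 2) (equal to SL_6(2) = L_6(2), which is simple) acting naturally on the vector space Fin 6 → ZMod 2, and let H be the stabilizer in G of the standard basis vector e_0 (equivalently, of the 1-dimensional subspace it spans), i.e. the maximal parabolic subgroup P_1 ≅ 2^5.L_5(2). Then Γ(G) = Γ(H): a prime divides |G| iff it divides |H|, and for all distinct primes r, s, G has an element of order r·s iff H has an element of order r·s. -/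
/-- The natural action of `GL₆(𝔽₂)` on the vector space `Fin 6 → ZMod 2`,
given by matrix-vector multiplication. -/
instance glMulAction : MulAction (Matrix.GeneralLinearGroup (Fin 6) (ZMod 2))
    (Fin 6 → ZMod 2) where
  smul g v := Matrix.mulVec (g : Matrix (Fin 6) (Fin 6) (ZMod 2)) v
  one_smul v := Matrix.one_mulVec v
  mul_smul g h v := (Matrix.mulVec_mulVec v (g : Matrix (Fin 6) (Fin 6) (ZMod 2))
    (h : Matrix (Fin 6) (Fin 6) (ZMod 2))).symm

open Module Matrix

section FixedSpaces

variable {V : Type*} [AddCommGroup V] [Module (ZMod 2) V]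

lemma apply_mem_ker_sub_one {f g : End (ZMod 2) V} (h : Commute f g) :
    ∀ v ∈ LinearMap.ker (g - 1), f v ∈ LinearMap.ker (g - 1) := by
  intro v hv
  have hv' : g v = v := by simpa [sub_eq_zero] using hv
  have hgf : g (f v) = f (g v) := (LinearMap.congr_fun h v).symm
  simp [hgf, hv']

variable [Finite V]

/-- An endomorphism `f` with `f ^ p = 1` moves the vectors of an invariant subspace in cycles of
length `p`, except for those that it fixes. -/
lemma two_pow_finrank_modEq_inf_ker {p : ℕ} [Fact p.Prime] {f : End (ZMod 2) V}
    (hf : f ^ p = 1) {W : Submodule (ZMod 2) V} (hW : ∀ w ∈ W, f w ∈ W) :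
    2 ^ finrank (ZMod 2) W ≡ 2 ^ finrank (ZMod 2) ↥(W ⊓ LinearMap.ker (f - 1)) [MOD p] := by
  classical
  have := Fintype.ofFinite W
  let toFunctionEnd : End (ZMod 2) W →* Function.End W :=
    { toFun := fun g w => g w
      map_one' := rfl
      map_mul' := fun _ _ => rfl }
  let φ : Function.End W := toFunctionEnd (f.restrict hW)
  have hφ : φ ^ p ^ 1 = 1 := by
    have h : f.restrict hW ^ p = 1 := by
      ext v
      simp [Module.End.pow_restrict, hf]
    rw [pow_one, ← map_pow, h, map_one]
  have key := Equiv.Perm.card_fixedPoints_modEq hφ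
  have e : Function.fixedPoints φ ≃ ↥(W ⊓ LinearMap.ker (f - 1)) :=
    { toFun := fun w => ⟨w.1, w.1.2, sub_eq_zero.mpr (congrArg Subtype.val w.2)⟩
      invFun := fun w => ⟨⟨w, w.2.1⟩, Subtype.ext (sub_eq_zero.mp w.2.2)⟩
      left_inv := fun _ => rfl
      right_inv := fun _ => rfl }
  rw [← Nat.card_eq_fintype_card, Fintype.card_eq_nat_card, Nat.card_congr e,
    natCard_eq_pow_finrank (K := ZMod 2) (V := W),
    natCard_eq_pow_finrank (K := ZMod 2) (V := ↥(W ⊓ _)), Nat.card_zmod] at key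
  exact key

lemma two_pow_finrank_modEq_ker {p : ℕ} [Fact p.Prime] {f : End (ZMod 2) V} (hf : f ^ p = 1) :
    2 ^ finrank (ZMod 2) V ≡ 2 ^ finrank (ZMod 2) (LinearMap.ker (f - 1)) [MOD p] := by
  have h := two_pow_finrank_modEq_inf_ker hf (W := ⊤) fun _ _ => Submodule.mem_top
  rwa [top_inf_eq, finrank_top] at h

lemma finrank_ker_sub_one_lt {f : End (ZMod 2) V} (hf : f ≠ 1) :
    finrank (ZMod 2) (LinearMap.ker (f - 1)) < finrank (ZMod 2) V :=
  Submodule.finrank_lt fun h => hf (sub_eq_zero.mp (LinearMap.ker_eq_top.mp h))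

lemma finrank_le_two_mul_finrank_ker {g : End (ZMod 2) V} (hg : g ^ 2 = 1) :
    finrank (ZMod 2) V ≤ 2 * finrank (ZMod 2) (LinearMap.ker (g - 1)) := by
  have hsq : (g - 1) * (g - 1) = 0 := by
    have h2 : g + g = 0 := by
      ext v
      simp [← two_smul (ZMod 2), show (2 : ZMod 2) = 0 from rfl]
    calc (g - 1) * (g - 1) = g ^ 2 + 1 - (g + g) := by noncomm_ring
      _ = 0 := by
        rw [hg, h2]
        ext v
        simp [← two_smul (ZMod 2), show (2 : ZMod 2) = 0 from rfl]
  have hle : LinearMap.range (g - 1) ≤ LinearMap.ker (g - 1) :=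
    LinearMap.range_le_ker_iff.mpr hsq
  have := Submodule.finrank_mono hle
  have := LinearMap.finrank_range_add_finrank_ker (g - 1)
  omega

/-- In dimension six over `𝔽₂`, elements of order `31` commute with no elements of other prime
order. -/
lemma eq_thirtyone_of_commute (hV : finrank (ZMod 2) V = 6) {p : ℕ} (hp : p.Prime)
    {f g : End (ZMod 2) V} (hfg : Commute f g) (hf : f ^ 31 = 1) (hf1 : f ≠ 1)
    (hg : g ^ p = 1) (hg1 : g ≠ 1) : p = 31 := by
  have : Fact p.Prime := ⟨hp⟩
  have : Fact (Nat.Prime 31) := ⟨by norm_num⟩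
  have two_pow_modEq : ∀ d < 6, 2 ≡ 2 ^ d [MOD 31] → d = 1 := by decide
  have hF : finrank (ZMod 2) (LinearMap.ker (f - 1)) = 1 :=
    two_pow_modEq _ (hV ▸ finrank_ker_sub_one_lt hf1)
      (.trans (by decide) (hV ▸ two_pow_finrank_modEq_ker hf))
  have hFG : finrank (ZMod 2) ↥(LinearMap.ker (g - 1) ⊓ LinearMap.ker (f - 1)) = 1 := by
    have h := two_pow_finrank_modEq_inf_ker hg (apply_mem_ker_sub_one hfg.symm)
    have hle := Submodule.finrank_mono
      (inf_le_right : LinearMap.ker (g - 1) ⊓ LinearMap.ker (f - 1) ≤ _)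
    rw [inf_comm, hF] at h
    rw [hF] at hle
    by_contra hne
    rw [show finrank (ZMod 2) ↥(LinearMap.ker (g - 1) ⊓ LinearMap.ker (f - 1)) = 0 by omega] at h
    exact hp.one_lt.ne' (Nat.dvd_one.mp ((Nat.modEq_iff_dvd' (by norm_num)).mp h.symm))
  have hG : finrank (ZMod 2) (LinearMap.ker (g - 1)) = 1 := by
    have h := two_pow_finrank_modEq_inf_ker hf (apply_mem_ker_sub_one hfg)
    rw [hFG] at h
    exact two_pow_modEq _ (hV ▸ finrank_ker_sub_one_lt hg1) h.symm
  have hdvd : p ∣ 2 * 31 := by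
    have h := two_pow_finrank_modEq_ker hg
    rw [hV, hG] at h
    exact (Nat.modEq_iff_dvd' (by norm_num)).mp h.symm
  rcases hp.dvd_mul.mp hdvd with h | h
  · rw [(Nat.prime_dvd_prime_iff_eq hp Nat.prime_two).mp h] at hg
    have := finrank_le_two_mul_finrank_ker hg
    omega
  · exact (Nat.prime_dvd_prime_iff_eq hp (by norm_num)).mp h

/-- In dimension six over `𝔽₂`, elements of order `5` and `7` do not commute. -/
lemma not_commute_of_pow_five_of_pow_seven (hV : finrank (ZMod 2) V = 6)
    {f g : End (ZMod 2) V} (hf : f ^ 5 = 1) (hf1 : f ≠ 1) (hg : g ^ 7 = 1) (hg1 : g ≠ 1) :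
    ¬ Commute f g := by
  intro hfg
  have : Fact (Nat.Prime 5) := ⟨by norm_num⟩
  have : Fact (Nat.Prime 7) := ⟨by norm_num⟩
  have hF := two_pow_finrank_modEq_ker hf
  have hFG := two_pow_finrank_modEq_inf_ker hg (apply_mem_ker_sub_one hfg.symm)
  have hG := two_pow_finrank_modEq_ker hg
  have hGF := two_pow_finrank_modEq_inf_ker hf (apply_mem_ker_sub_one hfg)
  have hle := Submodule.finrank_mono
    (inf_le_left : LinearMap.ker (f - 1) ⊓ LinearMap.ker (g - 1) ≤ _)
  have hFlt := finrank_ker_sub_one_lt hf1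
  have hGlt := finrank_ker_sub_one_lt hg1
  rw [inf_comm] at hGF
  rw [hV] at hF hG hFlt hGlt
  generalize finrank (ZMod 2) ↥(LinearMap.ker (f - 1) ⊓ LinearMap.ker (g - 1)) = c at *
  generalize finrank (ZMod 2) (LinearMap.ker (f - 1)) = a at *
  generalize finrank (ZMod 2) (LinearMap.ker (g - 1)) = b at *
  have ha : a = 2 := (by decide : ∀ a < 6, 2 ^ 6 ≡ 2 ^ a [MOD 5] → a = 2) a hFlt hF
  subst ha
  have hc : c = 2 :=
    (by decide : ∀ c < 3, 2 ^ 2 ≡ 2 ^ c [MOD 7] → c = 2) c (Nat.lt_succ_of_le hle) hFG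
  subst hc
  exact (by decide : ∀ b < 6, 2 ^ 6 ≡ 2 ^ b [MOD 7] → ¬ 2 ^ b ≡ 2 ^ 2 [MOD 5]) b hGlt hG hGF

end FixedSpaces

/-- If `GL₆(𝔽₂)` has an element of order `r * s`, then there are commuting endomorphisms of order
`r` and `s`. -/
lemma exists_commute_end_of_orderOf_eq_mul {r s : ℕ} (hr : r.Prime) (hs : s.Prime)
    {x : GL (Fin 6) (ZMod 2)} (hx : orderOf x = r * s) :
    ∃ f g : End (ZMod 2) (Fin 6 → ZMod 2),
      Commute f g ∧ f ^ r = 1 ∧ f ≠ 1 ∧ g ^ s = 1 ∧ g ≠ 1 := by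
  let φ : GL (Fin 6) (ZMod 2) →* End (ZMod 2) (Fin 6 → ZMod 2) :=
    (toLinAlgEquiv' : Matrix (Fin 6) (Fin 6) (ZMod 2) ≃ₐ[ZMod 2] _).toMonoidHom.comp
      (Units.coeHom _)
  have hφ : Function.Injective φ := (AlgEquiv.injective toLinAlgEquiv').comp Units.val_injective
  have ho : orderOf (φ x) = r * s := (orderOf_injective φ hφ x).trans hx
  have hpow : φ x ^ (r * s) = 1 := ho ▸ pow_orderOf_eq_one (φ x)
  refine ⟨φ x ^ s, φ x ^ r, Commute.pow_pow_self _ _ _, ?_, ?_, ?_, ?_⟩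
  · rw [← pow_mul, mul_comm, hpow]
  · exact pow_ne_one_of_lt_orderOf hs.ne_zero (ho ▸ lt_mul_left hs.pos hr.one_lt)
  · rw [← pow_mul, hpow]
  · exact pow_ne_one_of_lt_orderOf hr.ne_zero (ho ▸ lt_mul_right hr.pos hs.one_lt)

lemma exists_stabilizer_orderOf_eq {n : ℕ} (hn : n ≠ 0) {A : Matrix (Fin 6) (Fin 6) (ZMod 2)}
    (hA : orderOf A = n) (hA0 : A *ᵥ Pi.single 0 1 = Pi.single 0 1) :
    ∃ y : MulAction.stabilizer (GL (Fin 6) (ZMod 2)) (Pi.single 0 1 : Fin 6 → ZMod 2),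
      orderOf y = n := by
  let u : GL (Fin 6) (ZMod 2) := Units.ofPowEqOne A n (hA ▸ pow_orderOf_eq_one A) hn
  have hu : u ∈ MulAction.stabilizer (GL (Fin 6) (ZMod 2)) (Pi.single 0 1 : Fin 6 → ZMod 2) := hA0
  exact ⟨⟨u, hu⟩, (Subgroup.orderOf_mk u hu).trans (orderOf_units.symm.trans hA)⟩

lemma exists_stabilizer_orderOf_eq_mul {r s : ℕ} (hr : r.Prime) (hs : s.Prime) (hrs : r ≠ s)
    {A B : Matrix (Fin 6) (Fin 6) (ZMod 2)} (hAB : A * B = B * A)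
    (hA : orderOf A = r) (hB : orderOf B = s)
    (hA0 : A *ᵥ Pi.single 0 1 = Pi.single 0 1) (hB0 : B *ᵥ Pi.single 0 1 = Pi.single 0 1) :
    ∃ y : MulAction.stabilizer (GL (Fin 6) (ZMod 2)) (Pi.single 0 1 : Fin 6 → ZMod 2),
      orderOf y = r * s := by
  refine exists_stabilizer_orderOf_eq (A := A * B) (mul_ne_zero hr.ne_zero hs.ne_zero) ?_ ?_
  · subst hA hB
    exact Commute.orderOf_mul_eq_mul_orderOf_of_coprime hAB ((Nat.coprime_primes hr hs).mpr hrs)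
  · rw [← mulVec_mulVec, hB0, hA0]

/-- A transvection fixing all standard basis vectors but the second. -/
def transvectionMatrix : Matrix (Fin 6) (Fin 6) (ZMod 2) :=
  !![1, 1, 0, 0, 0, 0;
     0, 1, 0, 0, 0, 0;
     0, 0, 1, 0, 0, 0;
     0, 0, 0, 1, 0, 0;
     0, 0, 0, 0, 1, 0;
     0, 0, 0, 0, 0, 1]

/-- The companion matrix of `X ^ 2 + X + 1` on the second and third coordinates. -/
def orderThreeMatrix : Matrix (Fin 6) (Fin 6) (ZMod 2) :=
  !![1, 0, 0, 0, 0, 0;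
     0, 0, 1, 0, 0, 0;
     0, 1, 1, 0, 0, 0;
     0, 0, 0, 1, 0, 0;
     0, 0, 0, 0, 1, 0;
     0, 0, 0, 0, 0, 1]

/-- The companion matrix of `X ^ 4 + X ^ 3 + X ^ 2 + X + 1` on the last four coordinates. -/
def orderFiveMatrix : Matrix (Fin 6) (Fin 6) (ZMod 2) :=
  !![1, 0, 0, 0, 0, 0;
     0, 1, 0, 0, 0, 0;
     0, 0, 0, 0, 0, 1;
     0, 0, 1, 0, 0, 1;
     0, 0, 0, 1, 0, 1;
     0, 0, 0, 0, 1, 1]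

/-- On the last four coordinates, the matrix `C ^ 2 + C ^ 3` for `C` the companion matrix of
`X ^ 4 + X ^ 3 + X ^ 2 + X + 1`: a primitive cube root of unity in `𝔽₁₆`. -/
def cubeRootMatrix : Matrix (Fin 6) (Fin 6) (ZMod 2) :=
  !![1, 0, 0, 0, 0, 0;
     0, 1, 0, 0, 0, 0;
     0, 0, 0, 1, 0, 1;
     0, 0, 0, 1, 1, 1;
     0, 0, 1, 1, 1, 0;
     0, 0, 1, 0, 1, 0]

/-- The companion matrix of `X ^ 3 + X + 1` on the last three coordinates. -/
def orderSevenMatrix : Matrix (Fin 6) (Fin 6) (ZMod 2) :=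
  !![1, 0, 0, 0, 0, 0;
     0, 1, 0, 0, 0, 0;
     0, 0, 1, 0, 0, 0;
     0, 0, 0, 0, 0, 1;
     0, 0, 0, 1, 0, 1;
     0, 0, 0, 0, 1, 0]

/-- The companion matrix of `X ^ 5 + X ^ 2 + 1` on the last five coordinates. -/
def orderThirtyoneMatrix : Matrix (Fin 6) (Fin 6) (ZMod 2) :=
  !![1, 0, 0, 0, 0, 0;
     0, 0, 0, 0, 0, 1;
     0, 1, 0, 0, 0, 0;
     0, 0, 1, 0, 0, 1;
     0, 0, 0, 1, 0, 0;
     0, 0, 0, 0, 1, 0]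

lemma orderOf_transvectionMatrix : orderOf transvectionMatrix = 2 :=
  have : Fact (Nat.Prime 2) := ⟨by norm_num⟩
  orderOf_eq_prime (by decide +kernel) (by decide +kernel)

lemma orderOf_orderThreeMatrix : orderOf orderThreeMatrix = 3 :=
  have : Fact (Nat.Prime 3) := ⟨by norm_num⟩
  orderOf_eq_prime (by decide +kernel) (by decide +kernel)

lemma orderOf_cubeRootMatrix : orderOf cubeRootMatrix = 3 :=
  have : Fact (Nat.Prime 3) := ⟨by norm_num⟩
  orderOf_eq_prime (by decide +kernel) (by decide +kernel)

lemma orderOf_orderFiveMatrix : orderOf orderFiveMatrix = 5 :=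
  have : Fact (Nat.Prime 5) := ⟨by norm_num⟩
  orderOf_eq_prime (by decide +kernel) (by decide +kernel)

lemma orderOf_orderSevenMatrix : orderOf orderSevenMatrix = 7 := by
  have : Fact (Nat.Prime 7) := ⟨by norm_num⟩
  have h4 : orderSevenMatrix ^ 4 =
      !![1, 0, 0, 0, 0, 0;
         0, 1, 0, 0, 0, 0;
         0, 0, 1, 0, 0, 0;
         0, 0, 0, 0, 1, 1;
         0, 0, 0, 1, 1, 0;
         0, 0, 0, 1, 1, 1] := by
    decide +kernel
  refine orderOf_eq_prime ?_ (by decide +kernel)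
  rw [show 7 = 4 + 3 from rfl, pow_add, h4]
  decide +kernel

lemma orderOf_orderThirtyoneMatrix : orderOf orderThirtyoneMatrix = 31 := by
  have : Fact (Nat.Prime 31) := ⟨by norm_num⟩
  have h5 : orderThirtyoneMatrix ^ 5 =
      !![1, 0, 0, 0, 0, 0;
         0, 1, 0, 0, 1, 0;
         0, 0, 1, 0, 0, 1;
         0, 1, 0, 1, 1, 0;
         0, 0, 1, 0, 1, 1;
         0, 0, 0, 1, 0, 1] := by
    decide +kernel
  have h15 : orderThirtyoneMatrix ^ 15 =
      !![1, 0, 0, 0, 0, 0;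
         0, 1, 1, 1, 1, 0;
         0, 1, 1, 1, 1, 1;
         0, 1, 0, 0, 0, 1;
         0, 1, 1, 0, 0, 0;
         0, 1, 1, 1, 0, 0] := by
    rw [show 15 = 5 * 3 from rfl, pow_mul, h5]
    decide +kernel
  refine orderOf_eq_prime ?_ (by decide +kernel)
  rw [show 31 = 15 * 2 + 1 from rfl, pow_succ, pow_mul, h15]
  decide +kernel

lemma prime_dvd_card_GL {t : ℕ} (ht : t.Prime) (h : t ∣ Nat.card (GL (Fin 6) (ZMod 2))) :
    t = 2 ∨ t = 3 ∨ t = 5 ∨ t = 7 ∨ t = 31 := by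
  have hcard : Nat.card (GL (Fin 6) (ZMod 2)) = 2 ^ 15 * 3 ^ 4 * 5 * 7 ^ 2 * 31 := by
    rw [Matrix.card_GL_field, ZMod.card]
    decide
  have of_dvd {q : ℕ} (hq : q.Prime) (hd : t ∣ q) : t = q :=
    (Nat.prime_dvd_prime_iff_eq ht hq).mp hd
  rw [hcard] at h
  simp only [ht.dvd_mul] at h
  rcases h with (((h | h) | h) | h) | h
  · exact .inl (of_dvd (by norm_num) (ht.dvd_of_dvd_pow h))
  · exact .inr (.inl (of_dvd (by norm_num) (ht.dvd_of_dvd_pow h)))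
  · exact .inr (.inr (.inl (of_dvd (by norm_num) h)))
  · exact .inr (.inr (.inr (.inl (of_dvd (by norm_num) (ht.dvd_of_dvd_pow h)))))
  · exact .inr (.inr (.inr (.inr (of_dvd (by norm_num) h))))

lemma not_orderOf_eq_thirtyone_mul {p : ℕ} (hp : p.Prime) (hp31 : p ≠ 31)
    (x : GL (Fin 6) (ZMod 2)) : orderOf x ≠ 31 * p := by
  intro hx
  obtain ⟨f, g, hfg, hf, hf1, hg, hg1⟩ :=
    exists_commute_end_of_orderOf_eq_mul (by norm_num) hp hx
  exact hp31 (eq_thirtyone_of_commute (by simp) hp hfg hf hf1 hg hg1)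

lemma not_orderOf_eq_thirtyfive (x : GL (Fin 6) (ZMod 2)) : orderOf x ≠ 5 * 7 := by
  intro hx
  obtain ⟨f, g, hfg, hf, hf1, hg, hg1⟩ :=
    exists_commute_end_of_orderOf_eq_mul (by norm_num) (by norm_num) hx
  exact not_commute_of_pow_five_of_pow_seven (by simp) hf hf1 hg hg1 hfg

lemma exists_stabilizer_orderOf_eq_six :
    ∃ y : MulAction.stabilizer (GL (Fin 6) (ZMod 2)) (Pi.single 0 1 : Fin 6 → ZMod 2),
      orderOf y = 2 * 3 :=
  exists_stabilizer_orderOf_eq_mul (by norm_num) (by norm_num) (by norm_num) (by decide +kernel)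
    orderOf_transvectionMatrix orderOf_cubeRootMatrix (by decide +kernel) (by decide +kernel)

lemma exists_stabilizer_orderOf_eq_ten :
    ∃ y : MulAction.stabilizer (GL (Fin 6) (ZMod 2)) (Pi.single 0 1 : Fin 6 → ZMod 2),
      orderOf y = 2 * 5 :=
  exists_stabilizer_orderOf_eq_mul (by norm_num) (by norm_num) (by norm_num) (by decide +kernel)
    orderOf_transvectionMatrix orderOf_orderFiveMatrix (by decide +kernel) (by decide +kernel)

lemma exists_stabilizer_orderOf_eq_fourteen :
    ∃ y : MulAction.stabilizer (GL (Fin 6) (ZMod 2)) (Pi.single 0 1 : Fin 6 → ZMod 2),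
      orderOf y = 2 * 7 :=
  exists_stabilizer_orderOf_eq_mul (by norm_num) (by norm_num) (by norm_num) (by decide +kernel)
    orderOf_transvectionMatrix orderOf_orderSevenMatrix (by decide +kernel) (by decide +kernel)

lemma exists_stabilizer_orderOf_eq_fifteen :
    ∃ y : MulAction.stabilizer (GL (Fin 6) (ZMod 2)) (Pi.single 0 1 : Fin 6 → ZMod 2),
      orderOf y = 3 * 5 :=
  exists_stabilizer_orderOf_eq_mul (by norm_num) (by norm_num) (by norm_num) (by decide +kernel)
    orderOf_cubeRootMatrix orderOf_orderFiveMatrix (by decide +kernel) (by decide +kernel)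

lemma exists_stabilizer_orderOf_eq_twentyone :
    ∃ y : MulAction.stabilizer (GL (Fin 6) (ZMod 2)) (Pi.single 0 1 : Fin 6 → ZMod 2),
      orderOf y = 3 * 7 :=
  exists_stabilizer_orderOf_eq_mul (by norm_num) (by norm_num) (by norm_num) (by decide +kernel)
    orderOf_orderThreeMatrix orderOf_orderSevenMatrix (by decide +kernel) (by decide +kernel)

lemma exists_stabilizer_orderOf_eq_thirtyone :
    ∃ y : MulAction.stabilizer (GL (Fin 6) (ZMod 2)) (Pi.single 0 1 : Fin 6 → ZMod 2),
      orderOf y = 31 :=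
  exists_stabilizer_orderOf_eq (by norm_num) orderOf_orderThirtyoneMatrix (by decide +kernel)

/-- For primes `r < s`, an element of order `r * s` in `GL₆(𝔽₂)` forces one in the stabilizer. -/
lemma exists_stabilizer_orderOf_eq_of_lt {r s : ℕ} (hr : r.Prime) (hs : s.Prime) (hrs : r < s)
    {x : GL (Fin 6) (ZMod 2)} (hx : orderOf x = r * s) :
    ∃ y : MulAction.stabilizer (GL (Fin 6) (ZMod 2)) (Pi.single 0 1 : Fin 6 → ZMod 2),
      orderOf y = r * s := by
  have hdvd : r * s ∣ Nat.card (GL (Fin 6) (ZMod 2)) := hx ▸ orderOf_dvd_natCard x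
  have hr' := prime_dvd_card_GL hr ((Dvd.intro _ rfl).trans hdvd)
  have hs' := prime_dvd_card_GL hs ((Dvd.intro_left _ rfl).trans hdvd)
  rcases hs' with rfl | rfl | rfl | rfl | rfl
  · exact absurd hr.two_le (by omega)
  · obtain rfl : r = 2 := by omega
    exact exists_stabilizer_orderOf_eq_six
  · obtain rfl | rfl : r = 2 ∨ r = 3 := by omega
    · exact exists_stabilizer_orderOf_eq_ten
    · exact exists_stabilizer_orderOf_eq_fifteen
  · obtain rfl | rfl | rfl : r = 2 ∨ r = 3 ∨ r = 5 := by omega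
    · exact exists_stabilizer_orderOf_eq_fourteen
    · exact exists_stabilizer_orderOf_eq_twentyone
    · exact absurd hx (not_orderOf_eq_thirtyfive x)
  · exact absurd (hx.trans (mul_comm r 31)) (not_orderOf_eq_thirtyone_mul hr hrs.ne x)

/-- `Γ(L₆(2)) = Γ(P₁)`, where `L₆(2) = GL₆(𝔽₂)` and `P₁` is the stabilizer of the
standard basis vector `e₀` (equivalently of the line it spans), a maximal parabolic
subgroup `2⁵.L₅(2)`. -/
theorem prime_graph_L6_2_eq_P1 :
    (∀ t : ℕ, t.Prime →
      (t ∣ Nat.card (Matrix.GeneralLinearGroup (Fin 6) (ZMod 2)) ↔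
        t ∣ Nat.card (MulAction.stabilizer (Matrix.GeneralLinearGroup (Fin 6) (ZMod 2))
          ((Pi.single 0 1 : Fin 6 → ZMod 2))))) ∧
    (∀ r s : ℕ, r.Prime → s.Prime → r ≠ s →
      ((∃ x : Matrix.GeneralLinearGroup (Fin 6) (ZMod 2), orderOf x = r * s) ↔
        (∃ y : MulAction.stabilizer (Matrix.GeneralLinearGroup (Fin 6) (ZMod 2))
          ((Pi.single 0 1 : Fin 6 → ZMod 2)), orderOf y = r * s))) := by
  constructor
  · intro t ht
    refine ⟨fun h => ?_, fun h => h.trans (Subgroup.card_subgroup_dvd_card _)⟩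
    rcases prime_dvd_card_GL ht h with rfl | rfl | rfl | rfl | rfl
    · obtain ⟨y, hy⟩ := exists_stabilizer_orderOf_eq_six
      exact (hy ▸ Dvd.intro _ rfl).trans (orderOf_dvd_natCard y)
    · obtain ⟨y, hy⟩ := exists_stabilizer_orderOf_eq_fifteen
      exact (hy ▸ Dvd.intro _ rfl).trans (orderOf_dvd_natCard y)
    · obtain ⟨y, hy⟩ := exists_stabilizer_orderOf_eq_ten
      exact (hy ▸ Dvd.intro_left _ rfl).trans (orderOf_dvd_natCard y)
    · obtain ⟨y, hy⟩ := exists_stabilizer_orderOf_eq_fourteen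
      exact (hy ▸ Dvd.intro_left _ rfl).trans (orderOf_dvd_natCard y)
    · obtain ⟨y, hy⟩ := exists_stabilizer_orderOf_eq_thirtyone
      exact hy ▸ orderOf_dvd_natCard y
  · intro r s hr hs hrs
    refine ⟨fun ⟨x, hx⟩ => ?_, fun ⟨y, hy⟩ => ⟨y, (Subgroup.orderOf_coe y).trans hy⟩⟩
    rcases hrs.lt_or_gt with h | h
    · exact exists_stabilizer_orderOf_eq_of_lt hr hs h hx
    · rw [mul_comm] at hx ⊢
      exact exists_stabilizer_orderOf_eq_of_lt hs hr h hx
end
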